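/- arXiv:2308.08988 — 6 statements merged into one kernel-verified Lean document; each statement's English description precedes it below -/
import Mathlib

section
/- Let q > 1 and let χ be a primitive even Dirichlet character modulo q. Let α, β > 0 satisfy α·β = π². Then for every nonzero integer m, α^{−m}·Σ_{r=1}^{q} Σ_{n=1}^{∞} χ(r)·e^{−(r/q)·2nα} / ( n^{2m+1}·(1 − e^{−2nα}) ) = (−β)^{−m}·( (q/(2 G(conj(χ)))) · L(2m+1, conj(χ)) + G(χ)·Σ_{n=1}^{∞} conj(χ)(n) / ( n^{2m+1}·(e^{2nβ} − 1) ) ) + (−1)^m · 2^{2m} · Σ_{j=1}^{m+1} ((−1)^{j+1}/q^{2j−1}) · (L(1−2j, χ)/(2j−1)!) · (B_{2m−2j+2}/(2m−2j+2)!) · α^{j} · β^{m−j+1}. -/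
/-- The Gauss sum `G(χ) = ∑_{r=1}^{q} χ(r) e^{2πi r/q}`. -/
noncomputable def gaussSum' {q : ℕ} (χ : DirichletCharacter ℂ q) : ℂ :=
  ∑ r ∈ Finset.Icc 1 q, χ (r : ZMod q) * Complex.exp (2 * Real.pi * Complex.I * r / q)

/-- The complex conjugate of a Dirichlet character. -/
noncomputable def conjChar {q : ℕ} (χ : DirichletCharacter ℂ q) : DirichletCharacter ℂ q :=
  χ.ringHomComp (starRingEnd ℂ)

/-- `B_k / k!` where `B_k` is the `k`-th Bernoulli number, interpreted as `0` for `k < 0`. -/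
noncomputable def bernOverFact (k : ℤ) : ℚ :=
  if 0 ≤ k then bernoulli k.toNat / (Nat.factorial k.toNat) else 0

/-!
For `m > 0`, the Fourier series of `cosh (x (1 - 2t)) / sinh x`, twisted by `χ`, expands
`∑ₐ χ(a) e^{-2xa/q} / (1 - e^{-2x})` as `G(χ) ∑ₗ χ̄(l) x / (x² + π²l²)`, while the untwisted one
expands `1 / (e^{2x} - 1)`. Both Lambert series thereby become values of one double series in
`1 / (n²α² + l²π²)`, summed in the two orders; iterating
`1 / (X (X + Y)) = (1 / X - 1 / (X + Y)) / Y` to match the powers of `n` and `l` leaves a finite sum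
of products `ζ(2a) L(2j, χ̄)`, which the functional equation turns into the Bernoulli sum.

For `m = -M < 0`, the identity is the transformation under `z ↦ -1 / (qz)`, at `z = iβ / π`, of a
weight `2M` Eisenstein series. Summing `χ(l) (kz + l/q)^{-2M}` first over `l`, respectively first
over `k`, and applying the Lipschitz formula to the inner sum gives the two sides. In weight `2` the
order of summation may be exchanged because, after grouping `l` by blocks of residues modulo `q`,
`∑ₐ χ(a) = 0` makes the double series absolutely convergent.
-/

namespace Katayama

open Complex DirichletCharacter
open ZMod (stdAddChar dft)
open scoped Real

section Characters

variable {q : ℕ} {χ : DirichletCharacter ℂ q}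

lemma conjChar_eq_inv (χ : DirichletCharacter ℂ q) : conjChar χ = χ⁻¹ := by
  ext a
  simp [conjChar, ← MulChar.star_apply', MulChar.ringHomComp_apply]

lemma isPrimitive_inv (h : χ.IsPrimitive) : χ⁻¹.IsPrimitive := by
  rw [isPrimitive_def] at h ⊢
  rw [conductor_inv, h]

lemma even_inv (h : χ.Even) : χ⁻¹.Even := by
  rw [DirichletCharacter.Even, ← MulChar.star_apply', h, star_one]

lemma apply_zero (χ : DirichletCharacter ℂ q) (hq : 1 < q) : χ 0 = 0 := by
  have : Fact (1 < q) := ⟨hq⟩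
  exact MulChar.map_zero χ

lemma norm_char_mul_le (χ : DirichletCharacter ℂ q) (a : ZMod q) (z : ℂ) : ‖χ a * z‖ ≤ ‖z‖ := by
  rw [norm_mul]
  exact mul_le_of_le_one_left (norm_nonneg _) (χ.norm_le_one a)

lemma summable_char_mul {ι : Type*} (χ : DirichletCharacter ℂ q) (c : ι → ZMod q) {g : ι → ℂ}
    (hg : Summable g) : Summable fun i ↦ χ (c i) * g i :=
  hg.norm.of_norm_bounded fun i ↦ norm_char_mul_le χ (c i) (g i)

lemma hasSum_LFunction (χ : DirichletCharacter ℂ q) [NeZero q] {k : ℕ} (hk : 2 ≤ k) :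
    HasSum (fun n : ℕ ↦ χ ((n + 1 : ℕ) : ZMod q) / ((n : ℂ) + 1) ^ k) (LFunction χ k) := by
  have hre : 1 < (k : ℂ).re := by
    rw [natCast_re]
    exact_mod_cast hk
  rw [LFunction_eq_LSeries χ hre]
  have h := (LSeriesSummable_of_one_lt_re χ hre).LSeriesHasSum
  rw [LSeriesHasSum, ← hasSum_nat_add_iff' 1] at h
  simpa [LSeries.term_def] using h

end Characters

section GaussSums

variable {q : ℕ} [NeZero q] {χ : DirichletCharacter ℂ q}

lemma sum_Icc_eq_sum_zmod {M : Type*} [AddCommMonoid M] {F : ℕ → M} (hF : F q = F 0) :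
    ∑ r ∈ Finset.Icc 1 q, F r = ∑ a : ZMod q, F a.val := by
  rw [← Finset.Ico_add_one_right_eq_Icc, Finset.sum_Ico_succ_top NeZero.one_le, hF, add_comm,
    ← Finset.sum_eq_sum_Ico_succ_bot (NeZero.pos q), ← Finset.range_eq_Ico]
  refine (Finset.sum_nbij' ZMod.val (fun n ↦ (n : ZMod q)) ?_ ?_ ?_ ?_ ?_).symm
  all_goals simp +contextual [ZMod.val_lt, Nat.mod_eq_of_lt]

lemma gaussSum'_eq (χ : DirichletCharacter ℂ q) : gaussSum' χ = gaussSum χ stdAddChar := by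
  rw [gaussSum', gaussSum, sum_Icc_eq_sum_zmod (by simp [NeZero.ne q])]
  refine Finset.sum_congr rfl fun a _ ↦ ?_
  rw [ZMod.natCast_zmod_val, ZMod.stdAddChar_apply, ZMod.toCircle_apply]

lemma gaussSum_mul_tsum_char_inv_mul (h : χ.IsPrimitive) {ι : Type*} (c : ι → ZMod q) {f : ι → ℂ}
    (hf : Summable f) : gaussSum χ stdAddChar * ∑' i, χ⁻¹ (c i) * f i =
      ∑ a, χ a * ∑' i, stdAddChar (a * c i) * f i := by
  have hsum (a : ZMod q) : Summable fun i ↦ χ a * (stdAddChar (a * c i) * f i) :=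
    .mul_left _ <| hf.norm.of_norm_bounded fun i ↦ by rw [norm_mul, AddChar.norm_apply, one_mul]
  simp_rw [← tsum_mul_left]
  rw [← Summable.tsum_finsetSum fun a _ ↦ hsum a]
  refine tsum_congr fun i ↦ ?_
  rw [← mul_assoc, mul_comm (gaussSum _ _), ← gaussSum_mulShift_of_isPrimitive _ h, gaussSum,
    Finset.sum_mul]
  simp only [AddChar.mulShift_apply, mul_comm (c i), mul_assoc]

lemma dft_eq_gaussSum_mul (h : χ.IsPrimitive) (hev : χ.Even) (a : ZMod q) :
    dft χ a = gaussSum χ stdAddChar * χ⁻¹ a := by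
  rw [h.fourierTransform_eq_inv_mul_gaussSum, (even_inv hev).eval_neg, mul_comm]

lemma gaussSum_mul_gaussSum_inv (h : χ.IsPrimitive) (hev : χ.Even) :
    gaussSum χ stdAddChar * gaussSum χ⁻¹ stdAddChar = q := by
  have hdft := congr_fun (ZMod.dft_dft (χ : ZMod q → ℂ)) 1
  rw [funext (dft_eq_gaussSum_mul h hev), ZMod.dft_const_mul,
    funext (dft_eq_gaussSum_mul (isPrimitive_inv h) (even_inv hev)), hev.eval_neg] at hdft
  simpa using hdft

lemma LFunction_dft (h : χ.IsPrimitive) (hev : χ.Even) (s : ℂ) :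
    ZMod.LFunction (dft χ) s = gaussSum χ stdAddChar * LFunction χ⁻¹ s := by
  simp only [DirichletCharacter.LFunction, ZMod.LFunction, dft_eq_gaussSum_mul h hev,
    Finset.mul_sum]
  exact Finset.sum_congr rfl fun _ _ ↦ by ring

lemma LFunction_one_sub_of_even (hq : 1 < q) (h : χ.IsPrimitive) (hev : χ.Even) {s : ℂ}
    (hs : ∀ n : ℕ, s ≠ -n) :
    LFunction χ (1 - s) = q ^ (s - 1) * (2 * π) ^ (-s) * Gamma s * (2 * cos (π * s / 2)) *
      (gaussSum χ stdAddChar * LFunction χ⁻¹ s) := by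
  have hneg : (fun a ↦ χ (-a)) = (χ : ZMod q → ℂ) := funext hev.eval_neg
  rw [DirichletCharacter.LFunction, ZMod.LFunction_one_sub χ hs (.inl (apply_zero χ hq)), hneg,
    LFunction_dft h hev, two_cos]
  ring_nf

lemma LFunction_one_sub_two_mul (hq : 1 < q) (h : χ.IsPrimitive) (hev : χ.Even) {j : ℕ}
    (hj : 1 ≤ j) :
    LFunction χ (1 - 2 * (j : ℂ)) = 2 * (-1) ^ j * (2 * j - 1).factorial * q ^ (2 * j - 1) /
      (2 * π) ^ (2 * j) * gaussSum χ stdAddChar * LFunction χ⁻¹ (2 * (j : ℂ)) := by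
  have hs (n : ℕ) : 2 * (j : ℂ) ≠ -n := fun hn ↦ by
    have : ((2 * j + n : ℕ) : ℂ) = 0 := by push_cast; rw [hn]; ring
    rw [Nat.cast_eq_zero] at this
    lia
  have hpred : 2 * (j : ℂ) - 1 = (2 * j - 1 : ℕ) := by
    push_cast [Nat.cast_sub (show 1 ≤ 2 * j by lia)]
    ring
  have hGamma : Gamma (2 * (j : ℂ)) = (2 * j - 1).factorial := by
    rw [← Gamma_nat_eq_factorial, ← hpred, sub_add_cancel]
  have hcos : cos (π * (2 * (j : ℂ)) / 2) = (-1) ^ j := by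
    rw [mul_div_assoc, mul_div_cancel_left₀ _ two_ne_zero, mul_comm]
    exact_mod_cast Real.cos_nat_mul_pi j
  have hpi : (2 * π : ℂ) ^ (-(2 * (j : ℂ))) = ((2 * π : ℂ) ^ (2 * j))⁻¹ := by
    rw [cpow_neg, ← cpow_natCast]
    push_cast
    rfl
  rw [LFunction_one_sub_of_even hq h hev hs, hGamma, hcos, hpi, hpred, cpow_natCast]
  ring

end GaussSums

section PartialFractions

lemma integral_exp_mul_cosh {x : ℝ} (hx : x ≠ 0) (l : ℤ) :
    ∫ t in (0 : ℝ)..1, exp (-(2 * π * I * l * t)) * cosh (x * (1 - 2 * t)) =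
      sinh x * (x / (x ^ 2 + (π * l) ^ 2)) := by
  have hre {s : ℂ} (hs : s.re = x ∨ s.re = -x) : s ≠ 0 := by
    rintro rfl
    simp_all [eq_comm]
  have hadd : x + π * I * l ≠ 0 := hre (by simp)
  have hsub : -x + π * I * l ≠ 0 := hre (by simp)
  have hprod : (x : ℂ) ^ 2 + (π * l) ^ 2 = -((x + π * I * l) * (-x + π * I * l)) := by
    linear_combination (π * l : ℂ) ^ 2 * I_sq
  have hsplit (t : ℝ) : exp (-(2 * π * I * l * t)) * cosh (x * (1 - 2 * t)) =
      exp x / 2 * exp (-2 * (x + π * I * l) * t) +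
        exp (-x) / 2 * exp (-2 * (-x + π * I * l) * t) := by
    rw [cosh, mul_div_assoc', mul_add, div_mul_eq_mul_div, div_mul_eq_mul_div, ← add_div]
    simp only [← exp_add]
    ring_nf
  have hexp (y : ℂ) : exp (-2 * (y + π * I * l)) = exp (-y) ^ 2 := by
    have h := exp_int_mul_two_pi_mul_I (-l)
    rw [← exp_nat_mul, ← mul_one (exp (_ * -y)), ← h, ← exp_add]
    push_cast
    ring_nf
  simp_rw [hsplit]
  rw [intervalIntegral.integral_add, intervalIntegral.integral_const_mul,
    intervalIntegral.integral_const_mul, integral_exp_mul_complex (by simpa using hadd),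
    integral_exp_mul_complex (by simpa using hsub)]
  · simp only [ofReal_one, mul_one, ofReal_zero, mul_zero, exp_zero, hexp, neg_neg]
    rw [hprod, sinh, exp_neg]
    field_simp
    ring
  all_goals exact Continuous.intervalIntegrable (by fun_prop) _ _

lemma summable_div_sq_add_sq (x : ℝ) :
    Summable fun l : ℤ ↦ (x : ℂ) / (x ^ 2 + (π * l) ^ 2) := by
  refine ((EisensteinSeries.summable_linear_sub_mul_linear_add (I * x / π) 1 1).mul_left
    (-x / π ^ 2 : ℂ)).congr fun l ↦ ?_
  have hfactor : (((1 : ℤ) : ℂ) * (I * x / π) - l) * (((1 : ℤ) : ℂ) * (I * x / π) + l) =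
      -(x ^ 2 + (π * l) ^ 2) / π ^ 2 := by
    push_cast
    field_simp
    linear_combination (x : ℂ) ^ 2 * I_sq
  rw [hfactor, inv_div, div_neg]
  field_simp

lemma hasSum_fourier_cosh {x : ℝ} (hx : x ≠ 0) {t : ℝ} (ht : t ∈ Set.Ico 0 1) :
    HasSum (fun l : ℤ ↦ (x : ℂ) / (x ^ 2 + (π * l) ^ 2) * exp (2 * π * I * l * t))
      (cosh (x * (1 - 2 * t)) / sinh x) := by
  have hsinh : sinh (x : ℂ) ≠ 0 := by exact_mod_cast Real.sinh_ne_zero.mpr hx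
  let f : ℝ → ℂ := fun t ↦ cosh (x * (1 - 2 * t))
  let F : C(AddCircle (1 : ℝ), ℂ) := ⟨AddCircle.liftIco 1 0 f,
    AddCircle.liftIco_zero_continuous (by simp [f]; norm_num)
      (by fun_prop : Continuous f).continuousOn⟩
  have hcoeff (l : ℤ) : fourierCoeff F l = sinh x * (x / (x ^ 2 + (π * l) ^ 2)) := by
    rw [← integral_exp_mul_cosh hx, ContinuousMap.coe_mk, fourierCoeff_liftIco_eq,
      fourierCoeffOn_eq_integral]
    simp only [fourier_coe_apply, f]
    simp
  have hsum : Summable (fourierCoeff F) :=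
    ((summable_div_sq_add_sq x).mul_left (sinh x : ℂ)).congr fun l ↦ (hcoeff l).symm
  have h := has_pointwise_sum_fourier_series_of_summable hsum t
  rw [show F (t : AddCircle (1 : ℝ)) = f t from AddCircle.liftIco_zero_coe_apply (f := f) ht] at h
  refine (h.div_const (sinh x : ℂ)).congr_fun fun l ↦ ?_
  rw [hcoeff, fourier_coe_apply, smul_eq_mul, ofReal_one, div_one]
  field_simp

lemma tsum_int_of_even {f : ℤ → ℂ} (hf : Function.Even f) (hs : Summable f) :
    ∑' l : ℤ, f l = f 0 + 2 * ∑' n : ℕ, f (n + 1) := by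
  rw [tsum_int_eq_zero_add_two_mul_tsum_pnat hf hs, nsmul_eq_mul]
  exact_mod_cast congrArg (f 0 + 2 * ·) (tsum_pnat_eq_tsum_succ (f := fun n ↦ f n))

lemma one_div_exp_sub_one {x : ℝ} (hx : x ≠ 0) :
    1 / (exp (2 * x) - 1) =
      -1 / 2 + 1 / (2 * x) + ∑' n : ℕ, (x : ℂ) / (x ^ 2 + (π * (n + 1)) ^ 2) := by
  have hx' : (x : ℂ) ≠ 0 := by exact_mod_cast hx
  have hsinh : sinh (x : ℂ) ≠ 0 := by exact_mod_cast Real.sinh_ne_zero.mpr hx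
  have hcoth := (hasSum_fourier_cosh hx (Set.left_mem_Ico.mpr one_pos)).tsum_eq
  simp only [ofReal_zero, mul_zero, exp_zero, mul_one, sub_zero] at hcoth
  rw [tsum_int_of_even (fun l ↦ by simp) (summable_div_sq_add_sq x)] at hcoth
  push_cast at hcoth
  have hexp : exp (2 * (x : ℂ)) - 1 = 2 * exp x * sinh x := by
    rw [sinh, exp_neg, two_mul, exp_add]
    field_simp [exp_ne_zero]
  have hcosh : 1 / (exp (2 * (x : ℂ)) - 1) = -1 / 2 + cosh x / sinh x / 2 := by
    rw [hexp, ← cosh_add_sinh]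
    field_simp
    linear_combination -cosh_sq_sub_sinh_sq (x : ℂ)
  rw [hcosh, ← hcoth]
  field_simp
  ring

variable {q : ℕ} [NeZero q] {χ : DirichletCharacter ℂ q}

/-- The generating function `∑ₖ χ(k) yᵏ`, as the rational function of `y` given by the
periodicity of `χ`. At `y = e^{-t}` it generates the generalized Bernoulli numbers of `χ`. -/
noncomputable def charGeom (χ : DirichletCharacter ℂ q) (y : ℂ) : ℂ :=
  (∑ a : ZMod q, χ a * y ^ a.val) / (1 - y ^ q)

lemma norm_pow_lt_one {y : ℂ} (hy : ‖y‖ < 1) {n : ℕ} (hn : n ≠ 0) : ‖y ^ n‖ < 1 := by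
  rw [norm_pow]
  exact pow_lt_one₀ (norm_nonneg _) hy hn

lemma tsum_char_mul_pow (χ : DirichletCharacter ℂ q) {y : ℂ} (hy : ‖y‖ < 1) :
    ∑' k : ℕ, χ (k : ZMod q) * y ^ k = charGeom χ y := by
  have hyq : ‖y ^ q‖ < 1 := norm_pow_lt_one hy (NeZero.ne q)
  rw [Nat.sumByResidueClasses (summable_char_mul χ _ (summable_geometric_of_norm_lt_one hy)) q,
    charGeom, Finset.sum_div]
  refine Finset.sum_congr rfl fun a _ ↦ ?_
  have hterm (m : ℕ) : χ ((a.val + q * m : ℕ) : ZMod q) * y ^ (a.val + q * m) =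
      χ a * y ^ a.val * (y ^ q) ^ m := by
    push_cast [ZMod.natCast_zmod_val, ZMod.natCast_self]
    ring_nf
  rw [tsum_congr hterm, tsum_mul_left, tsum_geometric_of_norm_lt_one hyq, div_eq_mul_inv]

lemma charGeom_exp (χ : DirichletCharacter ℂ q) (x : ℂ) :
    charGeom χ (exp (-(2 * x / q))) =
      ∑ a : ZMod q, χ a * exp (-(2 * x * (a.val / q))) / (1 - exp (-(2 * x))) := by
  have hq : (q : ℂ) ≠ 0 := NeZero.ne _
  have hpow (a : ZMod q) : exp (-(2 * x / q)) ^ a.val = exp (-(2 * x * (a.val / q))) := by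
    rw [← exp_nat_mul]
    ring_nf
  have hpow_q : exp (-(2 * x / q)) ^ q = exp (-(2 * x)) := by
    rw [← exp_nat_mul]
    field_simp
  simp_rw [charGeom, Finset.sum_div, hpow, hpow_q]

lemma sum_char_mul_exp_neg (hev : χ.Even) (h0 : χ 0 = 0) (z : ℂ) :
    ∑ a : ZMod q, χ a * exp (-(z * (1 - 2 * (a.val / q)))) =
      ∑ a : ZMod q, χ a * exp (z * (1 - 2 * (a.val / q))) := by
  have hq : (q : ℂ) ≠ 0 := NeZero.ne _
  rw [← Equiv.sum_comp (Equiv.neg (ZMod q))]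
  refine Finset.sum_congr rfl fun a _ ↦ ?_
  rcases eq_or_ne a 0 with rfl | ha
  · simp [h0]
  · rw [Equiv.neg_apply, hev.eval_neg, ZMod.neg_val, if_neg ha, Nat.cast_sub a.val_lt.le]
    congr 2
    field_simp
    ring

lemma sum_char_mul_cosh (hev : χ.Even) (h0 : χ 0 = 0) (x : ℂ) :
    ∑ a : ZMod q, χ a * (cosh (x * (1 - 2 * (a.val / q))) / sinh x) =
      2 * charGeom χ (exp (-(2 * x / q))) := by
  have hden : 1 - exp (-(2 * x)) = 2 * exp (-x) * sinh x := by
    rw [sinh, two_mul x, neg_add, exp_add, exp_neg]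
    field_simp [exp_ne_zero]
  have hgeom (a : ZMod q) : exp (-(2 * x * (a.val / q))) / (1 - exp (-(2 * x))) =
      exp (x * (1 - 2 * (a.val / q))) / (2 * sinh x) := by
    have hsplit : exp (-(2 * x * (a.val / q))) = exp (-x) * exp (x * (1 - 2 * (a.val / q))) := by
      rw [← exp_add]
      ring_nf
    rw [hden, hsplit]
    field_simp
  have hcosh (a : ZMod q) : χ a * (cosh (x * (1 - 2 * (a.val / q))) / sinh x) =
      χ a * exp (x * (1 - 2 * (a.val / q))) / (2 * sinh x) +
        χ a * exp (-(x * (1 - 2 * (a.val / q)))) / (2 * sinh x) := by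
    rw [cosh]
    field_simp
  simp_rw [hcosh]
  rw [Finset.sum_add_distrib, ← Finset.sum_div, ← Finset.sum_div, sum_char_mul_exp_neg hev h0,
    ← two_mul, charGeom_exp, Finset.sum_div]
  simp_rw [mul_div_assoc, hgeom]

theorem charGeom_eq_tsum (hq : 1 < q) (h : χ.IsPrimitive) (hev : χ.Even) {x : ℝ} (hx : x ≠ 0) :
    charGeom χ (exp (-(2 * x / q))) = gaussSum χ stdAddChar *
      ∑' l : ℕ, χ⁻¹ ((l + 1 : ℕ) : ZMod q) * (x / (x ^ 2 + (π * (l + 1)) ^ 2)) := by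
  have hfourier (a : ZMod q) :
      ∑' l : ℤ, stdAddChar (a * (l : ZMod q)) * ((x : ℂ) / (x ^ 2 + (π * l) ^ 2)) =
        cosh (x * (1 - 2 * (a.val / q))) / sinh x := by
    have ht : (a.val / q : ℝ) ∈ Set.Ico 0 1 := by
      refine ⟨by positivity, (div_lt_one (by positivity)).mpr (by exact_mod_cast a.val_lt)⟩
    have := (hasSum_fourier_cosh hx ht).tsum_eq
    push_cast at this
    rw [← this]
    refine tsum_congr fun l ↦ ?_
    have hchar := ZMod.stdAddChar_coe (N := q) (a.val * l)
    push_cast [ZMod.natCast_zmod_val] at hchar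
    rw [hchar, mul_comm]
    ring_nf
  have htwist := gaussSum_mul_tsum_char_inv_mul h (fun l : ℤ ↦ (l : ZMod q))
    (summable_div_sq_add_sq x)
  simp_rw [hfourier] at htwist
  rw [sum_char_mul_cosh hev (apply_zero χ hq) x, tsum_int_of_even
    (fun l ↦ by simp [(even_inv hev).eval_neg])
    (summable_char_mul χ⁻¹ _ (summable_div_sq_add_sq x))] at htwist
  push_cast [apply_zero χ⁻¹ hq] at htwist
  push_cast
  linear_combination -htwist / 2

end PartialFractions

section LambertSeries

lemma norm_exp_neg_lt_one {x : ℝ} (hx : 0 < x) : ‖exp (-(x : ℂ))‖ < 1 := by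
  rw [norm_exp, neg_re, ofReal_re]
  exact Real.exp_lt_one_iff.mpr (neg_lt_zero.mpr hx)

lemma summable_zpow_mul_pow_succ (s : ℤ) {y : ℂ} (hy : ‖y‖ < 1) :
    Summable fun n : ℕ ↦ ((n : ℂ) + 1) ^ s * y ^ (n + 1) := by
  have hgeom := (summable_nat_add_iff 1).mpr
    (summable_norm_pow_mul_geometric_of_norm_lt_one s.natAbs hy)
  refine hgeom.of_norm_bounded fun n ↦ ?_
  have hone : (1 : ℝ) ≤ ‖(n : ℂ) + 1‖ := by
    rw [← Nat.cast_add_one, norm_natCast]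
    exact_mod_cast n.succ_pos
  push_cast
  rw [norm_mul, norm_mul, norm_zpow, norm_pow (_ + 1 : ℂ), ← zpow_natCast]
  gcongr
  exact zpow_le_zpow_right₀ hone Int.le_natAbs

lemma summable_lambert (s : ℤ) {y w : ℂ} (hy : ‖y‖ < 1) (hw : ‖w‖ < 1) :
    Summable fun n : ℕ ↦ y ^ (n + 1) / (((n : ℂ) + 1) ^ s * (1 - w ^ (n + 1))) := by
  have hlim : Filter.Tendsto (fun n : ℕ ↦ (1 - w ^ (n + 1))⁻¹) .atTop (nhds (1 - 0)⁻¹) :=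
    (((tendsto_pow_atTop_nhds_zero_of_norm_lt_one hw).comp (Filter.tendsto_add_atTop_nat 1)
      ).const_sub 1).inv₀ (by simp)
  rw [← Nat.cofinite_eq_atTop] at hlim
  refine ((summable_zpow_mul_pow_succ (-s) hy).norm.mul_tendsto_const hlim).congr fun n ↦ ?_
  rw [zpow_neg, div_eq_mul_inv, mul_inv]
  ring

lemma summable_pow_mul_pow_mul (K : ℕ) {y : ℂ} (hy : ‖y‖ < 1) :
    Summable fun p : ℕ × ℕ ↦ ((p.2 : ℂ) + 1) ^ K * y ^ ((p.1 + 1) * (p.2 + 1)) := by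
  have hs := summable_prod_mul_pow K hy
  rw [← (Equiv.prodCongr Equiv.pnatEquivNat Equiv.pnatEquivNat).symm.summable_iff] at hs
  refine hs.congr fun p ↦ ?_
  simp [Equiv.pnatEquivNat]

variable {q : ℕ}

/-- The Lambert series `∑ₙ ψ(n) n⁻ˢ yⁿ / (1 - yⁿ) = ∑ₙₖ ψ(n) n⁻ˢ yⁿᵏ`, over `n, k ≥ 1`. -/
noncomputable def lambertSeries (ψ : DirichletCharacter ℂ q) (s : ℤ) (y : ℂ) : ℂ :=
  ∑' n : ℕ, ψ ((n + 1 : ℕ) : ZMod q) * (y ^ (n + 1) / (((n : ℂ) + 1) ^ s * (1 - y ^ (n + 1))))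

lemma lambertSeries_exp (ψ : DirichletCharacter ℂ q) (s : ℤ) (β : ℂ) :
    lambertSeries ψ s (exp (-(2 * β))) = ∑' n : ℕ, ψ ((n + 1 : ℕ) : ZMod q) /
      (((n : ℂ) + 1) ^ s * (exp (2 * ((n : ℂ) + 1) * β) - 1)) := by
  refine tsum_congr fun n ↦ ?_
  have hpow : exp (-(2 * β)) ^ (n + 1) = (exp (2 * ((n : ℂ) + 1) * β))⁻¹ := by
    rw [← exp_nat_mul, ← exp_neg]
    push_cast
    ring_nf
  have hE := exp_ne_zero (2 * ((n : ℂ) + 1) * β)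
  rw [hpow]
  generalize exp (2 * ((n : ℂ) + 1) * β) = E at hE
  have hden : ((n : ℂ) + 1) ^ s * (1 - E⁻¹) = E⁻¹ * (((n : ℂ) + 1) ^ s * (E - 1)) := by
    field_simp
  rw [hden, div_mul_cancel_left₀ (inv_ne_zero hE), div_eq_mul_inv]

lemma tsum_tsum_eq_lambertSeries (χ : DirichletCharacter ℂ q) (K : ℕ) {y : ℂ} (hy : ‖y‖ < 1) :
    ∑' k : ℕ, ∑' n : ℕ, χ ((n + 1 : ℕ) : ZMod q) * ((n + 1) ^ K * y ^ ((k + 1) * (n + 1))) =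
      lambertSeries χ (-K) y := by
  have hs : Summable (Function.uncurry fun k n : ℕ ↦
      χ ((n + 1 : ℕ) : ZMod q) * (((n : ℂ) + 1) ^ K * y ^ ((k + 1) * (n + 1)))) :=
    summable_char_mul χ (fun p : ℕ × ℕ ↦ ((p.2 + 1 : ℕ) : ZMod q)) (summable_pow_mul_pow_mul K hy)
  rw [← hs.tsum_comm]
  refine tsum_congr fun n ↦ ?_
  have hgeom := tsum_geometric_of_norm_lt_one (norm_pow_lt_one hy n.succ_ne_zero)
  simp_rw [mul_comm _ (n + 1), pow_mul, pow_succ' (y ^ (n + 1))]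
  rw [tsum_mul_left, tsum_mul_left, tsum_mul_left, hgeom, zpow_neg, zpow_natCast]
  field_simp

variable [NeZero q]

/-- The Lambert series `∑ₙₖ χ(k) n⁻ˢ yⁿᵏ`, over `n, k ≥ 1`, in which the character is carried by
the codivisor; the inner sum over `k` is summed in closed form. -/
noncomputable def dualLambertSeries (χ : DirichletCharacter ℂ q) (s : ℤ) (y : ℂ) : ℂ :=
  ∑' n : ℕ, charGeom χ (y ^ (n + 1)) / ((n : ℂ) + 1) ^ s

lemma dualLambertSeries_exp (χ : DirichletCharacter ℂ q) (hq : 1 < q) (s : ℤ) {α : ℝ}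
    (hα : 0 < α) : dualLambertSeries χ s (exp (-(2 * α / q))) =
      ∑ r ∈ Finset.Icc 1 q, ∑' n : ℕ,
        χ (r : ZMod q) * exp (-((r : ℂ) / q) * (2 * ((n : ℂ) + 1)) * α) /
          (((n : ℂ) + 1) ^ s * (1 - exp (-(2 * ((n : ℂ) + 1)) * α))) := by
  rw [sum_Icc_eq_sum_zmod (by simp [apply_zero χ hq]), ← Summable.tsum_finsetSum]
  · refine tsum_congr fun n ↦ ?_
    have hpow : exp (-(2 * α / q : ℂ)) ^ (n + 1) = exp (-(2 * ((n + 1) * α) / q)) := by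
      rw [← exp_nat_mul]
      push_cast
      ring_nf
    rw [hpow, charGeom_exp, Finset.sum_div]
    refine Finset.sum_congr rfl fun a _ ↦ ?_
    rw [ZMod.natCast_zmod_val, div_div, mul_comm (1 - _)]
    ring_nf
  · intro a _
    rcases eq_or_ne a 0 with rfl | ha
    · simp [apply_zero χ hq]
    have hy : ‖exp (-((a.val / q * (2 * α) : ℝ) : ℂ))‖ < 1 := norm_exp_neg_lt_one (by
      have := ZMod.val_pos.mpr ha
      positivity)
    have hw : ‖exp (-((2 * α : ℝ) : ℂ))‖ < 1 := norm_exp_neg_lt_one (by positivity)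
    refine ((summable_lambert s hy hw).mul_left (χ a)).congr fun n ↦ ?_
    rw [← exp_nat_mul, ← exp_nat_mul, ZMod.natCast_zmod_val]
    push_cast
    ring_nf

lemma tsum_char_mul_tsum_eq_dualLambertSeries (χ : DirichletCharacter ℂ q) (hq : 1 < q) (K : ℕ)
    {y : ℂ} (hy : ‖y‖ < 1) :
    ∑' l : ℕ, χ ((l + 1 : ℕ) : ZMod q) * ∑' n : ℕ, ((n : ℂ) + 1) ^ K * y ^ ((l + 1) * (n + 1)) =
      dualLambertSeries χ (-K) y := by
  have hs : Summable (Function.uncurry fun l n : ℕ ↦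
      χ ((l + 1 : ℕ) : ZMod q) * (((n : ℂ) + 1) ^ K * y ^ ((l + 1) * (n + 1)))) :=
    summable_char_mul χ (fun p : ℕ × ℕ ↦ ((p.1 + 1 : ℕ) : ZMod q)) (summable_pow_mul_pow_mul K hy)
  simp_rw [← tsum_mul_left]
  rw [← hs.tsum_comm]
  refine tsum_congr fun n ↦ ?_
  have hyn : ‖y ^ (n + 1)‖ < 1 := norm_pow_lt_one hy n.succ_ne_zero
  rw [← tsum_char_mul_pow χ hyn, (summable_char_mul χ _
    (summable_geometric_of_norm_lt_one hyn)).tsum_eq_zero_add, Nat.cast_zero, apply_zero χ hq,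
    zero_mul, zero_add, zpow_neg, zpow_natCast, div_inv_eq_mul, ← tsum_mul_right]
  refine tsum_congr fun l ↦ ?_
  rw [← pow_mul]
  ring

end LambertSeries

section PositiveExponent

lemma summable_pow_succ {ι : Type*} {f : ι → ℂ} (hf : Summable f) (k : ℕ) :
    Summable fun i ↦ f i ^ (k + 1) :=
  (hf.norm.mul_tendsto_const (hf.tendsto_cofinite_zero.pow k)).congr fun i ↦
    (pow_succ' (f i) k).symm

lemma inv_pow_mul_inv_sub {x z : ℂ} (hx : x ≠ 0) (hz : z ≠ 0) (hxz : x - z ≠ 0) (M : ℕ) :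
    x⁻¹ ^ M * (x - z)⁻¹ = z⁻¹ ^ M * (x - z)⁻¹ -
      ∑ i ∈ Finset.range M, x⁻¹ ^ (i + 1) * z⁻¹ ^ (M - i) := by
  have hterm : ∑ i ∈ Finset.range M, x⁻¹ ^ (i + 1) * z⁻¹ ^ (M - i) =
      x⁻¹ * z⁻¹ * ∑ i ∈ Finset.range M, x⁻¹ ^ i * z⁻¹ ^ (M - 1 - i) := by
    rw [Finset.mul_sum]
    refine Finset.sum_congr rfl fun i hi ↦ ?_
    rw [show M - i = M - 1 - i + 1 by have := Finset.mem_range.mp hi; lia]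
    ring
  have hinv : x⁻¹ * z⁻¹ = -(x⁻¹ - z⁻¹) * (x - z)⁻¹ := by
    field_simp
    ring
  rw [hterm, hinv]
  linear_combination -(x - z)⁻¹ * geom_sum₂_mul x⁻¹ z⁻¹ M

section DoubleSeries

variable {a : ℕ → ℂ} {X Y : ℕ → ℝ}

lemma summable_mul_neg_inv_pow_succ (ha : ∀ l, ‖a l‖ ≤ 1)
    (hsY : Summable fun l ↦ (Y l : ℂ)⁻¹) (k : ℕ) :
    Summable fun l ↦ a l * (-(Y l : ℂ))⁻¹ ^ (k + 1) := by
  refine (summable_pow_succ hsY k).norm.of_norm_bounded fun l ↦ ?_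
  rw [norm_mul, norm_pow, norm_pow, norm_inv, norm_neg, norm_inv]
  exact mul_le_of_le_one_left (by positivity) (ha l)

lemma summable_inv_pow_succ_mul_inv_add (ha : ∀ l, ‖a l‖ ≤ 1) (hX : ∀ n, 0 < X n)
    (hY : ∀ l, 0 < Y l) (hsX : Summable fun n ↦ (X n : ℂ)⁻¹)
    (hsY : Summable fun l ↦ (Y l : ℂ)⁻¹) (k : ℕ) :
    Summable fun p : ℕ × ℕ ↦ (X p.1 : ℂ)⁻¹ ^ (k + 1) * (a p.2 * (X p.1 + Y p.2 : ℂ)⁻¹) := by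
  refine (summable_mul_of_summable_norm (summable_pow_succ hsX k).norm
    hsY.norm).norm.of_norm_bounded fun p ↦ ?_
  have hinv : ‖(X p.1 + Y p.2 : ℂ)⁻¹‖ ≤ ‖(Y p.2 : ℂ)⁻¹‖ := by
    have := hX p.1
    have := hY p.2
    rw [← ofReal_add, norm_inv, norm_inv, norm_real, Real.norm_of_nonneg (by positivity),
      norm_real, Real.norm_of_nonneg (by positivity)]
    gcongr
    linarith
  rw [norm_mul, norm_mul (a _), norm_mul]
  gcongr
  exact (mul_le_of_le_one_left (norm_nonneg _) (ha _)).trans hinv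

lemma inv_pow_mul_mul_inv_add (hX : ∀ n, 0 < X n) (hY : ∀ l, 0 < Y l) (M : ℕ) (p : ℕ × ℕ) :
    (X p.1 : ℂ)⁻¹ ^ M * (a p.2 * (X p.1 + Y p.2 : ℂ)⁻¹) =
      a p.2 * (-(Y p.2 : ℂ))⁻¹ ^ M * (X p.1 + Y p.2 : ℂ)⁻¹ -
        ∑ i ∈ Finset.range M, (X p.1 : ℂ)⁻¹ ^ (i + 1) * (a p.2 * (-(Y p.2 : ℂ))⁻¹ ^ (M - i)) := by
  have hadd : (X p.1 - -Y p.2 : ℂ) ≠ 0 := by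
    rw [sub_neg_eq_add]
    exact_mod_cast (add_pos (hX p.1) (hY p.2)).ne'
  have hpf := inv_pow_mul_inv_sub (by exact_mod_cast (hX p.1).ne')
    (neg_ne_zero.mpr (by exact_mod_cast (hY p.2).ne')) hadd M
  rw [sub_neg_eq_add] at hpf
  simp_rw [mul_left_comm _ (a p.2)]
  rw [hpf, mul_sub, Finset.mul_sum, mul_assoc]

theorem tsum_tsum_inv_add_comm (ha : ∀ l, ‖a l‖ ≤ 1) (hX : ∀ n, 0 < X n) (hY : ∀ l, 0 < Y l)
    (hsX : Summable fun n ↦ (X n : ℂ)⁻¹) (hsY : Summable fun l ↦ (Y l : ℂ)⁻¹)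
    {M : ℕ} (hM : M ≠ 0) :
    ∑' n, (X n : ℂ)⁻¹ ^ M * ∑' l, a l * (X n + Y l : ℂ)⁻¹ =
      ∑' l, a l * (-(Y l : ℂ))⁻¹ ^ M * ∑' n, (X n + Y l : ℂ)⁻¹ -
        ∑ i ∈ Finset.range M, (∑' n, (X n : ℂ)⁻¹ ^ (i + 1)) *
          ∑' l, a l * (-(Y l : ℂ))⁻¹ ^ (M - i) := by
  have hF : Summable fun p : ℕ × ℕ ↦ (X p.1 : ℂ)⁻¹ ^ M * (a p.2 * (X p.1 + Y p.2 : ℂ)⁻¹) := by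
    obtain ⟨k, rfl⟩ := Nat.exists_eq_succ_of_ne_zero hM
    exact summable_inv_pow_succ_mul_inv_add ha hX hY hsX hsY k
  have hv {i : ℕ} (hi : i ∈ Finset.range M) : Summable fun l ↦ a l * (-(Y l : ℂ))⁻¹ ^ (M - i) := by
    obtain ⟨k, hk⟩ := Nat.exists_eq_succ_of_ne_zero (Nat.sub_ne_zero_of_lt (Finset.mem_range.mp hi))
    exact hk ▸ summable_mul_neg_inv_pow_succ ha hsY k
  have hH (i) (hi : i ∈ Finset.range M) : Summable fun p : ℕ × ℕ ↦
      (X p.1 : ℂ)⁻¹ ^ (i + 1) * (a p.2 * (-(Y p.2 : ℂ))⁻¹ ^ (M - i)) :=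
    (summable_mul_of_summable_norm (summable_pow_succ hsX i).norm (hv hi).norm :)
  have hsplit := inv_pow_mul_mul_inv_add (a := a) hX hY M
  have hG : Summable fun p : ℕ × ℕ ↦ a p.2 * (-(Y p.2 : ℂ))⁻¹ ^ M * (X p.1 + Y p.2 : ℂ)⁻¹ := by
    refine (hF.add (summable_sum hH)).congr fun p ↦ ?_
    rw [hsplit, sub_add_cancel]
  have hleft : ∑' p : ℕ × ℕ, (X p.1 : ℂ)⁻¹ ^ M * (a p.2 * (X p.1 + Y p.2 : ℂ)⁻¹) =
      ∑' n, (X n : ℂ)⁻¹ ^ M * ∑' l, a l * (X n + Y l : ℂ)⁻¹ := by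
    simp only [hF.tsum_prod, tsum_mul_left]
  have hright : ∑' p : ℕ × ℕ, a p.2 * (-(Y p.2 : ℂ))⁻¹ ^ M * (X p.1 + Y p.2 : ℂ)⁻¹ =
      ∑' l, a l * (-(Y l : ℂ))⁻¹ ^ M * ∑' n, (X n + Y l : ℂ)⁻¹ := by
    rw [← (Equiv.prodComm ℕ ℕ).tsum_eq]
    simpa only [Equiv.prodComm_apply, Prod.fst_swap, Prod.snd_swap, tsum_mul_left]
      using hG.prod_symm.tsum_prod
  rw [← hleft, tsum_congr hsplit, hG.tsum_sub (summable_sum hH), Summable.tsum_finsetSum hH, hright]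
  congr 1
  exact Finset.sum_congr rfl fun i hi ↦
    (tsum_mul_tsum_of_summable_norm (summable_pow_succ hsX i).norm (hv hi).norm).symm

end DoubleSeries

lemma summable_inv_sq (c : ℝ) :
    Summable fun n : ℕ ↦ (((((n : ℝ) + 1) * c) ^ 2 : ℝ) : ℂ)⁻¹ := by
  have hs := (summable_nat_add_iff 1).mpr (Real.summable_nat_pow_inv.mpr one_lt_two)
  rw [← summable_ofReal] at hs
  refine (hs.mul_right ((c : ℂ) ^ 2)⁻¹).congr fun n ↦ ?_
  push_cast
  rw [mul_pow, mul_inv]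

lemma tsum_inv_sq_pow (c : ℂ) {a : ℕ} (ha : a ≠ 0) :
    ∑' n : ℕ, ((((n : ℂ) + 1) * c) ^ 2)⁻¹ ^ a = riemannZeta (2 * a) / c ^ (2 * a) := by
  have hre : 1 < (2 * (a : ℂ)).re := by
    norm_cast
    lia
  rw [zeta_eq_tsum_one_div_nat_add_one_cpow hre, ← tsum_div_const]
  refine tsum_congr fun n ↦ ?_
  have hcpow : ((n : ℂ) + 1) ^ (2 * a : ℂ) = ((n : ℂ) + 1) ^ (2 * a) := by
    exact_mod_cast cpow_natCast ((n : ℂ) + 1) (2 * a)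
  rw [hcpow, inv_pow, ← pow_mul, mul_pow, div_div, one_div]

lemma riemannZeta_two_mul (a : ℕ) : riemannZeta (2 * a) =
    (-1) ^ (a + 1) * ((2 * π) ^ (2 * a) / 2) * (bernoulli (2 * a) / (2 * a).factorial) := by
  rcases eq_or_ne a 0 with rfl | ha
  · norm_num [riemannZeta_zero]
  · rw [riemannZeta_two_mul_nat ha, mul_pow, ← mul_pow_sub_one (show 2 * a ≠ 0 by lia) (2 : ℂ)]
    ring

lemma sum_Icc_one_int (M : ℕ) (f : ℤ → ℂ) :
    ∑ j ∈ Finset.Icc (1 : ℤ) (M + 1), f j =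
      ∑ a ∈ Finset.range (M + 1), f ((M + 1 - a : ℕ) : ℤ) := by
  refine Finset.sum_nbij' (fun j ↦ (M + 1 - j).toNat) (fun a ↦ ((M + 1 - a : ℕ) : ℤ))
    ?_ ?_ ?_ ?_ fun j hj ↦ congrArg f ?_
  all_goals
    simp only [Finset.mem_Icc, Finset.mem_range] at *
    lia

variable {q : ℕ} [NeZero q] {χ : DirichletCharacter ℂ q}

lemma tsum_char_mul_neg_inv_sq_pow (ψ : DirichletCharacter ℂ q) {b : ℕ} (hb : b ≠ 0) :
    ∑' l : ℕ, ψ ((l + 1 : ℕ) : ZMod q) * (-((l + 1) * π : ℂ) ^ 2)⁻¹ ^ b =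
      (-1) ^ b / π ^ (2 * b) * LFunction ψ (2 * b) := by
  have hL := (hasSum_LFunction ψ (k := 2 * b) (by lia)).tsum_eq
  push_cast at hL
  rw [← hL, ← tsum_mul_left]
  refine tsum_congr fun n ↦ ?_
  rw [inv_neg, neg_pow, inv_pow, ← pow_mul, mul_pow]
  push_cast
  field_simp

lemma dualLambertSeries_eq_tsum (hq : 1 < q) (h : χ.IsPrimitive) (hev : χ.Even) {α : ℝ}
    (hα : α ≠ 0) (M : ℕ) : dualLambertSeries χ (2 * M + 1) (exp (-(2 * α / q))) =
      gaussSum χ stdAddChar * α ^ (2 * M + 1) * ∑' n : ℕ, (((n + 1) * α : ℂ) ^ 2)⁻¹ ^ M *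
        ∑' l : ℕ, χ⁻¹ ((l + 1 : ℕ) : ZMod q) *
          (((n + 1) * α : ℂ) ^ 2 + ((l + 1) * π : ℂ) ^ 2)⁻¹ := by
  have hα' : (α : ℂ) ≠ 0 := by exact_mod_cast hα
  rw [dualLambertSeries, ← tsum_mul_left]
  refine tsum_congr fun n ↦ ?_
  have hpow : exp (-(2 * α / q : ℂ)) ^ (n + 1) = exp (-(2 * (((n + 1) * α : ℝ) : ℂ) / q)) := by
    rw [← exp_nat_mul]
    push_cast
    ring_nf
  rw [hpow, charGeom_eq_tsum hq h hev (mul_ne_zero (by positivity) hα), mul_div_assoc,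
    mul_assoc (gaussSum _ _), ← tsum_mul_left, ← tsum_mul_left, ← tsum_div_const]
  congr 1
  refine tsum_congr fun l ↦ ?_
  push_cast
  rw [mul_comm (π : ℂ), inv_pow, ← pow_mul, mul_pow _ _ (2 * M)]
  generalize ((n + 1) * α : ℂ) ^ 2 + ((l + 1) * π : ℂ) ^ 2 = Z
  have hz : ((n : ℂ) + 1) ^ (2 * (M : ℤ) + 1) = ((n : ℂ) + 1) ^ (2 * M + 1) := by norm_cast
  rw [hz]
  field_simp
  ring

lemma exp_neg_div_one_sub_exp_neg {α β : ℝ} (hβ : 0 < β) (hαβ : α * β = π ^ 2) (l : ℕ) :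
    exp (-(2 * β)) ^ (l + 1) / (1 - exp (-(2 * β)) ^ (l + 1)) =
      -1 / 2 + 1 / (2 * ((l + 1) * β)) +
        (l + 1) * α * ∑' n : ℕ, (((n + 1) * α : ℂ) ^ 2 + ((l + 1) * π : ℂ) ^ 2)⁻¹ := by
  set x : ℝ := (l + 1) * β with hx
  have hexp : exp (-(2 * β)) ^ (l + 1) = (exp (2 * x))⁻¹ := by
    rw [← exp_nat_mul, ← exp_neg, hx]
    push_cast
    ring_nf
  have hfrac : (exp (2 * x : ℂ))⁻¹ / (1 - (exp (2 * x : ℂ))⁻¹) = 1 / (exp (2 * x) - 1) := by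
    rw [← mul_div_mul_left _ _ (exp_ne_zero (2 * x)), mul_sub, mul_one,
      mul_inv_cancel₀ (exp_ne_zero _)]
  rw [hexp, hfrac, one_div_exp_sub_one (by positivity), ← tsum_mul_left, hx]
  push_cast
  congr 1
  refine tsum_congr fun n ↦ ?_
  have hsq : α ^ 2 * (((l + 1) * β) ^ 2 + (π * (n + 1)) ^ 2) =
      π ^ 2 * (((n + 1) * α) ^ 2 + ((l + 1) * π) ^ 2) := by
    linear_combination (l + 1) ^ 2 * (α * β + π ^ 2) * hαβ
  have hα : α ≠ 0 := left_ne_zero_of_mul (hαβ ▸ by positivity : α * β ≠ 0)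
  have hreal : (l + 1) * β / (((l + 1) * β) ^ 2 + (π * (n + 1)) ^ 2) =
      (l + 1) * α * (((n + 1) * α) ^ 2 + ((l + 1) * π) ^ 2)⁻¹ := by
    rw [← div_eq_mul_inv, div_eq_div_iff (by positivity) (by positivity)]
    refine mul_left_cancel₀ hα ?_
    linear_combination (l + 1) * (((n + 1) * α) ^ 2 + ((l + 1) * π) ^ 2) * hαβ - (l + 1) * hsq
  exact_mod_cast hreal

lemma lambertSeries_eq_tsum (ψ : DirichletCharacter ℂ q) {α β : ℝ} (hβ : 0 < β)
    (hαβ : α * β = π ^ 2) {M : ℕ} (hM : M ≠ 0) :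
    lambertSeries ψ (2 * M + 1) (exp (-(2 * β))) =
      -1 / 2 * LFunction ψ (2 * M + 1) + 1 / (2 * β) * LFunction ψ (2 * (M + 1)) +
        α * (-1) ^ M * π ^ (2 * M) *
          ∑' l : ℕ, ψ ((l + 1 : ℕ) : ZMod q) * (-((l + 1) * π : ℂ) ^ 2)⁻¹ ^ M *
            ∑' n : ℕ, (((n + 1) * α : ℂ) ^ 2 + ((l + 1) * π : ℂ) ^ 2)⁻¹ := by
  have hβ' : (β : ℂ) ≠ 0 := by exact_mod_cast hβ.ne'
  have hy : ‖exp (-(2 * β))‖ < 1 := by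
    exact_mod_cast norm_exp_neg_lt_one (show 0 < 2 * β by positivity)
  have hΛ := (summable_char_mul ψ (fun l : ℕ ↦ ((l + 1 : ℕ) : ZMod q))
    (summable_lambert (2 * M + 1) hy hy)).hasSum
  have hL₁ := (hasSum_LFunction ψ (k := 2 * M + 1) (by lia)).mul_left (-1 / 2)
  have hL₂ := (hasSum_LFunction ψ (k := 2 * (M + 1)) (by lia)).mul_left (1 / (2 * β : ℂ))
  push_cast at hL₁ hL₂
  rw [← sub_eq_iff_eq_add', ← tsum_mul_left]
  refine (hΛ.sub (hL₁.add hL₂)).tsum_eq.symm.trans (tsum_congr fun l ↦ ?_)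
  have hz : ((l : ℂ) + 1) ^ (2 * (M : ℤ) + 1) = ((l : ℂ) + 1) ^ (2 * M + 1) := by norm_cast
  have hY : (-((l + 1) * π : ℂ) ^ 2)⁻¹ ^ M = (-1) ^ M * (((l + 1) * π : ℂ) ^ (2 * M))⁻¹ := by
    rw [inv_neg, neg_pow, inv_pow, ← pow_mul]
  have hsign : ((-1 : ℂ) ^ M) * (-1) ^ M = 1 := by rw [← mul_pow]; norm_num
  rw [div_mul_eq_div_div_swap, exp_neg_div_one_sub_exp_neg hβ hαβ, hz, hY, mul_pow _ _ (2 * M)]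
  generalize ∑' n : ℕ, (_ : ℂ)⁻¹ = S
  push_cast
  generalize ψ _ = c
  generalize (-1 : ℂ) ^ M = e at *
  field_simp
  linear_combination (-2 * c * β * α * S * (l + 1) ^ (4 * M + 4)) * hsign

lemma bernoulli_term_eq (hq : 1 < q) (h : χ.IsPrimitive) (hev : χ.Even) {α β : ℂ}
    (hαβ : α * β = π ^ 2) {M j a : ℕ} (hj : 1 ≤ j) (hja : j + a = M + 1) :
    (-1 : ℂ) ^ (M : ℤ) * 2 ^ (2 * (M : ℤ)) *
      ((-1 : ℂ) ^ ((j : ℤ) + 1) / (q : ℂ) ^ (2 * (j : ℤ) - 1) *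
        (LFunction χ (1 - 2 * ((j : ℤ) : ℂ)) / (Nat.factorial (2 * (j : ℤ) - 1).toNat : ℂ)) *
        ((bernOverFact (2 * M - 2 * j + 2) : ℚ) : ℂ) * α ^ (j : ℤ) * β ^ ((M : ℤ) - j + 1)) =
      -gaussSum χ stdAddChar * α ^ (M + 1) * (riemannZeta (2 * a) / α ^ (2 * a) *
        ((-1) ^ j / π ^ (2 * j) * LFunction χ⁻¹ (2 * j))) := by
  have hπ : (π : ℂ) ≠ 0 := by exact_mod_cast Real.pi_ne_zero
  have hq0 : (q : ℂ) ≠ 0 := NeZero.ne _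
  have hα : α ≠ 0 := left_ne_zero_of_mul (hαβ ▸ pow_ne_zero 2 hπ)
  have hβ : β = π ^ 2 / α := by rw [eq_div_iff hα, mul_comm, hαβ]
  have hB : bernOverFact (2 * M - 2 * j + 2) = bernoulli (2 * a) / (2 * a).factorial := by
    rw [show (2 * M - 2 * j + 2 : ℤ) = (2 * a : ℕ) by lia, bernOverFact,
      if_pos (Int.natCast_nonneg _), Int.toNat_natCast]
  rw [hB, show (M - j + 1 : ℤ) = a by lia, show (2 * j - 1 : ℤ) = (2 * j - 1 : ℕ) by lia,
    Int.toNat_natCast, Int.cast_natCast, LFunction_one_sub_two_mul hq h hev hj,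
    riemannZeta_two_mul, hβ]
  norm_cast
  push_cast
  have hF : ((2 * j - 1).factorial : ℂ) ≠ 0 := by exact_mod_cast Nat.factorial_ne_zero _
  have htwo : (2 : ℂ) ^ (2 * j) * 2 ^ (2 * a) = 4 * 2 ^ (2 * M) := by
    rw [← pow_add, show 2 * j + 2 * a = 2 + 2 * M by lia, pow_add]
    norm_num
  have hsign : (-1 : ℂ) ^ j * (-1) ^ a = -(-1) ^ M := by rw [← pow_add, hja, pow_succ, mul_neg_one]
  have hsq : ((-1 : ℂ) ^ j) * (-1) ^ j = 1 := by rw [← mul_pow]; norm_num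
  have ht : (2 : ℂ) ^ (2 * j) ≠ 0 := pow_ne_zero _ two_ne_zero
  rw [← hja, div_pow, mul_pow, mul_pow]
  generalize (2 : ℂ) ^ (2 * j) = t, (2 : ℂ) ^ (2 * a) = u, (2 : ℂ) ^ (2 * M) = v at htwo ht ⊢
  field_simp
  generalize ((2 * a).factorial : ℂ) = F
  linear_combination (gaussSum χ stdAddChar * LFunction χ⁻¹ (2 * j) * bernoulli (2 * a) *
    α ^ (j + a) * α ^ a * π ^ (2 * a) / F) * (-4 * v * (-1) ^ j * hsign +
      4 * v * (-1) ^ a * hsq - (-1) ^ a * htwo)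

lemma sum_bernoulli_term_eq (hq : 1 < q) (h : χ.IsPrimitive) (hev : χ.Even) {α β : ℂ}
    (hαβ : α * β = π ^ 2) (M : ℕ) :
    (-1 : ℂ) ^ (M : ℤ) * 2 ^ (2 * (M : ℤ)) * ∑ j ∈ Finset.Icc (1 : ℤ) (M + 1),
        (-1 : ℂ) ^ (j + 1) / (q : ℂ) ^ (2 * j - 1) *
          (LFunction χ (1 - 2 * (j : ℂ)) / (Nat.factorial (2 * j - 1).toNat : ℂ)) *
          ((bernOverFact (2 * M - 2 * j + 2) : ℚ) : ℂ) * α ^ j * β ^ (M - j + 1) =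
      -gaussSum χ stdAddChar * α ^ (M + 1) * ∑ a ∈ Finset.range (M + 1),
        riemannZeta (2 * a) / α ^ (2 * a) * ((-1) ^ (M + 1 - a) / π ^ (2 * (M + 1 - a)) *
          LFunction χ⁻¹ (2 * (M + 1 - a : ℕ))) := by
  rw [sum_Icc_one_int, Finset.mul_sum, Finset.mul_sum]
  refine Finset.sum_congr rfl fun a ha ↦ ?_
  have haM := Finset.mem_range.mp ha
  exact bernoulli_term_eq hq h hev hαβ (by lia) (by lia)

lemma tsum_tsum_inv_add_sq_comm (ψ : DirichletCharacter ℂ q) {α : ℝ} (hα : 0 < α) {M : ℕ}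
    (hM : M ≠ 0) :
    ∑' n : ℕ, (((n + 1) * α : ℂ) ^ 2)⁻¹ ^ M *
        ∑' l : ℕ, ψ ((l + 1 : ℕ) : ZMod q) *
          (((n + 1) * α : ℂ) ^ 2 + ((l + 1) * π : ℂ) ^ 2)⁻¹ =
      ∑' l : ℕ, ψ ((l + 1 : ℕ) : ZMod q) * (-((l + 1) * π : ℂ) ^ 2)⁻¹ ^ M *
          ∑' n : ℕ, (((n + 1) * α : ℂ) ^ 2 + ((l + 1) * π : ℂ) ^ 2)⁻¹ -
        ∑ i ∈ Finset.range M, riemannZeta (2 * (i + 1 : ℕ)) / α ^ (2 * (i + 1)) *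
          ((-1) ^ (M - i) / π ^ (2 * (M - i)) * LFunction ψ (2 * (M - i : ℕ))) := by
  have hswap := tsum_tsum_inv_add_comm (a := fun l ↦ ψ ((l + 1 : ℕ) : ZMod q))
    (X := fun n ↦ ((n + 1) * α) ^ 2) (Y := fun l ↦ ((l + 1) * π) ^ 2)
    (fun l ↦ ψ.norm_le_one _) (fun n ↦ by positivity) (fun l ↦ by positivity)
    (summable_inv_sq α) (summable_inv_sq π) hM
  have hprod : ∀ i ∈ Finset.range M,
      (∑' n : ℕ, (((n + 1) * α : ℂ) ^ 2)⁻¹ ^ (i + 1)) *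
        ∑' l : ℕ, ψ ((l + 1 : ℕ) : ZMod q) * (-((l + 1) * π : ℂ) ^ 2)⁻¹ ^ (M - i) =
      riemannZeta (2 * (i + 1 : ℕ)) / α ^ (2 * (i + 1)) *
        ((-1) ^ (M - i) / π ^ (2 * (M - i)) * LFunction ψ (2 * (M - i : ℕ))) := fun i hi ↦ by
    rw [tsum_inv_sq_pow _ i.succ_ne_zero,
      tsum_char_mul_neg_inv_sq_pow ψ (Nat.sub_ne_zero_of_lt (Finset.mem_range.mp hi))]
  rw [← Finset.sum_congr rfl hprod]
  push_cast at hswap ⊢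
  exact hswap

theorem transformation_of_pos (hq : 1 < q) (h : χ.IsPrimitive) (hev : χ.Even) {α β : ℝ}
    (hα : 0 < α) (hβ : 0 < β) (hαβ : α * β = π ^ 2) {M : ℕ} (hM : M ≠ 0) :
    (α : ℂ) ^ (-(M : ℤ)) * dualLambertSeries χ (2 * M + 1) (exp (-(2 * α / q))) =
      (-(β : ℂ)) ^ (-(M : ℤ)) * (q / (2 * gaussSum χ⁻¹ stdAddChar) * LFunction χ⁻¹ (2 * M + 1) +
        gaussSum χ stdAddChar * lambertSeries χ⁻¹ (2 * M + 1) (exp (-(2 * β)))) +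
      (-1 : ℂ) ^ (M : ℤ) * 2 ^ (2 * (M : ℤ)) * ∑ j ∈ Finset.Icc (1 : ℤ) (M + 1),
        (-1 : ℂ) ^ (j + 1) / (q : ℂ) ^ (2 * j - 1) *
          (LFunction χ (1 - 2 * (j : ℂ)) / (Nat.factorial (2 * j - 1).toNat : ℂ)) *
          ((bernOverFact (2 * M - 2 * j + 2) : ℚ) : ℂ) * (α : ℂ) ^ j * (β : ℂ) ^ (M - j + 1) := by
  have hα' : (α : ℂ) ≠ 0 := by exact_mod_cast hα.ne'
  have hαβ' : (α * β : ℂ) = π ^ 2 := by exact_mod_cast hαβ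
  have hG := gaussSum_mul_gaussSum_inv h hev
  have hG0 : gaussSum χ⁻¹ stdAddChar ≠ 0 :=
    right_ne_zero_of_mul (hG ▸ NeZero.ne (q : ℂ))
  have hquot : (q : ℂ) / (2 * gaussSum χ⁻¹ stdAddChar) = gaussSum χ stdAddChar / 2 := by
    rw [← hG]
    field_simp
  rw [dualLambertSeries_eq_tsum hq h hev hα.ne', tsum_tsum_inv_add_sq_comm _ hα hM,
    lambertSeries_eq_tsum _ hβ hαβ hM, sum_bernoulli_term_eq hq h hev hαβ', hquot,
    Finset.sum_range_succ']
  simp only [Nat.add_sub_add_right, Nat.sub_zero]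
  generalize ∑ i ∈ Finset.range M, (_ : ℂ) = R
  generalize ∑' l : ℕ, (_ : ℂ) = S
  have hβα : (β : ℂ) = π ^ 2 / α := by rw [eq_div_iff hα', mul_comm, hαβ']
  have hsign : ((-1 : ℂ) ^ M) * (-1) ^ M = 1 := by rw [← mul_pow]; norm_num
  have hζ : riemannZeta (2 * (0 : ℕ)) = -1 / 2 := by simp [riemannZeta_zero]
  rw [hζ, zpow_neg, zpow_neg, zpow_natCast, zpow_natCast, neg_pow]
  push_cast
  have he : (-1 : ℂ) ^ M ≠ 0 := left_ne_zero_of_mul (hsign ▸ one_ne_zero)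
  rw [hβα, pow_succ (-1 : ℂ), div_pow]
  generalize (-1 : ℂ) ^ M = e at hsign he ⊢
  field_simp
  linear_combination (gaussSum χ stdAddChar * α ^ (2 * M + 1) * π ^ (2 * (M + 1)) *
    LFunction χ⁻¹ (2 * (M + 1))) * hsign

end PositiveExponent

section Residues

lemma hasSum_sum_residues (q : ℕ) [NeZero q] {f : ℤ → ℂ} (hf : Summable f) :
    HasSum (fun t : ℤ ↦ ∑ a : ZMod q, f (t * q + a.val)) (∑' l, f l) := by
  have hfin (F : ℕ → ℂ) : ∑ a : ZMod q, F a.val = ∑ r : Fin q, F r := by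
    obtain ⟨n, rfl⟩ := Nat.exists_eq_succ_of_ne_zero (NeZero.ne q)
    rfl
  simp_rw [fun t : ℤ ↦ hfin fun r ↦ f (t * q + r)]
  exact ((Int.divModEquiv q).symm.hasSum_iff.mpr hf.hasSum).prod_fiberwise fun t ↦ hasSum_fintype _

lemma summable_inv_add_div_pow (q : ℕ) [NeZero q] (w : ℂ) {K : ℕ} (hK : K ≠ 0) :
    Summable fun l : ℤ ↦ (w + l / q)⁻¹ ^ (K + 1) := by
  have hq : (q : ℂ) ≠ 0 := NeZero.ne _
  have hs := EisensteinSeries.linear_right_summable (q * w) 1 (k := ((K + 1 : ℕ) : ℤ)) (by lia)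
  refine (hs.mul_left ((q : ℂ) ^ (K + 1))).congr fun l ↦ ?_
  rw [zpow_natCast, ← inv_pow, ← mul_pow]
  congr 1
  push_cast
  field_simp

lemma summable_inv_mul_add_div_pow (q : ℕ) [NeZero q] {z : ℂ} (hz : z ≠ 0) (l : ℤ) {K : ℕ}
    (hK : K ≠ 0) : Summable fun k : ℤ ↦ (k * z + l / q)⁻¹ ^ (K + 1) := by
  have hq : (q : ℂ) ≠ 0 := NeZero.ne _
  have hs := EisensteinSeries.linear_left_summable (mul_ne_zero hq hz) l
    (k := ((K + 1 : ℕ) : ℤ)) (by lia)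
  refine (hs.mul_left ((q : ℂ) ^ (K + 1))).congr fun k ↦ ?_
  rw [zpow_natCast, ← inv_pow, ← mul_pow]
  congr 1
  field_simp

end Residues

section LatticeSummability

open Asymptotics Bornology Filter
open scoped UpperHalfPlane

lemma isBigO_inv_add_pow_sub_inv_pow (c : ℂ) (k : ℕ) :
    (fun w ↦ (w + c)⁻¹ ^ (k + 1) - w⁻¹ ^ (k + 1)) =O[cobounded ℂ] fun w ↦ w⁻¹ ^ (k + 2) := by
  have hlim : Tendsto norm (cobounded ℂ) atTop := tendsto_norm_cobounded_atTop
  have hinv : (fun w ↦ (w + c)⁻¹) =O[cobounded ℂ] fun w ↦ w⁻¹ :=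
    ((isTheta_refl id _).add_isLittleO (isLittleO_const_left.mpr (.inr hlim))).inv.isBigO
  have hsub : (fun w ↦ (w + c)⁻¹ - w⁻¹) =O[cobounded ℂ] fun w ↦ w⁻¹ * w⁻¹ := by
    refine ((hinv.mul (isBigO_refl (fun w : ℂ ↦ w⁻¹) _)).const_mul_left (-c)).congr' ?_ .rfl
    filter_upwards [eventually_ne_cobounded 0, eventually_ne_cobounded (-c)] with w hw hwc
    have hadd : w + c ≠ 0 := fun h ↦ hwc (eq_neg_of_add_eq_zero_left h)
    field_simp
    ring
  induction k with
  | zero => simpa [pow_two] using hsub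
  | succ k ih =>
    have hleft := hinv.mul ih
    have hright := hsub.mul (isBigO_refl (fun w : ℂ ↦ w⁻¹ ^ (k + 1)) _)
    refine (hleft.add (hright.congr_right fun w ↦ ?_)).congr (fun w ↦ ?_) fun w ↦ ?_ <;> ring

lemma r_mul_norm_le (z : ℍ) (x : Fin 2 → ℤ) :
    EisensteinSeries.r z * ‖x‖ ≤ ‖x 0 * (z : ℂ) + x 1‖ := by
  rcases eq_or_ne x 0 with rfl | hx
  · simp
  · exact EisensteinSeries.r_mul_max_le z hx

lemma tendsto_linear_cobounded (z : ℍ) :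
    Tendsto (fun x : Fin 2 → ℤ ↦ x 0 * (z : ℂ) + x 1) cofinite (cobounded ℂ) := by
  have hnorm : Tendsto (norm : (Fin 2 → ℤ) → ℝ) cofinite atTop := by
    rw [← cocompact_eq_cofinite]
    exact tendsto_norm_cocompact_atTop
  rw [← tendsto_norm_atTop_iff_cobounded]
  exact tendsto_atTop_mono (r_mul_norm_le z) (hnorm.const_mul_atTop (EisensteinSeries.r_pos z))

-- Since `∑ aᵢ = 0`, the leading term `w⁻¹ ^ (K + 1)` cancels, so the summand decays one order
-- faster and absolute convergence holds down to weight `K + 1 = 2`.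
lemma summable_sum_mul_inv_add_pow {ι : Type*} [Fintype ι] {a : ι → ℂ} (ha : ∑ i, a i = 0)
    (c : ι → ℂ) (z : ℍ) {K : ℕ} (hK : K ≠ 0) :
    Summable fun p : ℤ × ℤ ↦ ∑ i, a i * (p.1 * (z : ℂ) + p.2 + c i)⁻¹ ^ (K + 1) := by
  rw [← (finTwoArrowEquiv ℤ).summable_iff]
  have hlt : (2 : ℝ) < (K + 2 : ℕ) := by exact_mod_cast (by lia : 2 < K + 2)
  refine EisensteinSeries.summable_of_isBigO_rpow_norm hlt ?_
  have hlin : (fun x : Fin 2 → ℤ ↦ (x 0 * (z : ℂ) + x 1)⁻¹) =O[cofinite] fun x ↦ ‖x‖⁻¹ := by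
    simpa using EisensteinSeries.isBigO_linear_add_const_vec z 0 0
  have hdiff (i : ι) := ((isBigO_inv_add_pow_sub_inv_pow (c i) K).comp_tendsto
    (tendsto_linear_cobounded z)).trans (hlin.pow (K + 2))
  refine (IsBigO.fun_sum fun i (_ : i ∈ Finset.univ) ↦ (hdiff i).const_mul_left (a i)).congr
    (fun x ↦ ?_) fun x ↦ ?_
  · simp only [Function.comp_apply, mul_sub, Finset.sum_sub_distrib, ← Finset.sum_mul, ha,
      zero_mul, sub_zero]
    rfl
  · rw [Real.rpow_natCast, inv_pow]

end LatticeSummability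

section LatticeSum

open scoped UpperHalfPlane

lemma tsum_inv_add_int_pow {w : ℂ} (hw : 0 < w.im) {K : ℕ} (hK : K ≠ 0) :
    ∑' t : ℤ, (w + t)⁻¹ ^ (K + 1) = (-2 * π * I) ^ (K + 1) / K.factorial *
      ∑' n : ℕ, ((n : ℂ) + 1) ^ K * exp (2 * π * I * w) ^ (n + 1) := by
  have hs := summable_pow_mul_geometric_of_norm_lt_one K
    (UpperHalfPlane.norm_exp_two_pi_I_lt_one ⟨w, hw⟩)
  have hq := EisensteinSeries.qExpansion_identity (Nat.one_le_iff_ne_zero.mpr hK) ⟨w, hw⟩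
  rw [hs.tsum_eq_zero_add] at hq
  simpa [hK] using hq

variable {q : ℕ} {χ : DirichletCharacter ℂ q}

lemma even_rows (hev : χ.Even) (z : ℂ) {K : ℕ} (hodd : _root_.Odd K) :
    Function.Even fun k : ℤ ↦ ∑' l : ℤ, χ l * (k * z + l / q)⁻¹ ^ (K + 1) := fun k ↦ by
  beta_reduce
  rw [← (Equiv.neg ℤ).tsum_eq]
  refine tsum_congr fun l ↦ ?_
  rw [Equiv.neg_apply, ← hodd.add_one.neg_pow, ← inv_neg]
  push_cast [hev.eval_neg]
  ring_nf

lemma even_columns (z : ℂ) {K : ℕ} (hodd : _root_.Odd K) :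
    Function.Even fun l : ℤ ↦ ∑' k : ℤ, (k * z + l / q)⁻¹ ^ (K + 1) := fun l ↦ by
  beta_reduce
  rw [← (Equiv.neg ℤ).tsum_eq]
  refine tsum_congr fun k ↦ ?_
  rw [Equiv.neg_apply, ← hodd.add_one.neg_pow, ← inv_neg]
  push_cast
  ring_nf

variable [NeZero q]

lemma char_mul_inv_add_residue_div_pow (χ : DirichletCharacter ℂ q) (w : ℂ) (K : ℕ) (t : ℤ)
    (a : ZMod q) :
    χ ((t * q + a.val : ℤ) : ZMod q) * (w + (t * q + a.val : ℤ) / q)⁻¹ ^ (K + 1) =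
      χ a * (w + t + a.val / q)⁻¹ ^ (K + 1) := by
  have hq : (q : ℂ) ≠ 0 := NeZero.ne _
  push_cast [ZMod.natCast_zmod_val, ZMod.natCast_self]
  rw [mul_zero, zero_add]
  congr 3
  field_simp
  ring

lemma tsum_residues_row (χ : DirichletCharacter ℂ q) (w : ℂ) {K : ℕ} (hK : K ≠ 0) :
    ∑' t : ℤ, ∑ a : ZMod q, χ a * (w + t + a.val / q)⁻¹ ^ (K + 1) =
      ∑' l : ℤ, χ l * (w + l / q)⁻¹ ^ (K + 1) := by
  have hs := summable_char_mul χ (fun l : ℤ ↦ (l : ZMod q)) (summable_inv_add_div_pow q w hK)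
  rw [← (hasSum_sum_residues q hs).tsum_eq]
  simp_rw [char_mul_inv_add_residue_div_pow]

lemma tsum_char_mul_inv_add_div_pow (h : χ.IsPrimitive) {w : ℂ} (hw : 0 < w.im) {K : ℕ}
    (hK : K ≠ 0) :
    ∑' l : ℤ, χ l * (w + l / q)⁻¹ ^ (K + 1) =
      (-2 * π * I) ^ (K + 1) / K.factorial * (gaussSum χ stdAddChar *
        ∑' n : ℕ, χ⁻¹ ((n + 1 : ℕ) : ZMod q) * ((n + 1) ^ K * exp (2 * π * I * w) ^ (n + 1))) := by
  have hs (w : ℂ) : Summable fun t : ℤ ↦ (w + t)⁻¹ ^ (K + 1) := by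
    simpa using summable_inv_add_div_pow 1 w hK
  have hgeom := summable_zpow_mul_pow_succ K
    (UpperHalfPlane.norm_exp_two_pi_I_lt_one ⟨w, hw⟩)
  simp only [zpow_natCast] at hgeom
  have hshift (a : ZMod q) (n : ℕ) : exp (2 * π * I * (w + a.val / q)) ^ (n + 1) =
      stdAddChar (a * ((n + 1 : ℕ) : ZMod q)) * exp (2 * π * I * w) ^ (n + 1) := by
    have hchar := ZMod.stdAddChar_coe (N := q) (a.val * (n + 1 : ℕ))
    push_cast [ZMod.natCast_zmod_val] at hchar ⊢
    rw [hchar, ← exp_nat_mul, ← exp_nat_mul, ← exp_add]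
    push_cast
    ring_nf
  have hcomm (t : ℤ) (a : ZMod q) : w + t + a.val / q = w + a.val / q + t := add_right_comm ..
  rw [← tsum_residues_row χ w hK]
  simp_rw [hcomm]
  rw [Summable.tsum_finsetSum fun a _ ↦ (hs _).mul_left _,
    gaussSum_mul_tsum_char_inv_mul h _ hgeom, Finset.mul_sum]
  refine Finset.sum_congr rfl fun a _ ↦ ?_
  have hwa : 0 < (w + a.val / q).im := by
    rw [add_im, div_natCast_im, natCast_im, zero_div, add_zero]
    exact hw
  rw [tsum_mul_left, tsum_inv_add_int_pow hwa hK, mul_left_comm]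
  simp_rw [hshift, mul_left_comm]

lemma im_neg_one_div_pos (z : ℍ) : 0 < (-1 / (q * (z : ℂ))).im := by
  have hq := NeZero.pos q
  have him : 0 < ((-(z : ℂ))⁻¹ / q).im := by
    rw [div_natCast_im]
    exact div_pos z.im_inv_neg_coe_pos (by exact_mod_cast hq)
  convert him using 2
  rw [inv_neg, neg_div, neg_div, one_div, mul_inv_rev, div_eq_mul_inv]

lemma tsum_inv_mul_add_div_pow (z : ℍ) {K : ℕ} (hK : K ≠ 0) (hodd : _root_.Odd K) (l : ℕ) :
    ∑' k : ℤ, (k * (z : ℂ) + ((l : ℤ) + 1 : ℤ) / q)⁻¹ ^ (K + 1) =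
      (z : ℂ)⁻¹ ^ (K + 1) * ((-2 * π * I) ^ (K + 1) / K.factorial *
        ∑' n : ℕ, ((n : ℂ) + 1) ^ K * exp (2 * π * I * (-1 / (q * z))) ^ ((l + 1) * (n + 1))) := by
  have hz := z.ne_zero
  have him : 0 < (((l + 1 : ℕ) : ℂ) * (-1 / (q * z))).im := by
    have := im_neg_one_div_pos (q := q) z
    rw [← ofReal_natCast, im_ofReal_mul]
    positivity
  have hterm (k : ℤ) : (((Equiv.neg ℤ k : ℤ) : ℂ) * z + ((l : ℤ) + 1 : ℤ) / q)⁻¹ ^ (K + 1) =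
      (z : ℂ)⁻¹ ^ (K + 1) * (((l + 1 : ℕ) : ℂ) * (-1 / (q * z)) + k)⁻¹ ^ (K + 1) := by
    rw [← mul_pow, ← mul_inv, ← hodd.add_one.neg_pow, ← inv_neg]
    congr 2
    push_cast [Equiv.neg_apply]
    field_simp
    ring
  rw [← (Equiv.neg ℤ).tsum_eq]
  simp_rw [hterm, tsum_mul_left, tsum_inv_add_int_pow him hK, pow_mul, ← exp_nat_mul _ (l + 1),
    mul_left_comm _ (2 * π * I)]

lemma sum_char_eq_zero (hq : 1 < q) (h : χ.IsPrimitive) : ∑ a, χ a = 0 := by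
  refine MulChar.sum_eq_zero_of_ne_one ?_
  rintro rfl
  rw [isPrimitive_def, conductor_one] at h
  exact hq.ne h

lemma summable_rows (hq : 1 < q) (h : χ.IsPrimitive) (z : ℍ) {K : ℕ} (hK : K ≠ 0) :
    Summable fun k : ℤ ↦ ∑' l : ℤ, χ l * (k * (z : ℂ) + l / q)⁻¹ ^ (K + 1) := by
  simp_rw [← tsum_residues_row χ _ hK]
  exact (summable_sum_mul_inv_add_pow (sum_char_eq_zero hq h) _ z hK).prod

lemma tsum_rows_eq_tsum_columns (hq : 1 < q) (h : χ.IsPrimitive) (z : ℍ) {K : ℕ} (hK : K ≠ 0)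
    (hcol : Summable fun l : ℤ ↦ χ l * ∑' k : ℤ, (k * (z : ℂ) + l / q)⁻¹ ^ (K + 1)) :
    ∑' k : ℤ, ∑' l : ℤ, χ l * (k * (z : ℂ) + l / q)⁻¹ ^ (K + 1) =
      ∑' l : ℤ, χ l * ∑' k : ℤ, (k * (z : ℂ) + l / q)⁻¹ ^ (K + 1) := by
  have hsum (l : ℤ) := summable_inv_mul_add_div_pow q z.ne_zero l hK
  have hres : Summable (Function.uncurry fun k t : ℤ ↦
      ∑ a : ZMod q, χ a * (k * (z : ℂ) + t + a.val / q)⁻¹ ^ (K + 1)) :=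
    summable_sum_mul_inv_add_pow (sum_char_eq_zero hq h) _ z hK
  simp_rw [← tsum_residues_row χ _ hK]
  rw [← (hasSum_sum_residues q hcol).tsum_eq, ← hres.tsum_comm]
  refine tsum_congr fun t ↦ ?_
  simp_rw [← char_mul_inv_add_residue_div_pow]
  rw [Summable.tsum_finsetSum fun a _ ↦ (hsum _).mul_left _]
  simp_rw [tsum_mul_left]

end LatticeSum

section NegativeExponent

open scoped UpperHalfPlane

variable {q : ℕ} [NeZero q] {χ : DirichletCharacter ℂ q}

lemma tsum_char_mul_inv_div_pow (hq : 1 < q) (χ : DirichletCharacter ℂ q) (hev : χ.Even) {K : ℕ}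
    (hodd : _root_.Odd K) :
    ∑' l : ℤ, χ l * (l / q : ℂ)⁻¹ ^ (K + 1) = 2 * (q ^ (K + 1) * LFunction χ (K + 1 : ℕ)) := by
  have heven : Function.Even fun l : ℤ ↦ χ l * (l / q : ℂ)⁻¹ ^ (K + 1) := fun l ↦ by
    beta_reduce
    rw [← hodd.add_one.neg_pow (l / q : ℂ)⁻¹, ← inv_neg]
    push_cast [hev.eval_neg]
    rw [neg_div]
  have hs := summable_char_mul χ (fun l : ℤ ↦ (l : ZMod q))
    (summable_inv_add_div_pow q 0 hodd.pos.ne')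
  simp only [zero_add] at hs
  rw [tsum_int_of_even heven hs, Int.cast_zero, apply_zero χ hq, zero_mul, zero_add,
    ← (hasSum_LFunction χ (by have := hodd.pos; lia)).tsum_eq]
  congr 1
  rw [← tsum_mul_left]
  refine tsum_congr fun n ↦ ?_
  push_cast
  rw [inv_div, div_pow]
  ring

lemma tsum_rows_eq (hq : 1 < q) (h : χ.IsPrimitive) (hev : χ.Even) (z : ℍ) {K : ℕ}
    (hodd : _root_.Odd K) :
    ∑' k : ℤ, ∑' l : ℤ, χ l * (k * (z : ℂ) + l / q)⁻¹ ^ (K + 1) =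
      2 * (q ^ (K + 1) * LFunction χ (K + 1 : ℕ) + (-2 * π * I) ^ (K + 1) / K.factorial *
        (gaussSum χ stdAddChar * lambertSeries χ⁻¹ (-K) (exp (2 * π * I * z)))) := by
  have hK : K ≠ 0 := hodd.pos.ne'
  have hpos (k : ℕ) : ∑' l : ℤ, χ l * ((((k : ℤ) + 1 : ℤ) : ℂ) * z + l / q)⁻¹ ^ (K + 1) =
      (-2 * π * I) ^ (K + 1) / K.factorial * (gaussSum χ stdAddChar * ∑' n : ℕ,
        χ⁻¹ ((n + 1 : ℕ) : ZMod q) *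
          ((n + 1) ^ K * exp (2 * π * I * z) ^ ((k + 1) * (n + 1)))) := by
    have him : 0 < ((((k : ℤ) + 1 : ℤ) : ℂ) * z).im := by
      rw [← ofReal_intCast, im_ofReal_mul]
      have := z.im_pos
      push_cast
      exact mul_pos (by positivity) this
    rw [tsum_char_mul_inv_add_div_pow h him hK]
    simp_rw [pow_mul, ← exp_nat_mul _ (k + 1)]
    push_cast
    simp_rw [mul_left_comm _ (2 * π * I : ℂ)]
  rw [tsum_int_of_even (even_rows hev z hodd) (summable_rows hq h z hK)]
  simp only [Int.cast_zero, zero_mul, zero_add]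
  rw [tsum_char_mul_inv_div_pow hq χ hev hodd]
  simp_rw [hpos]
  rw [tsum_mul_left, tsum_mul_left, tsum_tsum_eq_lambertSeries χ⁻¹ K
    (UpperHalfPlane.norm_exp_two_pi_I_lt_one z), mul_add]

lemma summable_columns (χ : DirichletCharacter ℂ q) (z : ℍ) {K : ℕ} (hodd : _root_.Odd K) :
    Summable fun l : ℤ ↦ χ l * ∑' k : ℤ, (k * (z : ℂ) + l / q)⁻¹ ^ (K + 1) := by
  refine summable_char_mul χ (fun l : ℤ ↦ (l : ZMod q)) ?_
  have hnat : Summable fun l : ℕ ↦ ∑' k : ℤ, (k * (z : ℂ) + (l + 1 : ℤ) / q)⁻¹ ^ (K + 1) := by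
    simp_rw [tsum_inv_mul_add_div_pow z hodd.pos.ne' hodd]
    exact (((summable_pow_mul_pow_mul K (UpperHalfPlane.norm_exp_two_pi_I_lt_one
      ⟨_, im_neg_one_div_pos z⟩)).prod).mul_left _).mul_left _
  refine .of_add_one_of_neg_add_one hnat (hnat.congr fun l ↦ ?_)
  exact (even_columns z hodd _).symm

lemma tsum_columns_eq (hq : 1 < q) (hev : χ.Even) (z : ℍ) {K : ℕ} (hodd : _root_.Odd K) :
    ∑' l : ℤ, χ l * ∑' k : ℤ, (k * (z : ℂ) + l / q)⁻¹ ^ (K + 1) =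
      2 * ((z : ℂ)⁻¹ ^ (K + 1) * ((-2 * π * I) ^ (K + 1) / K.factorial *
        dualLambertSeries χ (-K) (exp (2 * π * I * (-1 / (q * z)))))) := by
  have heven : Function.Even fun l : ℤ ↦ χ l * ∑' k : ℤ, (k * (z : ℂ) + l / q)⁻¹ ^ (K + 1) :=
    .mul_even (fun l ↦ by simp [hev.eval_neg]) (even_columns z hodd)
  rw [tsum_int_of_even heven (summable_columns χ z hodd), Int.cast_zero, apply_zero χ hq, zero_mul,
    zero_add, ← tsum_char_mul_tsum_eq_dualLambertSeries χ hq K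
      (UpperHalfPlane.norm_exp_two_pi_I_lt_one ⟨_, im_neg_one_div_pos z⟩)]
  simp_rw [tsum_inv_mul_add_div_pow z hodd.pos.ne' hodd]
  congr 1
  rw [← tsum_mul_left, ← tsum_mul_left]
  refine tsum_congr fun l ↦ ?_
  push_cast
  ring

theorem lambertSeries_neg_one_div (hq : 1 < q) (h : χ.IsPrimitive) (hev : χ.Even) (z : ℍ) {K : ℕ}
    (hodd : _root_.Odd K) :
    q ^ (K + 1) * LFunction χ (K + 1 : ℕ) + (-2 * π * I) ^ (K + 1) / K.factorial *
        (gaussSum χ stdAddChar * lambertSeries χ⁻¹ (-K) (exp (2 * π * I * z))) =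
      (z : ℂ)⁻¹ ^ (K + 1) * ((-2 * π * I) ^ (K + 1) / K.factorial *
        dualLambertSeries χ (-K) (exp (2 * π * I * (-1 / (q * z))))) := by
  refine mul_left_cancel₀ (two_ne_zero' ℂ) ?_
  rw [← tsum_rows_eq hq h hev z hodd, ← tsum_columns_eq hq hev z hodd]
  exact tsum_rows_eq_tsum_columns hq h z hodd.pos.ne' (summable_columns χ z hodd)

lemma lambertSeries_neg_one_div_of_mul_eq (hq : 1 < q) (h : χ.IsPrimitive) (hev : χ.Even)
    {α β : ℝ} (hβ : 0 < β) (hαβ : α * β = π ^ 2) (N : ℕ) :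
    q ^ (2 * (N + 1)) * LFunction χ (2 * (N + 1 : ℕ)) +
        (-1) ^ (N + 1) * (2 * π) ^ (2 * (N + 1)) / (2 * N + 1).factorial *
          (gaussSum χ stdAddChar * lambertSeries χ⁻¹ (-(2 * N + 1 : ℕ)) (exp (-(2 * β)))) =
      α ^ (N + 1) / β ^ (N + 1) * ((2 * π) ^ (2 * (N + 1)) / (2 * N + 1).factorial *
        dualLambertSeries χ (-(2 * N + 1 : ℕ)) (exp (-(2 * α / q)))) := by
  have hβ' : (β : ℂ) ≠ 0 := by exact_mod_cast hβ.ne'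
  have hq0 : (q : ℂ) ≠ 0 := NeZero.ne _
  have hαβ' : (α * β : ℂ) = π ^ 2 := by exact_mod_cast hαβ
  let z : ℍ := ⟨I * β / π, by rw [div_ofReal_im, I_mul_im, ofReal_re]; positivity⟩
  have hz : (z : ℂ) = I * β / π := rfl
  have hexp : 2 * π * I * (z : ℂ) = -(2 * β) := by
    rw [hz]
    field_simp
    exact I_sq
  have hexp_dual : 2 * π * I * (-1 / (q * (z : ℂ))) = -(2 * α / q) := by
    rw [hz]
    field_simp
    linear_combination hαβ'
  have hz_pow : (z : ℂ)⁻¹ ^ (2 * (N + 1)) = (-1) ^ (N + 1) * (α ^ (N + 1) / β ^ (N + 1)) := by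
    rw [pow_mul, ← div_pow, ← mul_pow, hz]
    congr 1
    field_simp
    rw [I_sq, ← hαβ']
    ring
  have hC : (-2 * π * I) ^ (2 * (N + 1)) = (-1) ^ (N + 1) * (2 * π : ℂ) ^ (2 * (N + 1)) := by
    rw [pow_mul, pow_mul, ← mul_pow]
    congr 1
    linear_combination (4 * (π : ℂ) ^ 2) * I_sq
  have hsign : ((-1 : ℂ) ^ (N + 1)) * (-1) ^ (N + 1) = 1 := by rw [← mul_pow]; norm_num
  have key := lambertSeries_neg_one_div hq h hev z (odd_two_mul_add_one N)
  rw [show 2 * N + 1 + 1 = 2 * (N + 1) by ring, hexp, hexp_dual, hz_pow, hC] at key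
  push_cast at key ⊢
  rw [key]
  linear_combination (α ^ (N + 1) / β ^ (N + 1) * ((2 * π) ^ (2 * (N + 1)) /
    (2 * N + 1).factorial * dualLambertSeries χ (-(2 * N + 1)) (exp (-(2 * α / q)))) : ℂ) * hsign

theorem transformation_of_neg (hq : 1 < q) (h : χ.IsPrimitive) (hev : χ.Even) {α β : ℝ}
    (hβ : 0 < β) (hαβ : α * β = π ^ 2) {M : ℕ} (hM : 1 ≤ M) :
    (α : ℂ) ^ M * dualLambertSeries χ (2 * -(M : ℤ) + 1) (exp (-(2 * α / q))) =
      (-(β : ℂ)) ^ M * (q / (2 * gaussSum χ⁻¹ stdAddChar) * LFunction χ⁻¹ (1 - 2 * M) +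
        gaussSum χ stdAddChar * lambertSeries χ⁻¹ (2 * -(M : ℤ) + 1) (exp (-(2 * β)))) := by
  obtain ⟨N, rfl⟩ : ∃ N, M = N + 1 := ⟨M - 1, by lia⟩
  have hβ' : (β : ℂ) ≠ 0 := by exact_mod_cast hβ.ne'
  have hG0 : gaussSum χ⁻¹ stdAddChar ≠ 0 :=
    right_ne_zero_of_mul (gaussSum_mul_gaussSum_inv h hev ▸ NeZero.ne (q : ℂ))
  have hF : ((2 * N + 1).factorial : ℂ) ≠ 0 := by exact_mod_cast Nat.factorial_ne_zero _
  have hw : (2 * π : ℂ) ^ (2 * (N + 1)) ≠ 0 :=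
    pow_ne_zero _ (mul_ne_zero two_ne_zero (by exact_mod_cast Real.pi_ne_zero))
  have hsign : ((-1 : ℂ) ^ (N + 1)) * (-1) ^ (N + 1) = 1 := by rw [← mul_pow]; norm_num
  have hL := LFunction_one_sub_two_mul hq (isPrimitive_inv h) (even_inv hev) hM
  rw [inv_inv, show 2 * (N + 1) - 1 = 2 * N + 1 by lia] at hL
  have key := lambertSeries_neg_one_div_of_mul_eq hq h hev hβ hαβ N
  rw [show 2 * -((N + 1 : ℕ) : ℤ) + 1 = -((2 * N + 1 : ℕ) : ℤ) by lia, hL, neg_pow (β : ℂ)]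
  generalize dualLambertSeries χ _ _ = D at key ⊢
  generalize lambertSeries χ⁻¹ _ _ = Λ at key ⊢
  generalize (-1 : ℂ) ^ (N + 1) = e at key hsign ⊢
  generalize (2 * π : ℂ) ^ (2 * (N + 1)) = w at key hw ⊢
  field_simp at key ⊢
  linear_combination -key - q ^ (2 * (N + 1)) * LFunction χ (2 * (N + 1 : ℕ)) * β ^ (N + 1) *
    (2 * N + 1).factorial * hsign

end NegativeExponent

end Katayama

theorem stmt2 (q : ℕ) [NeZero q] (hq : 1 < q)
    (χ : DirichletCharacter ℂ q) (hprim : χ.IsPrimitive) (hev : χ.Even)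
    (α β : ℝ) (hα : 0 < α) (hβ : 0 < β) (hαβ : α * β = Real.pi ^ 2)
    (m : ℤ) (hm : m ≠ 0) :
    ((α : ℂ)) ^ (-m) *
      ∑ r ∈ Finset.Icc 1 q, ∑' n : ℕ,
        χ (r : ZMod q) * Complex.exp (-((r : ℂ) / q) * (2 * ((n : ℂ) + 1)) * α) /
          (((n : ℂ) + 1) ^ (2 * m + 1) * (1 - Complex.exp (-(2 * ((n : ℂ) + 1)) * α)))
    = (-(β : ℂ)) ^ (-m) *
        ((q / (2 * gaussSum' (conjChar χ))) *
            DirichletCharacter.LFunction (conjChar χ) (2 * (m : ℂ) + 1)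
          + gaussSum' χ *
              ∑' n : ℕ, (starRingEnd ℂ) (χ ((n + 1 : ℕ) : ZMod q)) /
                (((n : ℂ) + 1) ^ (2 * m + 1) *
                  (Complex.exp (2 * ((n : ℂ) + 1) * β) - 1)))
      + (-1 : ℂ) ^ m * (2 : ℂ) ^ (2 * m) *
          ∑ j ∈ Finset.Icc (1 : ℤ) (m + 1),
            ((-1 : ℂ) ^ (j + 1) / (q : ℂ) ^ (2 * j - 1)) *
              (DirichletCharacter.LFunction χ (1 - 2 * (j : ℂ)) /
                (Nat.factorial (2 * j - 1).toNat : ℂ)) *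
              ((bernOverFact (2 * m - 2 * j + 2) : ℚ) : ℂ) *
              ((α : ℂ)) ^ j * ((β : ℂ)) ^ (m - j + 1) := by
  have hstar (a : ZMod q) : (starRingEnd ℂ) (χ a) = χ⁻¹ a := MulChar.star_apply' χ a
  simp only [Katayama.conjChar_eq_inv, Katayama.gaussSum'_eq, hstar,
    ← Katayama.dualLambertSeries_exp χ hq _ hα, ← Katayama.lambertSeries_exp]
  rcases lt_or_gt_of_ne hm with hneg | hpos
  · obtain ⟨M, rfl⟩ : ∃ M : ℕ, m = -(M : ℤ) := ⟨m.natAbs, by lia⟩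
    have hs : (2 * ((-(M : ℤ) : ℤ) : ℂ) + 1) = 1 - 2 * (M : ℂ) := by
      push_cast
      ring
    rw [Finset.Icc_eq_empty (by lia), Finset.sum_empty, mul_zero, add_zero, neg_neg, zpow_natCast,
      zpow_natCast, hs]
    exact Katayama.transformation_of_neg hq hprim hev hβ hαβ (by lia)
  · lift m to ℕ using hpos.le with M
    exact Katayama.transformation_of_pos hq hprim hev hα hβ hαβ (by lia)
end

section
/- Let χ₅ be the even primitive Dirichlet character modulo 5 (the quadratic character, with χ₅(1)=χ₅(4)=1 and χ₅(2)=χ₅(3)=−1). Let α, β > 0 satisfy α³·β = 2π⁴. Then Σ_{r=1}^{5} Σ_{n=1}^{∞} χ₅(r)·n·e^{−(r/5)(nα)³} / (1 − e^{−(nα)³}) = (G(χ₅)/3)·(2π/α³)^{2/3}·( L(1/3, χ₅) + Σ_{m=1}^{∞} (χ₅(m)/m^{1/3})·( e^{−(mβ)^{1/3}} / (2·sinh((mβ)^{1/3})) + ( cos(√3·(mβ)^{1/3} + π/3) − e^{−(mβ)^{1/3}}/2 ) / ( cosh((mβ)^{1/3}) − cos(√3·(mβ)^{1/3}) ) ) ).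 -/
/-!
Expand `(e^{-tx} + e^{-(1-t)x}) / (1 - e^{-x})` in a Fourier series on `[0, 1]`, put `t = r/q` and
sum against `χ(r)`: separability of the Gauss sum of a primitive character turns the summand of
index `n` on the left into `2 G(χ) ∑ₘ χ⁻¹(m) n x / (x² + (2πm)²)` with `x = (nα)³`. Summing this
double series over `n` first leaves multiples of `∑ n⁴ / (n⁶ + c⁶)` with `c³ = 2πm / α³`. Partial
fractions over the cube roots of unity and the expansion of the hyperbolic cotangent, which is the
case `t = 0` of the same Fourier series, evaluate this as `π / (3c)` times `1` plus an exponentially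
small trigonometric term in `y = πc = (mβ)^{1/3}`. The `1` contributes the value of the
`L`-function.

The double series is not absolutely convergent. Grouping `m` into blocks of length `q`, over which
`χ⁻¹` sums to zero, makes it so, because the terms decrease in `m`; the same grouping
represents the `L`-function as an absolutely convergent series for `Re s > 0`.
-/

open Complex Filter Finset Topology
open scoped Real

section FourierSeries

lemma hasSum_nat_succ_of_even {f : ℤ → ℂ} (hf : f.Even) {a : ℂ} (h : HasSum f a) :
    HasSum (fun n : ℕ ↦ f (n + 1)) ((a - f 0) / 2) := by
  convert! ((hasSum_nat_add_iff' 1).mpr h.nat_add_neg).div_const 2 using 1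
  · funext n
    rw [hf, add_self_div_two, Nat.cast_succ]
  · simp

variable {x : ℂ}

lemma exp_neg_ne_one (hx : 0 < x.re) : exp (-x) ≠ 1 := by
  intro h
  have := congrArg norm h
  rw [norm_exp, norm_one, Real.exp_eq_one_iff, neg_re, neg_eq_zero] at this
  exact hx.ne' this

lemma add_two_pi_I_mul_int_ne_zero (hx : 0 < x.re) (n : ℤ) : x + 2 * π * I * n ≠ 0 := by
  intro h
  have := congrArg re h
  simp only [add_re, mul_re, re_ofNat, ofReal_re, im_ofNat, ofReal_im, mul_zero, sub_zero, I_re,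
    mul_im, zero_mul, add_zero, I_im, mul_one, intCast_re, intCast_im, zero_re] at this
  linarith

lemma sub_two_pi_I_mul_int_ne_zero (hx : 0 < x.re) (n : ℤ) : x - 2 * π * I * n ≠ 0 := by
  simpa [sub_eq_add_neg] using add_two_pi_I_mul_int_ne_zero hx (-n)

lemma sq_add_two_pi_mul_sq_eq_mul (x : ℂ) (n : ℤ) :
    x ^ 2 + (2 * π * n) ^ 2 = (x + 2 * π * I * n) * (x - 2 * π * I * n) := by
  linear_combination (2 * π * n) ^ 2 * I_sq

lemma summable_div_sq_add_two_pi_mul_sq (x : ℂ) :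
    Summable fun n : ℤ ↦ 2 * x / (x ^ 2 + (2 * π * n) ^ 2) := by
  have h := (EisensteinSeries.summable_linear_sub_mul_linear_add (I * x / (2 * π)) 1 1).mul_left
    (-(2 * x) / (2 * π) ^ 2)
  refine h.congr fun n ↦ ?_
  have : x ^ 2 + (2 * π * n) ^ 2 = -(2 * π) ^ 2 * (((1 : ℤ) * (I * x / (2 * π)) - n) *
      ((1 : ℤ) * (I * x / (2 * π)) + n)) := by
    push_cast
    field_simp
    linear_combination x ^ 2 * I_sq
  rw [this, ← div_eq_mul_inv, neg_mul, div_neg, neg_div, neg_div, div_div]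

lemma integral_fourier_mul_exp_add_exp (hx : 0 < x.re) (n : ℤ) :
    ∫ t in (0 : ℝ)..1, exp (-(2 * π * I * n) * t) * (exp (-t * x) + exp (-(1 - t) * x)) =
      2 * x / (x ^ 2 + (2 * π * n) ^ 2) * (1 - exp (-x)) := by
  have hadd := add_two_pi_I_mul_int_ne_zero hx n
  have hsub := sub_two_pi_I_mul_int_ne_zero hx n
  have hperiod : exp (-(2 * π * I * n)) = 1 := by
    rw [← exp_int_mul_two_pi_mul_I (-n)]
    push_cast
    ring_nf
  have hintegrand (t : ℝ) :
      exp (-(2 * π * I * n) * t) * (exp (-t * x) + exp (-(1 - t) * x)) =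
        exp (-(x + 2 * π * I * n) * t) + exp (-x) * exp ((x - 2 * π * I * n) * t) := by
    rw [mul_add]
    simp only [← exp_add]
    ring_nf
  simp_rw [hintegrand]
  rw [intervalIntegral.integral_add (Continuous.intervalIntegrable (by fun_prop) _ _)
    (Continuous.intervalIntegrable (by fun_prop) _ _), intervalIntegral.integral_const_mul,
    integral_exp_mul_complex (neg_ne_zero.mpr hadd), integral_exp_mul_complex hsub,
    sq_add_two_pi_mul_sq_eq_mul]
  have hexp_neg : exp (-(x + 2 * π * I * n)) = exp (-x) := by
    rw [neg_add, exp_add, hperiod, mul_one]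
  have hexp : exp (x - 2 * π * I * n) = exp x := by
    rw [sub_eq_add_neg, exp_add, hperiod, mul_one]
  have hinv : exp (-x) * exp x = 1 := by rw [← exp_add, neg_add_cancel, exp_zero]
  simp only [ofReal_one, mul_one, ofReal_zero, mul_zero, exp_zero, hexp_neg, hexp]
  field_simp
  linear_combination (x + 2 * π * I * n) * hinv

lemma hasSum_fourier_exp_add_exp (hx : 0 < x.re) {t : ℝ} (ht : t ∈ Set.Icc (0 : ℝ) 1) :
    HasSum (fun n : ℤ ↦ 2 * x / (x ^ 2 + (2 * π * n) ^ 2) * exp (2 * π * I * n * t))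
      ((exp (-t * x) + exp (-(1 - t) * x)) / (1 - exp (-x))) := by
  set f : ℝ → ℂ := fun t ↦ (exp (-t * x) + exp (-(1 - t) * x)) / (1 - exp (-x)) with hf
  have hendpoints : f 0 = f 1 := by simp [hf, add_comm]
  have hcont : Continuous (AddCircle.liftIco 1 0 f) :=
    AddCircle.liftIco_zero_continuous hendpoints (Continuous.continuousOn (by fun_prop))
  have hcoeff (n : ℤ) : fourierCoeff (AddCircle.liftIco 1 0 f) n =
      2 * x / (x ^ 2 + (2 * π * n) ^ 2) := by
    have hfourier (t : ℝ) : fourier (-n) (t : AddCircle (0 + 1 - 0 : ℝ)) • f t =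
        exp (-(2 * π * I * n) * t) * (exp (-t * x) + exp (-(1 - t) * x)) / (1 - exp (-x)) := by
      rw [fourier_coe_apply, smul_eq_mul, hf, mul_div_assoc]
      push_cast
      ring_nf
    rw [fourierCoeff_liftIco_eq, fourierCoeffOn_eq_integral]
    simp_rw [hfourier]
    rw [intervalIntegral.integral_div, zero_add, integral_fourier_mul_exp_add_exp hx,
      mul_div_cancel_right₀ _ (sub_ne_zero.mpr (exp_neg_ne_one hx).symm)]
    simp
  have hlift : AddCircle.liftIco 1 0 f t = f t := by
    rcases ht.2.eq_or_lt with rfl | ht1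
    · rw [AddCircle.coe_period, ← AddCircle.coe_zero,
        AddCircle.liftIco_zero_coe_apply (Set.left_mem_Ico.mpr zero_lt_one), hendpoints]
    · exact AddCircle.liftIco_zero_coe_apply ⟨ht.1, ht1⟩
  have key := has_pointwise_sum_fourier_series_of_summable (f := ⟨_, hcont⟩)
    ((summable_div_sq_add_two_pi_mul_sq x).congr fun n ↦ (hcoeff n).symm) t
  simp only [ContinuousMap.coe_mk, hcoeff, fourier_coe_apply, ofReal_one, div_one, smul_eq_mul,
    hlift] at key
  exact key

end FourierSeries

section GaussSum

variable {q : ℕ}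

lemma apply_zero_of_ne_one {χ : DirichletCharacter ℂ q} (hχ : χ ≠ 1) : χ 0 = 0 :=
  χ.map_zero' fun hq ↦ hχ (χ.level_one' hq)

lemma isPrimitive_of_prime {R : Type*} [CommMonoidWithZero R] {p : ℕ} (hp : p.Prime)
    {χ : DirichletCharacter R p} (hχ : χ ≠ 1) : χ.IsPrimitive := by
  have : NeZero p := ⟨hp.ne_zero⟩
  refine (hp.eq_one_or_self_of_dvd _ χ.conductor_dvd_level).resolve_left ?_
  rwa [← χ.eq_one_iff_conductor_eq_one]

lemma sum_Icc_mul_comp_sub {χ : DirichletCharacter ℂ q} (hχ : χ ≠ 1) (heven : χ.Even)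
    (F : ℕ → ℂ) : ∑ r ∈ Icc 1 q, χ r * F (q - r) = ∑ r ∈ Icc 1 q, χ r * F r := by
  have hrange (F : ℕ → ℂ) : ∑ r ∈ Icc 1 q, χ r * F r = ∑ r ∈ range (q + 1), χ r * F r := by
    rw [range_eq_Ico, sum_eq_sum_Ico_succ_bot (Nat.succ_pos q), Nat.cast_zero,
      apply_zero_of_ne_one hχ, zero_mul, zero_add, zero_add, Nat.succ_eq_add_one,
      Ico_add_one_right_eq_Icc]
  rw [hrange fun r ↦ F (q - r), hrange, ← sum_flip]
  refine sum_congr rfl fun r hr ↦ ?_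
  have hr : r ≤ q := mem_range_succ_iff.mp hr
  rw [Nat.sub_sub_self hr, Nat.cast_sub hr, ZMod.natCast_self, zero_sub, heven.eval_neg]

variable [NeZero q]

lemma sum_range_natCast_add {M : Type*} [AddCommMonoid M] (Φ : ZMod q → M) (n : ℕ) :
    ∑ r ∈ range q, Φ ((n + r : ℕ) : ZMod q) = ∑ j, Φ j := by
  rw [← Equiv.sum_comp (Equiv.addLeft (n : ZMod q)) Φ]
  refine sum_nbij' (fun r ↦ (r : ZMod q)) ZMod.val (fun _ _ ↦ mem_univ _)
    (fun j _ ↦ mem_range.mpr j.val_lt) (fun r hr ↦ ZMod.val_cast_of_lt (mem_range.mp hr))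
    (fun j _ ↦ ZMod.natCast_zmod_val j) fun r _ ↦ ?_
  rw [Nat.cast_add, Equiv.coe_addLeft]

lemma sum_Icc_natCast {M : Type*} [AddCommMonoid M] (Φ : ZMod q → M) :
    ∑ r ∈ Icc 1 q, Φ r = ∑ j, Φ j := by
  rw [← sum_range_natCast_add Φ 1, ← Finset.Ico_add_one_right_eq_Icc, sum_Ico_eq_sum_range,
    Nat.add_sub_cancel]

lemma exp_two_pi_I_mul_div_eq_stdAddChar (n : ℤ) (r : ℕ) :
    exp (2 * π * I * n * (r / q : ℝ)) = ZMod.stdAddChar ((n : ZMod q) * (r : ZMod q)) := by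
  rw [show (n : ZMod q) * (r : ZMod q) = ((n * r : ℤ) : ZMod q) by push_cast; rfl,
    ZMod.stdAddChar_coe]
  push_cast
  ring_nf

lemma gaussSum'_eq_gaussSum (χ : DirichletCharacter ℂ q) :
    gaussSum' χ = gaussSum χ ZMod.stdAddChar := by
  rw [gaussSum, ← sum_Icc_natCast, gaussSum']
  refine sum_congr rfl fun r _ ↦ ?_
  have := exp_two_pi_I_mul_div_eq_stdAddChar (q := q) 1 r
  push_cast at this
  rw [one_mul, mul_one] at this
  rw [← this, mul_div_assoc]

lemma sum_Icc_mul_exp_eq_inv_mul_gaussSum' {χ : DirichletCharacter ℂ q} (hprim : χ.IsPrimitive)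
    (n : ℤ) :
    ∑ r ∈ Icc 1 q, χ r * exp (2 * π * I * n * (r / q : ℝ)) = χ⁻¹ n * gaussSum' χ := by
  simp_rw [exp_two_pi_I_mul_div_eq_stdAddChar]
  rw [gaussSum'_eq_gaussSum, ← gaussSum_mulShift_of_isPrimitive _ hprim, gaussSum,
    sum_Icc_natCast fun j ↦ χ j * ZMod.stdAddChar ((n : ZMod q) * j)]
  rfl

lemma hasSum_int_inv_mul_gaussSum' {χ : DirichletCharacter ℂ q} (hχ : χ ≠ 1)
    (hprim : χ.IsPrimitive) (heven : χ.Even) {x : ℂ} (hx : 0 < x.re) :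
    HasSum (fun n : ℤ ↦ 2 * x / (x ^ 2 + (2 * π * n) ^ 2) * (χ⁻¹ n * gaussSum' χ))
      (2 * ∑ r ∈ Icc 1 q, χ r * (exp (-(r / q) * x) / (1 - exp (-x)))) := by
  have hreflect : ∑ r ∈ Icc 1 q, χ r * (exp (-(1 - r / q) * x) / (1 - exp (-x))) =
      ∑ r ∈ Icc 1 q, χ r * (exp (-(r / q) * x) / (1 - exp (-x))) := by
    rw [← sum_Icc_mul_comp_sub hχ heven fun r ↦ exp (-(r / q) * x) / (1 - exp (-x))]
    refine sum_congr rfl fun r hr ↦ ?_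
    rw [Nat.cast_sub (mem_Icc.mp hr).2, sub_div, div_self (NeZero.ne (q : ℂ))]
  have hterm (r : ℕ) (hr : r ∈ Icc 1 q) := (hasSum_fourier_exp_add_exp hx (t := (r / q : ℝ))
    ⟨by positivity, div_le_one_of_le₀ (Nat.cast_le.mpr (mem_Icc.mp hr).2)
      (Nat.cast_nonneg q)⟩).mul_left (χ (r : ZMod q))
  convert! hasSum_sum hterm using 1
  · funext n
    simp_rw [← sum_Icc_mul_exp_eq_inv_mul_gaussSum' hprim, mul_sum, mul_left_comm]
  · rw [two_mul]
    nth_rewrite 2 [← hreflect]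
    rw [← sum_add_distrib]
    refine sum_congr rfl fun r _ ↦ ?_
    push_cast
    ring

lemma hasSum_gaussSum'_mul_inv_mul_div {χ : DirichletCharacter ℂ q} (hχ : χ ≠ 1)
    (hprim : χ.IsPrimitive) (heven : χ.Even) {x : ℂ} (hx : 0 < x.re) :
    HasSum (fun m : ℕ ↦
        2 * gaussSum' χ * χ⁻¹ (m + 1 : ℕ) * (x / (x ^ 2 + (2 * π * (m + 1)) ^ 2)))
      (∑ r ∈ Icc 1 q, χ r * (exp (-(r / q) * x) / (1 - exp (-x)))) := by
  have hinv_zero : χ⁻¹ 0 = 0 := apply_zero_of_ne_one (inv_ne_one.mpr hχ)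
  have hinv_neg (a : ZMod q) : χ⁻¹ (-a) = χ⁻¹ a := by
    rw [MulChar.inv_apply_eq_inv', MulChar.inv_apply_eq_inv', heven.eval_neg]
  convert! hasSum_nat_succ_of_even (fun n ↦ ?_)
    (hasSum_int_inv_mul_gaussSum' hχ hprim heven hx) using 1
  · funext m
    push_cast
    ring
  · simp [hinv_zero]
  · rw [Int.cast_neg, Int.cast_neg, hinv_neg, mul_neg, neg_sq]

end GaussSum

section HyperbolicCotangent

lemma cosh_div_sinh_eq_exp (z : ℂ) :
    cosh z / sinh z = (1 + exp (-(2 * z))) / (1 - exp (-(2 * z))) := by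
  have hexp : exp (-(2 * z)) = exp (-z) * exp (-z) := by
    rw [← exp_add]
    ring_nf
  have hinv : exp z * exp (-z) = 1 := by rw [← exp_add, add_neg_cancel, exp_zero]
  rw [cosh, sinh, div_div_div_cancel_right₀ two_ne_zero, hexp,
    ← mul_div_mul_right _ _ (exp_ne_zero (-z)), add_mul, sub_mul, hinv]

lemma cosh_sub_cos_pos {y : ℝ} (hy : y ≠ 0) (z : ℝ) : 0 < Real.cosh y - Real.cos z :=
  sub_pos.mpr ((Real.cos_le_one z).trans_lt (Real.one_lt_cosh.mpr hy))

lemma cosh_div_sinh_add_mul_I {a : ℝ} (ha : a ≠ 0) (b : ℝ) :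
    cosh (a + b * I) / sinh (a + b * I) =
      (Real.sinh (2 * a) - Real.sin (2 * b) * I) / (Real.cosh (2 * a) - Real.cos (2 * b)) := by
  have hden : (cosh (2 * a) - cos (2 * b) : ℂ) ≠ 0 := by
    have h := cosh_sub_cos_pos (mul_ne_zero two_ne_zero ha) (2 * b)
    exact_mod_cast ofReal_ne_zero.mpr h.ne'
  have hsum : a + b * I + (a - b * I) = 2 * a := by ring
  have hdiff : a + b * I - (a - b * I) = 2 * b * I := by ring
  have hsinh_mul : sinh (a + b * I) * sinh (a - b * I) = (cosh (2 * a) - cos (2 * b)) / 2 := by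
    rw [← hsum, ← cosh_mul_I, ← hdiff, cosh_add (a + b * I), cosh_sub (a + b * I)]
    ring
  have hcosh_mul : cosh (a + b * I) * sinh (a - b * I) =
      (sinh (2 * a) - sin (2 * b) * I) / 2 := by
    rw [← hsum, ← sinh_mul_I, ← hdiff, sinh_add (a + b * I), sinh_sub (a + b * I)]
    ring
  have hsinh : sinh (a - b * I) ≠ 0 := by
    intro h
    rw [h, mul_zero] at hsinh_mul
    exact hden (by linear_combination -2 * hsinh_mul)
  rw [← mul_div_mul_right _ _ hsinh, hcosh_mul, hsinh_mul, div_div_div_cancel_right₀ two_ne_zero]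
  push_cast
  rfl

lemma hasSum_one_div_nat_sq_add_sq {b : ℂ} (hb : 0 < b.re) :
    HasSum (fun n : ℕ ↦ 1 / ((n + 1 : ℂ) ^ 2 + b ^ 2))
      (π / (2 * b) * (cosh (π * b) / sinh (π * b)) - 1 / (2 * b ^ 2)) := by
  have hb0 : b ≠ 0 := fun h ↦ by simp [h] at hb
  have hx : 0 < (2 * (π * b)).re := by
    rw [← ofReal_ofNat, re_ofReal_mul, re_ofReal_mul]
    positivity
  have h := hasSum_nat_succ_of_even (fun n ↦ by simp)
    (hasSum_fourier_exp_add_exp hx (t := 0) (Set.left_mem_Icc.mpr zero_le_one))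
  convert! h.mul_left (π / b) using 1
  · funext n
    push_cast
    rw [show (2 * (π * b)) ^ 2 + (2 * π * (n + 1 : ℂ)) ^ 2 = 4 * π ^ 2 * ((n + 1) ^ 2 + b ^ 2)
      by ring, mul_zero, exp_zero]
    field_simp
    norm_num
  · rw [cosh_div_sinh_eq_exp]
    simp only [ofReal_zero, neg_zero, zero_mul, exp_zero, sub_zero, neg_mul, one_mul,
      Int.cast_zero, mul_zero, ne_eq, OfNat.ofNat_ne_zero, not_false_eq_true, zero_pow, add_zero]
    field_simp

end HyperbolicCotangent

section SextupleSum

/-- The summand of the dual side of the identity, as a function of `y = (mβ)^{1/3}`. It is the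
deviation of `∑ n⁴ / (n⁶ + c⁶)` from `π / (3c)`, relative to `π / (3c)`, at `y = πc`. -/
noncomputable def dualTerm (y : ℝ) : ℝ :=
  Real.exp (-y) / (2 * Real.sinh y) +
    (Real.cos (√3 * y + π / 3) - Real.exp (-y) / 2) / (Real.cosh y - Real.cos (√3 * y))

/-- The primitive sixth root of unity `e^{πi/3}`. Its conjugate is written `1 - sixthRoot`. -/
noncomputable def sixthRoot : ℂ :=
  1 / 2 + √3 / 2 * I

lemma sixthRoot_sq : sixthRoot ^ 2 = sixthRoot - 1 := by
  have h3 : (√3 : ℂ) ^ 2 = 3 := by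
    rw [← ofReal_pow, Real.sq_sqrt (by norm_num)]
    norm_num
  rw [sixthRoot]
  linear_combination (√3 / 2 : ℂ) ^ 2 * I_sq - 1 / 4 * h3

lemma one_sub_sixthRoot_sq : (1 - sixthRoot) ^ 2 = -sixthRoot := by
  linear_combination sixthRoot_sq

lemma inv_sixthRoot : sixthRoot⁻¹ = 1 - sixthRoot :=
  inv_eq_of_mul_eq_one_right (by linear_combination -sixthRoot_sq)

lemma sq_div_cube_add_cube {x a : ℂ} (h : x ^ 3 + a ^ 3 ≠ 0) :
    x ^ 2 / (x ^ 3 + a ^ 3) = (1 / (x + a) + 1 / (x + a * sixthRoot ^ 2) +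
      1 / (x + a * (1 - sixthRoot) ^ 2)) / 3 := by
  have hprod : x ^ 3 + a ^ 3 = (x + a) * (x + a * (sixthRoot - 1)) * (x - a * sixthRoot) := by
    linear_combination a ^ 2 * (x + a) * sixthRoot_sq
  rw [sixthRoot_sq, one_sub_sixthRoot_sq, mul_neg, ← sub_eq_add_neg]
  rw [hprod] at h ⊢
  obtain ⟨⟨h₁, h₂⟩, h₃⟩ := by simpa only [mul_ne_zero_iff] using h
  field_simp
  linear_combination a ^ 2 * sixthRoot_sq

lemma cosh_div_sinh_add_eq_dualTerm {y : ℝ} (hy : 0 < y) :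
    Real.cosh y / Real.sinh y +
      (Real.sinh y - √3 * Real.sin (√3 * y)) / (Real.cosh y - Real.cos (√3 * y)) =
      2 * (1 + dualTerm y) := by
  have hsinh := (Real.sinh_pos_iff.mpr hy).ne'
  have hden := (cosh_sub_cos_pos hy.ne' (√3 * y)).ne'
  have hexp : Real.exp (-y) = Real.cosh y - Real.sinh y := by
    rw [Real.cosh_sub_sinh]
  rw [dualTerm, hexp, Real.cos_add, Real.cos_pi_div_three, Real.sin_pi_div_three]
  field_simp
  ring

lemma cosh_div_sinh_sixthRoot_add {y : ℝ} (hy : y ≠ 0) :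
    (1 - sixthRoot) * (cosh (y * sixthRoot) / sinh (y * sixthRoot)) +
      sixthRoot * (cosh (y * (1 - sixthRoot)) / sinh (y * (1 - sixthRoot))) =
      ((Real.sinh y - √3 * Real.sin (√3 * y)) / (Real.cosh y - Real.cos (√3 * y)) : ℝ) := by
  have hroot : y * sixthRoot = (y / 2 : ℝ) + (√3 * y / 2 : ℝ) * I := by
    rw [sixthRoot]
    push_cast
    ring
  have hconj : y * (1 - sixthRoot) = (y / 2 : ℝ) + (-(√3 * y / 2) : ℝ) * I := by
    rw [sixthRoot]
    push_cast
    ring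
  rw [hroot, hconj, cosh_div_sinh_add_mul_I (div_ne_zero hy two_ne_zero),
    cosh_div_sinh_add_mul_I (div_ne_zero hy two_ne_zero), mul_neg, Real.sin_neg, Real.cos_neg,
    mul_div_cancel₀ _ (two_ne_zero' ℝ), mul_div_cancel₀ _ (two_ne_zero' ℝ), sixthRoot]
  push_cast
  rw [mul_div_assoc', mul_div_assoc', ← add_div]
  congr 1
  linear_combination (√3 * sin (√3 * y)) * I_sq

lemma hasSum_pow_four_div {c : ℝ} (hc : 0 < c) :
    HasSum (fun n : ℕ ↦ ((n : ℝ) + 1) ^ 4 / (((n : ℝ) + 1) ^ 6 + c ^ 6))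
      (π / (3 * c) * (1 + dualTerm (π * c))) := by
  have hre : 0 < (c * sixthRoot).re := by simp [sixthRoot, hc]
  have hre' : 0 < (c * (1 - sixthRoot)).re := by
    rw [re_ofReal_mul]
    norm_num [sixthRoot, hc]
  have h := (((hasSum_one_div_nat_sq_add_sq (show 0 < (c : ℂ).re from hc)).add
    (hasSum_one_div_nat_sq_add_sq hre)).add (hasSum_one_div_nat_sq_add_sq hre')).div_const 3
  rw [← hasSum_ofReal]
  convert! h using 1
  · funext n
    have hne : (((n : ℂ) + 1) ^ 2) ^ 3 + ((c : ℂ) ^ 2) ^ 3 ≠ 0 := by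
      have : (0 : ℝ) < (((n : ℝ) + 1) ^ 2) ^ 3 + (c ^ 2) ^ 3 := by positivity
      exact_mod_cast this.ne'
    have := sq_div_cube_add_cube hne
    push_cast
    simp only [mul_pow, ← this]
    ring
  · have hinv : (1 - sixthRoot)⁻¹ = sixthRoot := by rw [← inv_sixthRoot, inv_inv]
    have hcoth := congrArg ofReal (cosh_div_sinh_add_eq_dualTerm (mul_pos Real.pi_pos hc))
    rw [ofReal_add, ← cosh_div_sinh_sixthRoot_add (mul_pos Real.pi_pos hc).ne'] at hcoth
    push_cast at hcoth ⊢
    simp only [mul_assoc, div_eq_mul_inv, mul_inv, mul_pow, ← inv_pow, inv_sixthRoot, hinv]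
      at hcoth ⊢
    linear_combination (-(π : ℂ) / (6 * c)) * hcoth +
      1 / (6 * c ^ 2) * (sixthRoot_sq + one_sub_sixthRoot_sq)

end SextupleSum

section BlockSum

variable {q : ℕ}

/-- The sum of `a` over the `k`-th block `qk, …, qk + q - 1` of length `q`. When `a` carries weights
that sum to zero over a block, this makes the conditionally convergent series absolutely convergent.
-/
def blockSum {M : Type*} [AddCommMonoid M] (q : ℕ) (a : ℕ → M) (k : ℕ) : M :=
  ∑ r ∈ range q, a (q * k + r)

lemma blockSum_add {M : Type*} [AddCommMonoid M] (a b : ℕ → M) (k : ℕ) :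
    blockSum q (fun m ↦ a m + b m) k = blockSum q a k + blockSum q b k :=
  sum_add_distrib

lemma mul_blockSum (c : ℂ) (a : ℕ → ℂ) (k : ℕ) :
    c * blockSum q a k = blockSum q (fun m ↦ c * a m) k :=
  mul_sum _ _ _

lemma hasSum_blockSum {ι M : Type*} [AddCommMonoid M] [TopologicalSpace M] [ContinuousAdd M]
    {a : ι → ℕ → M} {s : ℕ → M} (h : ∀ m, HasSum (fun i ↦ a i m) (s m)) (k : ℕ) :
    HasSum (fun i ↦ blockSum q (a i) k) (blockSum q s k) :=
  hasSum_sum fun _ _ ↦ h _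

lemma differentiable_blockSum_cpow (Φ : ZMod q → ℂ) (k : ℕ) :
    Differentiable ℂ fun s : ℂ ↦
      blockSum q (fun m ↦ Φ (m + 1 : ℕ) * ((m + 1 : ℕ) : ℂ) ^ (-s)) k := by
  refine Differentiable.fun_sum fun r _ ↦ ?_
  refine (differentiable_id.neg.const_cpow ?_).const_mul _
  exact Or.inl (Nat.cast_ne_zero.mpr (Nat.succ_ne_zero _))

variable [NeZero q]

lemma hasSum_blockSum_of_hasSum {M : Type*} [AddCommMonoid M] [TopologicalSpace M] [ContinuousAdd M]
    [RegularSpace M] {a : ℕ → M} {s : M} (h : HasSum a s) : HasSum (blockSum q a) s := by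
  have h' := ((Nat.divModEquiv q).symm.hasSum_iff.mpr h).prod_fiberwise fun k ↦ hasSum_fintype _
  convert! h' using 1
  funext k
  rw [blockSum, ← Fin.sum_univ_eq_sum_range fun r ↦ a (q * k + r)]
  simp only [Nat.divModEquiv, Function.comp_apply, Equiv.coe_fn_symm_mk, mul_comm q]

lemma norm_blockSum_mul_le {Φ : ZMod q → ℂ} (hΦ : ∑ j, Φ j = 0) {f : ℕ → ℂ} {k : ℕ} {D : ℝ}
    (hD : ∀ r < q, ‖f (q * k + r) - f (q * k)‖ ≤ D) :
    ‖blockSum q (fun m ↦ Φ (m + 1 : ℕ) * f m) k‖ ≤ (∑ j, ‖Φ j‖) * D := by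
  have hblock {M : Type} [AddCommMonoid M] (Ψ : ZMod q → M) :
      ∑ r ∈ range q, Ψ ((q * k + r + 1 : ℕ) : ZMod q) = ∑ j, Ψ j := by
    rw [← sum_range_natCast_add Ψ (q * k + 1)]
    simp only [add_right_comm]
  have hsub : blockSum q (fun m ↦ Φ (m + 1 : ℕ) * f m) k =
      ∑ r ∈ range q, Φ ((q * k + r + 1 : ℕ) : ZMod q) * (f (q * k + r) - f (q * k)) := by
    simp only [mul_sub, sum_sub_distrib, ← sum_mul]
    rw [hblock, hΦ, zero_mul, sub_zero, blockSum]
  rw [hsub, ← hblock, sum_mul]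
  refine norm_sum_le_of_le _ fun r hr ↦ ?_
  rw [norm_mul]
  gcongr
  exact hD r (mem_range.mp hr)

lemma norm_cpow_neg_sub_cpow_neg_le {s : ℂ} (hs : 0 < s.re) {x y : ℝ} (hx : 0 < x) (hxy : x ≤ y) :
    ‖(y : ℂ) ^ (-s) - (x : ℂ) ^ (-s)‖ ≤ ‖s‖ * x ^ (-s.re - 1) * (y - x) := by
  have hs0 : -s ≠ 0 := neg_ne_zero.mpr fun h ↦ by simp [h] at hs
  have key := (convex_Icc x y).norm_image_sub_le_of_norm_hasDerivWithin_le
    (f := fun t : ℝ ↦ (t : ℂ) ^ (-s)) (f' := fun t : ℝ ↦ -s * (t : ℂ) ^ (-s - 1))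
    (C := ‖s‖ * x ^ (-s.re - 1))
    (fun t ht ↦ (hasDerivAt_ofReal_cpow_const (hx.trans_le ht.1).ne' hs0).hasDerivWithinAt)
    (fun t ht ↦ by
      rw [norm_mul, norm_neg, norm_cpow_eq_rpow_re_of_pos (hx.trans_le ht.1), sub_re, neg_re,
        one_re]
      gcongr ?_ * ?_
      exact Real.rpow_le_rpow_of_nonpos hx ht.1 (by linarith))
    (Set.left_mem_Icc.mpr hxy) (Set.right_mem_Icc.mpr hxy)
  rwa [Real.norm_of_nonneg (sub_nonneg.mpr hxy)] at key

lemma norm_blockSum_cpow_le {Φ : ZMod q → ℂ} (hΦ : ∑ j, Φ j = 0) {s : ℂ} {δ R : ℝ} (hδ : 0 < δ)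
    (hδs : δ ≤ s.re) (hR : ‖s‖ ≤ R) (k : ℕ) :
    ‖blockSum q (fun m ↦ Φ (m + 1 : ℕ) * (m + 1 : ℕ) ^ (-s)) k‖ ≤
      (∑ j, ‖Φ j‖) * (R * ((k + 1 : ℕ) : ℝ) ^ (-δ - 1) * q) := by
  refine norm_blockSum_mul_le hΦ fun r hr ↦ ?_
  have hq : 1 ≤ q := NeZero.one_le
  have hle : ((k + 1 : ℕ) : ℝ) ≤ ((q * k + 1 : ℕ) : ℝ) := by
    exact_mod_cast Nat.succ_le_succ (Nat.le_mul_of_pos_left k hq)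
  have hk : (1 : ℝ) ≤ ((k + 1 : ℕ) : ℝ) := by simp
  have hpow : ((q * k + 1 : ℕ) : ℝ) ^ (-s.re - 1) ≤ ((k + 1 : ℕ) : ℝ) ^ (-δ - 1) :=
    calc ((q * k + 1 : ℕ) : ℝ) ^ (-s.re - 1) ≤ ((k + 1 : ℕ) : ℝ) ^ (-s.re - 1) :=
          Real.rpow_le_rpow_of_nonpos (by positivity) hle (by linarith)
      _ ≤ ((k + 1 : ℕ) : ℝ) ^ (-δ - 1) := Real.rpow_le_rpow_of_exponent_le hk (by linarith)
  have hlen : ((q * k + r + 1 : ℕ) : ℝ) - ((q * k + 1 : ℕ) : ℝ) = r := by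
    push_cast
    ring
  have h := norm_cpow_neg_sub_cpow_neg_le (hδ.trans_le hδs) (y := ((q * k + r + 1 : ℕ) : ℝ))
    (zero_lt_one.trans_le (hk.trans hle)) (by exact_mod_cast (by omega))
  rw [hlen] at h
  refine h.trans ?_
  have hR0 : 0 ≤ R := (norm_nonneg s).trans hR
  gcongr

lemma hasSum_mul_cpow_LFunction (Φ : ZMod q → ℂ) {s : ℂ} (hs : 1 < s.re) :
    HasSum (fun m : ℕ ↦ Φ (m + 1 : ℕ) * ((m + 1 : ℕ) : ℂ) ^ (-s)) (ZMod.LFunction Φ s) := by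
  have h := (hasSum_nat_add_iff' 1).mpr (ZMod.LSeriesSummable_of_one_lt_re Φ hs).hasSum
  rw [sum_range_one, LSeries.term_zero, sub_zero] at h
  rw [ZMod.LFunction_eq_LSeries Φ hs]
  refine h.congr_fun fun m ↦ ?_
  rw [LSeries.term_of_ne_zero (Nat.succ_ne_zero m), cpow_neg, div_eq_mul_inv]

lemma hasSum_blockSum_cpow_LFunction {Φ : ZMod q → ℂ} (hΦ : ∑ j, Φ j = 0) {s : ℂ}
    (hs : 0 < s.re) :
    HasSum (blockSum q fun m ↦ Φ (m + 1 : ℕ) * ((m + 1 : ℕ) : ℂ) ^ (-s)) (ZMod.LFunction Φ s) := by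
  obtain ⟨δ, hδ, hδs⟩ := exists_between (lt_min hs two_pos)
  let R := max ‖s‖ 2 + 1
  let U : Set ℂ := {z | δ < z.re} ∩ Metric.ball 0 R
  have hUopen : IsOpen U := (isOpen_lt continuous_const continuous_re).inter Metric.isOpen_ball
  have hsU : s ∈ U := ⟨hδs.trans_le (min_le_left _ _),
    mem_ball_zero_iff.mpr ((le_max_left _ _).trans_lt (lt_add_one _))⟩
  have h2U : 2 ∈ U := ⟨hδs.trans_le (min_le_right _ _), by
    rw [mem_ball_zero_iff, Complex.norm_ofNat]
    exact (le_max_right _ _).trans_lt (lt_add_one _)⟩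
  let F : ℕ → ℂ → ℂ := fun k z ↦
    blockSum q (fun m ↦ Φ (m + 1 : ℕ) * ((m + 1 : ℕ) : ℂ) ^ (-z)) k
  let u : ℕ → ℝ := fun k ↦ (∑ j, ‖Φ j‖) * (R * ((k + 1 : ℕ) : ℝ) ^ (-δ - 1) * q)
  have hu : Summable u := by
    refine Summable.mul_left _ (Summable.mul_right _ (Summable.mul_left _ ?_))
    exact (summable_nat_add_iff 1).mpr (Real.summable_nat_rpow.mpr (by linarith))
  have hFu (k : ℕ) (z : ℂ) (hz : z ∈ U) : ‖F k z‖ ≤ u k :=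
    norm_blockSum_cpow_le hΦ hδ hz.1.le (mem_ball_zero_iff.mp hz.2).le k
  -- Both sides are analytic on `U` and agree near `2`, where the Dirichlet series converges.
  have hFdiff : DifferentiableOn ℂ (fun z ↦ ∑' k, F k z) U :=
    differentiableOn_tsum_of_summable_norm hu
      (fun k ↦ (differentiable_blockSum_cpow Φ k).differentiableOn) hUopen hFu
  have heq : (fun z ↦ ∑' k, F k z) =ᶠ[𝓝 2] ZMod.LFunction Φ := by
    filter_upwards [(isOpen_lt continuous_const continuous_re).mem_nhds
      (show (1 : ℝ) < (2 : ℂ).re by norm_num)] with z hz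
    exact (hasSum_blockSum_of_hasSum (hasSum_mul_cpow_LFunction Φ hz)).tsum_eq
  have key := (hFdiff.analyticOnNhd hUopen).eqOn_of_preconnected_of_eventuallyEq
    ((ZMod.differentiable_LFunction_of_sum_zero hΦ).differentiableOn.analyticOnNhd hUopen)
    ((convex_halfSpace_re_gt δ).inter (convex_ball 0 R)).isPreconnected h2U heq hsU
  rw [← key]
  exact (Summable.of_norm_bounded hu fun k ↦ hFu k s hsU).hasSum

lemma summable_blockSum_of_antitone {Φ : ZMod q → ℂ} (hΦ : ∑ j, Φ j = 0) {g : ℕ → ℕ → ℝ}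
    (hanti : ∀ n, Antitone (g n)) (hnonneg : ∀ n m, 0 ≤ g n m) (hsum : Summable fun n ↦ g n 0) :
    Summable fun p : ℕ × ℕ ↦ blockSum q (fun m ↦ Φ (m + 1 : ℕ) * (g p.1 m : ℂ)) p.2 := by
  -- By monotonicity the variation of `g n` over a block is at most its drop, which telescopes.
  let d : ℕ → ℕ → ℝ := fun n k ↦ g n (q * k) - g n (q * (k + 1))
  have hd (n k : ℕ) : 0 ≤ d n k := sub_nonneg.mpr (hanti n (Nat.mul_le_mul_left q k.le_succ))
  have hpartial (n K : ℕ) : ∑ k ∈ range K, d n k ≤ g n 0 := by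
    rw [sum_range_sub' fun k ↦ g n (q * k), mul_zero]
    exact sub_le_self _ (hnonneg n _)
  have hdsum (n : ℕ) : Summable (d n) := summable_of_sum_range_le (hd n) (hpartial n)
  have hd2 : Summable fun p : ℕ × ℕ ↦ d p.1 p.2 := by
    rw [summable_prod_of_nonneg fun p ↦ hd p.1 p.2]
    exact ⟨hdsum, Summable.of_nonneg_of_le (fun n ↦ tsum_nonneg (hd n))
      (fun n ↦ Real.tsum_le_of_sum_range_le (hd n) (hpartial n)) hsum⟩
  refine Summable.of_norm_bounded (hd2.mul_left (∑ j, ‖Φ j‖)) fun ⟨n, k⟩ ↦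
    norm_blockSum_mul_le hΦ fun r hr ↦ ?_
  rw [← ofReal_sub, norm_real, Real.norm_eq_abs, abs_sub_comm,
    abs_of_nonneg (sub_nonneg.mpr (hanti n (Nat.le_add_right _ _)))]
  exact sub_le_sub_left (hanti n (by rw [mul_add_one]; gcongr)) _

lemma hasSum_of_hasSum_of_antitone {Φ : ZMod q → ℂ} (hΦ : ∑ j, Φ j = 0) {g : ℕ → ℕ → ℝ}
    (hanti : ∀ n, Antitone (g n)) (hnonneg : ∀ n m, 0 ≤ g n m) {row : ℕ → ℂ} {col : ℕ → ℝ} {a : ℂ}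
    (hrow : ∀ n, HasSum (fun m ↦ Φ (m + 1 : ℕ) * (g n m : ℂ)) (row n))
    (hcol : ∀ m, HasSum (fun n ↦ g n m) (col m))
    (ha : HasSum (blockSum q fun m ↦ Φ (m + 1 : ℕ) * (col m : ℂ)) a) : HasSum row a := by
  obtain ⟨b, hb⟩ := summable_blockSum_of_antitone hΦ hanti hnonneg (hcol 0).summable
  have hrow_block (n : ℕ) :
      HasSum (blockSum q fun m ↦ Φ (m + 1 : ℕ) * (g n m : ℂ)) (row n) :=
    hasSum_blockSum_of_hasSum (hrow n)
  have hcol_block (k : ℕ) :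
      HasSum (fun n ↦ blockSum q (fun m ↦ Φ (m + 1 : ℕ) * (g n m : ℂ)) k)
        (blockSum q (fun m ↦ Φ (m + 1 : ℕ) * (col m : ℂ)) k) :=
    hasSum_blockSum (fun m ↦ (hasSum_ofReal.mpr (hcol m)).mul_left _) k
  rw [ha.unique (((Equiv.prodComm ℕ ℕ).hasSum_iff.mpr hb).prod_fiberwise hcol_block)]
  exact hb.prod_fiberwise hrow_block

end BlockSum

section DoubleSeries

lemma abs_dualTerm_le {y : ℝ} (hy : 3 ≤ y) : |dualTerm y| ≤ 7 * Real.exp (-y) := by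
  have hy0 : 0 < y := by linarith
  have hsinh : 1 ≤ 2 * Real.sinh y := by linarith [Real.self_le_sinh_iff.mpr hy0.le]
  have hden : Real.exp y / 4 ≤ Real.cosh y - Real.cos (√3 * y) := by
    linarith [Real.cosh_eq y, Real.exp_pos (-y), Real.cos_le_one (√3 * y), Real.add_one_le_exp y]
  have hnum : |Real.cos (√3 * y + π / 3) - Real.exp (-y) / 2| ≤ 3 / 2 := by
    have hexp : Real.exp (-y) ≤ 1 := Real.exp_le_one_iff.mpr (by linarith)
    rw [abs_le]
    constructor <;> linarith [Real.exp_pos (-y), Real.neg_one_le_cos (√3 * y + π / 3),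
      Real.cos_le_one (√3 * y + π / 3)]
  calc |dualTerm y|
      ≤ |Real.exp (-y) / (2 * Real.sinh y)| + |(Real.cos (√3 * y + π / 3) - Real.exp (-y) / 2) /
          (Real.cosh y - Real.cos (√3 * y))| := abs_add_le _ _
    _ ≤ Real.exp (-y) / 1 + 3 / 2 / (Real.exp y / 4) := by
        rw [abs_div, abs_div, Real.abs_exp, abs_of_pos (zero_lt_one.trans_le hsinh),
          abs_of_pos (cosh_sub_cos_pos hy0.ne' _)]
        gcongr
    _ = 7 * Real.exp (-y) := by
        rw [Real.exp_neg]
        field_simp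
        norm_num

lemma summable_dualTerm {β : ℝ} (hβ : 0 < β) :
    Summable fun m : ℕ ↦ dualTerm ((((m : ℝ) + 1) * β) ^ ((1 : ℝ) / 3)) := by
  have hexp : dualTerm =O[atTop] fun y ↦ Real.exp (-1 * y) :=
    Asymptotics.IsBigO.of_bound 7 <| by
      filter_upwards [eventually_ge_atTop 3] with y hy
      simpa using abs_dualTerm_le hy
  have hpow : dualTerm =O[atTop] fun y ↦ y ^ (-6 : ℝ) :=
    hexp.trans (isLittleO_exp_neg_mul_rpow_atTop zero_lt_one (-6)).isBigO
  have htop : Tendsto (fun m : ℕ ↦ (((m : ℝ) + 1) * β) ^ ((1 : ℝ) / 3)) atTop atTop :=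
    (tendsto_rpow_atTop (by norm_num)).comp
      ((tendsto_atTop_add_const_right _ _ tendsto_natCast_atTop_atTop).atTop_mul_const hβ)
  refine summable_of_isBigO_nat ?_ (hpow.comp_tendsto htop)
  refine (((summable_nat_add_iff 1).mpr (Real.summable_nat_rpow.mpr
    (show (-2 : ℝ) < -1 by norm_num))).mul_right (β ^ (-2 : ℝ))).congr fun m ↦ ?_
  rw [Function.comp_apply, ← Real.rpow_mul (by positivity), Nat.cast_succ,
    ← Real.mul_rpow (by positivity) hβ.le]
  norm_num

/-- The term of index `(n + 1, m + 1)` of the double series whose two iterated sums, weighted by a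
character in `m`, are the two sides of the identity. -/
noncomputable def doubleTerm (α : ℝ) (n m : ℕ) : ℝ :=
  (n + 1) * (((n + 1) * α) ^ 3 / ((((n + 1) * α) ^ 3) ^ 2 + (2 * π * (m + 1)) ^ 2))

lemma doubleTerm_nonneg {α : ℝ} (hα : 0 < α) (n m : ℕ) : 0 ≤ doubleTerm α n m := by
  unfold doubleTerm
  positivity

lemma antitone_doubleTerm {α : ℝ} (hα : 0 < α) (n : ℕ) : Antitone (doubleTerm α n) := by
  intro m m' h
  unfold doubleTerm
  gcongr

lemma div_mul_rpow_one_third {a t : ℝ} (ha : 0 < a) (ht : 0 ≤ t) :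
    a / (a * t) ^ ((1 : ℝ) / 3) = a ^ ((2 : ℝ) / 3) / t ^ ((1 : ℝ) / 3) := by
  rw [Real.mul_rpow ha.le ht, ← div_div]
  nth_rewrite 1 [← Real.rpow_one a]
  rw [← Real.rpow_sub ha]
  norm_num

lemma pow_three_rpow_one_third {c : ℝ} (hc : 0 ≤ c) : (c ^ 3) ^ ((1 : ℝ) / 3) = c := by
  rw [one_div]
  exact Real.pow_rpow_inv_natCast hc three_ne_zero

lemma hasSum_doubleTerm {α β : ℝ} (hα : 0 < α) (hαβ : α ^ 3 * β = 2 * π ^ 4) (m : ℕ) :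
    HasSum (fun n ↦ doubleTerm α n m)
      ((2 * π / α ^ 3) ^ ((2 : ℝ) / 3) / 6 * (1 / ((m : ℝ) + 1) ^ ((1 : ℝ) / 3) *
        (1 + dualTerm ((((m : ℝ) + 1) * β) ^ ((1 : ℝ) / 3))))) := by
  set c : ℝ := (2 * π / α ^ 3 * (m + 1)) ^ ((1 : ℝ) / 3) with hc
  have hc0 : 0 < c := by positivity
  have hc3 : c ^ 3 = 2 * π / α ^ 3 * (m + 1) := by
    rw [hc, one_div]
    exact Real.rpow_inv_natCast_pow (by positivity) three_ne_zero
  have hy : ((m + 1) * β) ^ ((1 : ℝ) / 3) = π * c := by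
    rw [← pow_three_rpow_one_third (c := π * c) (by positivity), mul_pow, hc3]
    congr 1
    field_simp
    linear_combination hαβ
  convert! (hasSum_pow_four_div hc0).mul_left (1 / α ^ 3) using 1
  · funext n
    rw [show c ^ 6 = (c ^ 3) ^ 2 by ring, hc3, doubleTerm]
    field_simp
  · rw [hy, ← mul_assoc, mul_one_div, div_right_comm,
      ← div_mul_rpow_one_third (by positivity) (by positivity), ← hc]
    field_simp
    ring

lemma summable_mul_exp_div_one_sub_exp {α : ℝ} (hα : 0 < α) {t : ℝ} (ht : 0 < t) :
    Summable fun n : ℕ ↦ ((n : ℂ) + 1) * exp (-t * (((n : ℂ) + 1) * α) ^ 3) /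
      (1 - exp (-(((n : ℂ) + 1) * α) ^ 3)) := by
  suffices Summable fun n : ℕ ↦ ((n : ℝ) + 1) * Real.exp (-t * (((n : ℝ) + 1) * α) ^ 3) /
      (1 - Real.exp (-(((n : ℝ) + 1) * α) ^ 3)) by
    exact_mod_cast summable_ofReal.mpr this
  have hα3 : 0 < 1 - Real.exp (-α ^ 3) := by
    rw [sub_pos, Real.exp_lt_one_iff]
    exact neg_neg_of_pos (by positivity)
  have hmajorant := ((summable_nat_add_iff 1).mpr (Real.summable_pow_mul_exp_neg_nat_mul 1
    (show 0 < t * α ^ 3 by positivity))).div_const (1 - Real.exp (-α ^ 3))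
  have hcube (n : ℕ) : α ^ 3 * ((n : ℝ) + 1) ≤ (((n : ℝ) + 1) * α) ^ 3 := by
    rw [mul_pow, mul_comm]
    gcongr
    exact le_self_pow₀ (le_add_of_nonneg_left n.cast_nonneg) three_ne_zero
  have hden (n : ℕ) : 1 - Real.exp (-α ^ 3) ≤ 1 - Real.exp (-(((n : ℝ) + 1) * α) ^ 3) := by
    gcongr
    exact le_mul_of_one_le_left hα.le (le_add_of_nonneg_left n.cast_nonneg)
  refine Summable.of_nonneg_of_le (fun n ↦ ?_) (fun n ↦ ?_) hmajorant
  · have := hα3.trans_le (hden n)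
    positivity
  · rw [Nat.cast_succ, pow_one]
    gcongr ?_ * Real.exp ?_ / ?_
    · linarith [mul_le_mul_of_nonneg_left (hcube n) ht.le]
    · exact hden n

end DoubleSeries

section Identity

variable {q : ℕ} [NeZero q] {χ : DirichletCharacter ℂ q} {α β : ℝ}

lemma hasSum_mul_doubleTerm (hχ : χ ≠ 1) (hprim : χ.IsPrimitive) (heven : χ.Even) (hα : 0 < α)
    (n : ℕ) :
    HasSum (fun m : ℕ ↦ 2 * gaussSum' χ * χ⁻¹ (m + 1 : ℕ) * (doubleTerm α n m : ℂ))
      (∑ r ∈ Icc 1 q, χ r * (n + 1) * exp (-(r / q) * ((n + 1) * α) ^ 3) /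
        (1 - exp (-((n + 1) * α) ^ 3))) := by
  have hx : 0 < ((((n + 1) * α) ^ 3 : ℝ) : ℂ).re := by
    rw [ofReal_re]
    positivity
  convert! (hasSum_gaussSum'_mul_inv_mul_div hχ hprim heven hx).mul_left ((n : ℂ) + 1) using 1
  · funext m
    rw [doubleTerm]
    push_cast
    ring
  · rw [mul_sum]
    refine sum_congr rfl fun r _ ↦ ?_
    push_cast
    ring

lemma hasSum_blockSum_one_add_dualTerm (hχ : χ ≠ 1) (hβ : 0 < β) :
    HasSum (blockSum q fun m ↦ χ (m + 1 : ℕ) * (1 / ((m : ℝ) + 1) ^ ((1 : ℝ) / 3) *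
        (1 + dualTerm ((((m : ℝ) + 1) * β) ^ ((1 : ℝ) / 3))) : ℝ))
      (χ.LFunction (1 / 3) + ∑' m : ℕ, χ (m + 1 : ℕ) / ofReal (((m : ℝ) + 1) ^ ((1 : ℝ) / 3)) *
        ofReal (dualTerm ((((m : ℝ) + 1) * β) ^ ((1 : ℝ) / 3)))) := by
  have hdual : Summable fun m : ℕ ↦ χ (m + 1 : ℕ) / ofReal (((m : ℝ) + 1) ^ ((1 : ℝ) / 3)) *
      ofReal (dualTerm ((((m : ℝ) + 1) * β) ^ ((1 : ℝ) / 3))) := by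
    refine Summable.of_norm_bounded (summable_dualTerm hβ).norm fun m ↦ ?_
    rw [norm_mul, norm_div, norm_real, norm_real]
    refine mul_le_of_le_one_left (norm_nonneg _)
      (div_le_one_of_le₀ ((χ.norm_le_one _).trans ?_) (norm_nonneg _))
    rw [Real.norm_of_nonneg (by positivity)]
    exact Real.one_le_rpow (by simp) (by norm_num)
  have hL := hasSum_blockSum_cpow_LFunction (MulChar.sum_eq_zero_of_ne_one hχ)
    (s := 1 / 3) (by norm_num)
  convert! hL.add (hasSum_blockSum_of_hasSum (q := q) hdual.hasSum) using 1
  funext k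
  rw [← blockSum_add]
  congr 1
  funext m
  rw [ofReal_mul, ofReal_add, ofReal_div, ofReal_one, cpow_neg, ofReal_cpow (by positivity)]
  push_cast
  ring

theorem stmt3_general (hχ : χ ≠ 1) (hprim : χ.IsPrimitive) (heven : χ.Even) (hα : 0 < α)
    (hβ : 0 < β) (hαβ : α ^ 3 * β = 2 * π ^ 4) :
    ∑ r ∈ Icc 1 q, ∑' n : ℕ, χ r * (n + 1) * exp (-(r / q) * ((n + 1) * α) ^ 3) /
        (1 - exp (-((n + 1) * α) ^ 3)) =
      gaussSum' χ / 3 * ofReal ((2 * π / α ^ 3) ^ ((2 : ℝ) / 3)) *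
        (χ⁻¹.LFunction (1 / 3) +
          ∑' m : ℕ, χ⁻¹ (m + 1 : ℕ) / ofReal (((m : ℝ) + 1) ^ ((1 : ℝ) / 3)) *
            ofReal (dualTerm ((((m : ℝ) + 1) * β) ^ ((1 : ℝ) / 3)))) := by
  have hinv : χ⁻¹ ≠ 1 := inv_ne_one.mpr hχ
  have hsummable (r : ℕ) (hr : r ∈ Icc 1 q) : Summable fun n : ℕ ↦
      χ r * (n + 1) * exp (-(r / q) * ((n + 1) * α) ^ 3) / (1 - exp (-((n + 1) * α) ^ 3)) := by
    have hr0 : 0 < (r / q : ℝ) :=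
      div_pos (Nat.cast_pos.mpr (mem_Icc.mp hr).1) (Nat.cast_pos.mpr (NeZero.pos q))
    refine ((summable_mul_exp_div_one_sub_exp hα hr0).mul_left (χ r)).congr fun n ↦ ?_
    push_cast
    ring
  have hweight : ∑ j, 2 * gaussSum' χ * χ⁻¹ j = 0 := by
    rw [← mul_sum, MulChar.sum_eq_zero_of_ne_one hinv, mul_zero]
  have hdual := (hasSum_blockSum_one_add_dualTerm hinv hβ).mul_left
    (gaussSum' χ / 3 * ofReal ((2 * π / α ^ 3) ^ ((2 : ℝ) / 3)))
  rw [← Summable.tsum_finsetSum hsummable]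
  refine (hasSum_of_hasSum_of_antitone hweight (antitone_doubleTerm hα) (doubleTerm_nonneg hα)
    (hasSum_mul_doubleTerm hχ hprim heven hα) (hasSum_doubleTerm hα hαβ)
    (hdual.congr_fun fun k ↦ ?_)).tsum_eq
  rw [mul_blockSum]
  congr 1
  funext m
  push_cast
  ring

end Identity

theorem stmt3 (χ₅ : DirichletCharacter ℂ 5)
    (h1 : χ₅ (1 : ZMod 5) = 1) (h2 : χ₅ (2 : ZMod 5) = -1)
    (h3 : χ₅ (3 : ZMod 5) = -1) (h4 : χ₅ (4 : ZMod 5) = 1)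
    (α β : ℝ) (hα : 0 < α) (hβ : 0 < β) (hαβ : α ^ 3 * β = 2 * Real.pi ^ 4) :
    ∑ r ∈ Finset.Icc (1 : ℕ) 5, ∑' n : ℕ,
        χ₅ (r : ZMod 5) * ((n : ℂ) + 1) *
          Complex.exp (-((r : ℂ) / 5) * (((n : ℂ) + 1) * α) ^ 3) /
          (1 - Complex.exp (-(((n : ℂ) + 1) * α) ^ 3))
    = (gaussSum' χ₅ / 3) * Complex.ofReal ((2 * Real.pi / α ^ 3) ^ ((2 : ℝ) / 3)) *
        (DirichletCharacter.LFunction χ₅ (1 / 3)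
          + ∑' m : ℕ,
              (χ₅ ((m + 1 : ℕ) : ZMod 5) / Complex.ofReal (((m : ℝ) + 1) ^ ((1 : ℝ) / 3))) *
                Complex.ofReal
                  (Real.exp (-((((m : ℝ) + 1) * β) ^ ((1 : ℝ) / 3))) /
                      (2 * Real.sinh ((((m : ℝ) + 1) * β) ^ ((1 : ℝ) / 3)))
                    + (Real.cos (Real.sqrt 3 * (((m : ℝ) + 1) * β) ^ ((1 : ℝ) / 3) + Real.pi / 3)
                        - Real.exp (-((((m : ℝ) + 1) * β) ^ ((1 : ℝ) / 3))) / 2) /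
                      (Real.cosh ((((m : ℝ) + 1) * β) ^ ((1 : ℝ) / 3))
                        - Real.cos (Real.sqrt 3 * (((m : ℝ) + 1) * β) ^ ((1 : ℝ) / 3))))) := by
  have hne : χ₅ ≠ 1 := by
    rintro rfl
    norm_num [MulChar.one_apply (show IsUnit (2 : ZMod 5) by decide)] at h2
  have hquad : χ₅.IsQuadratic := by
    intro a
    fin_cases a
    exacts [Or.inl (apply_zero_of_ne_one hne), Or.inr (Or.inl h1), Or.inr (Or.inr h2),
      Or.inr (Or.inr h3), Or.inr (Or.inl h4)]
  have h := stmt3_general hne (isPrimitive_of_prime Nat.prime_five hne) h4 hα hβ hαβ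
  rw [hquad.inv] at h
  exact_mod_cast h
end

section
/- For every real x > 0, Σ_{n=1}^{∞} 1/( n·(e^{n x} − 1) ) = (1/2)·log( x/(2π) ) + π²/(6x) − x/24 + Σ_{n=1}^{∞} 1/( n·(e^{4π² n/x} − 1) ). -/
/-!
The series `∑ qⁿ / (n (1 - qⁿ))` equals `-∑ log (1 - qⁿ)`, so subtracting it, at `q = exp (2πiz)`,
from `2πiz / 24` gives a continuous logarithm of the Dedekind eta function `η` on the upper
half-plane. Exponentiating, `log η (-1 / z)` and `log η z + log (-iz) / 2` agree modulo `2πi` by the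
modular transformation of `η`; being continuous and equal at the fixed point `z = i`, they agree
everywhere. The theorem is this identity at `z = ix / (2π)`.
-/

open Complex Metric
open Function.Periodic (qParam norm_qParam_lt_one continuous_qParam)
open UpperHalfPlane (upperHalfPlaneSet)

section LambertSeries

variable {𝕜 : Type*} [NormedField 𝕜] {a : ℕ → 𝕜} {C : ℝ} {q : 𝕜}

/-- The Lambert series `∑ a(k) q ^ k / (1 - q ^ k)` over `k ≥ 1`. The coefficients are indexed from
zero: `a n` is the coefficient belonging to `k = n + 1`. -/
noncomputable def lambertSeries (a : ℕ → 𝕜) (q : 𝕜) : 𝕜 :=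
  ∑' n, a n * q ^ (n + 1) / (1 - q ^ (n + 1))

theorem norm_pow_succ_lt_one (hq : ‖q‖ < 1) (n : ℕ) : ‖q ^ (n + 1)‖ < 1 := by
  simpa only [norm_pow] using pow_lt_one₀ (norm_nonneg q) hq n.succ_ne_zero

theorem one_sub_pow_succ_ne_zero (hq : ‖q‖ < 1) (n : ℕ) : 1 - q ^ (n + 1) ≠ 0 := by
  refine sub_ne_zero.mpr fun h ↦ ?_
  simpa [← h] using norm_pow_succ_lt_one hq n

theorem hasSum_mul_pow_succ_pow_succ (c : 𝕜) (hq : ‖q‖ < 1) (n : ℕ) :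
    HasSum (fun m : ℕ ↦ c * (q ^ (m + 1)) ^ (n + 1)) (c * q ^ (n + 1) / (1 - q ^ (n + 1))) := by
  have hgeom := (hasSum_geometric_of_norm_lt_one (norm_pow_succ_lt_one hq n)).mul_left
    (c * q ^ (n + 1))
  rw [← div_eq_mul_inv] at hgeom
  refine hgeom.congr_fun fun m ↦ ?_
  ring

theorem norm_mul_pow_succ_div_one_sub_le {c : 𝕜} {r : ℝ} (hc : ‖c‖ ≤ C) (hr : r < 1)
    (hq : ‖q‖ ≤ r) (n : ℕ) :
    ‖c * q ^ (n + 1) / (1 - q ^ (n + 1))‖ ≤ C * r ^ n / (1 - r) := by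
  have hr0 : 0 ≤ r := (norm_nonneg q).trans hq
  have hC : 0 ≤ C := (norm_nonneg c).trans hc
  have hpow : ‖q ^ (n + 1)‖ ≤ r ^ (n + 1) := by
    simpa only [norm_pow] using pow_le_pow_left₀ (norm_nonneg q) hq (n + 1)
  have hden : 1 - r ≤ ‖1 - q ^ (n + 1)‖ := calc
    1 - r ≤ 1 - r ^ (n + 1) := sub_le_sub_left (pow_le_of_le_one hr0 hr.le n.succ_ne_zero) 1
    _ ≤ ‖(1 : 𝕜)‖ - ‖q ^ (n + 1)‖ := by
      rw [norm_one]
      exact sub_le_sub_left hpow 1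
    _ ≤ ‖1 - q ^ (n + 1)‖ := norm_sub_norm_le _ _
  rw [norm_div, norm_mul]
  gcongr
  exact hpow.trans (pow_le_pow_of_le_one hr0 hr.le n.le_succ)

variable [CompleteSpace 𝕜]

theorem summable_mul_pow_succ_pow_succ (ha : ∀ n, ‖a n‖ ≤ C) (hq : ‖q‖ < 1) :
    Summable fun p : ℕ × ℕ ↦ a p.1 * (q ^ (p.2 + 1)) ^ (p.1 + 1) := by
  have hgeom := summable_geometric_of_lt_one (norm_nonneg q) hq
  have hprod : Summable fun p : ℕ × ℕ ↦ ‖q‖ ^ p.1 * ‖q‖ ^ p.2 :=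
    hgeom.mul_of_nonneg hgeom (fun n ↦ by positivity) fun n ↦ by positivity
  refine (hprod.mul_left C).of_norm_bounded fun p ↦ ?_
  have hpow : ‖(q ^ (p.2 + 1)) ^ (p.1 + 1)‖ ≤ ‖q‖ ^ p.1 * ‖q‖ ^ p.2 := by
    rw [← pow_mul, norm_pow, ← pow_add]
    exact pow_le_pow_of_le_one (norm_nonneg q) hq.le (by nlinarith)
  rw [norm_mul]
  exact mul_le_mul (ha _) hpow (norm_nonneg _) ((norm_nonneg _).trans (ha 0))

theorem hasSum_lambertSeries (ha : ∀ n, ‖a n‖ ≤ C) (hq : ‖q‖ < 1) {b : ℕ → 𝕜}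
    (hb : ∀ m, HasSum (fun n ↦ a n * (q ^ (m + 1)) ^ (n + 1)) (b m)) :
    HasSum b (lambertSeries a q) := by
  have hsum := (summable_mul_pow_succ_pow_succ ha hq).hasSum
  have hrow := hsum.prod_fiberwise fun n ↦ hasSum_mul_pow_succ_pow_succ (a n) hq n
  rw [lambertSeries, hrow.tsum_eq]
  exact ((Equiv.prodComm ℕ ℕ).hasSum_iff.mpr hsum).prod_fiberwise hb

theorem continuousOn_lambertSeries (ha : ∀ n, ‖a n‖ ≤ C) :
    ContinuousOn (lambertSeries a) (ball 0 1) := by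
  intro q hq
  obtain ⟨r, hqr, hr⟩ := exists_between (mem_ball_zero_iff.mp hq)
  have hr0 : 0 ≤ r := (norm_nonneg q).trans hqr.le
  suffices ContinuousOn (lambertSeries a) (ball 0 r) from
    (this.continuousAt (isOpen_ball.mem_nhds (mem_ball_zero_iff.mpr hqr))).continuousWithinAt
  have hbound := ((summable_geometric_of_lt_one hr0 hr).mul_left C).div_const (1 - r)
  refine continuousOn_tsum (fun n ↦ ?_) hbound fun n w hw ↦
    norm_mul_pow_succ_div_one_sub_le (ha n) hr (mem_ball_zero_iff.mp hw).le n
  exact ContinuousOn.div (by fun_prop) (by fun_prop) fun w hw ↦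
    one_sub_pow_succ_ne_zero ((mem_ball_zero_iff.mp hw).trans hr) n

end LambertSeries

theorem lambertSeries_cexp_neg (a : ℕ → ℂ) (x : ℂ) :
    lambertSeries a (exp (-x)) = ∑' n : ℕ, a n / (exp ((n + 1) * x) - 1) := by
  refine tsum_congr fun n ↦ ?_
  have hexp : exp (-x) ^ (n + 1) = (exp ((n + 1) * x))⁻¹ := by
    rw [← exp_nat_mul, ← exp_neg]
    push_cast
    ring_nf
  rw [hexp]
  field_simp [exp_ne_zero]

theorem norm_one_div_natCast_succ_le_one (n : ℕ) : ‖1 / ((n : ℂ) + 1)‖ ≤ 1 := by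
  rw [norm_div, norm_one, ← Nat.cast_succ, norm_natCast]
  exact div_le_one_of_le₀ (by simp) (by positivity)

theorem hasSum_neg_log_one_sub_pow {q : ℂ} (hq : ‖q‖ < 1) :
    HasSum (fun m : ℕ ↦ -log (1 - q ^ (m + 1))) (lambertSeries (fun n ↦ 1 / ((n : ℂ) + 1)) q) := by
  refine hasSum_lambertSeries norm_one_div_natCast_succ_le_one hq fun m ↦ ?_
  simpa only [one_div_mul_eq_div] using
    hasSum_taylorSeries_neg_log' (norm_pow_succ_lt_one hq m)

theorem cexp_neg_lambertSeries_one_div {q : ℂ} (hq : ‖q‖ < 1) :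
    exp (-lambertSeries (fun n ↦ 1 / ((n : ℂ) + 1)) q) = ∏' m : ℕ, (1 - q ^ (m + 1)) := by
  have hlog := (hasSum_neg_log_one_sub_pow hq).neg
  simp only [neg_neg] at hlog
  rw [← hlog.tsum_eq, cexp_tsum_eq_tprod (one_sub_pow_succ_ne_zero hq) hlog.summable]

theorem eqOn_of_cexp_comp_eqOn {X : Type*} [TopologicalSpace X] {s : Set X} {f g : X → ℂ} {x₀ : X}
    (hs : IsPreconnected s) (hf : ContinuousOn f s) (hg : ContinuousOn g s)
    (hexp : s.EqOn (exp ∘ f) (exp ∘ g)) (hx₀ : x₀ ∈ s) (h₀ : f x₀ = g x₀) : s.EqOn f g :=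
  isCoveringMap_exp.eqOn_of_comp_eqOn hs hf hg (fun _ hx ↦ Subtype.ext (hexp hx)) hx₀ h₀

theorem log_neg_I_mul {z : ℂ} (hz0 : z ≠ 0) (hz : 0 ≤ z.im) :
    log (-I * z) = log z - log I := by
  have harg : arg (-I) + arg z ∈ Set.Ioc (-Real.pi) Real.pi := by
    have hpos : 0 ≤ arg z := arg_nonneg_iff.mpr hz
    have hle := arg_le_pi z
    rw [arg_neg_I]
    constructor <;> linarith [Real.pi_pos]
  rw [log_mul (neg_ne_zero.mpr I_ne_zero) hz0 harg, log_neg_I, log_I]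
  ring

theorem eta_neg_one_div {z : ℂ} (hz : 0 < z.im) :
    ModularForm.eta (-1 / z) = exp (log (-I * z) / 2) * ModularForm.eta z := by
  have hz0 : z ≠ 0 := UpperHalfPlane.ne_zero ⟨z, hz⟩
  have hS := ModularForm.eta_comp_eq_csqrt_I_inv hz
  simp only [Function.comp_apply, Pi.smul_apply, Pi.mul_apply, smul_eq_mul] at hS
  rw [hS, log_neg_I_mul hz0 hz.le, sub_div, exp_sub, ← sqrt_eq_exp hz0, ← sqrt_eq_exp I_ne_zero]
  ring

/-- The continuous logarithm of the Dedekind eta function on the upper half-plane that is real on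
the imaginary axis. It is given by its `q`-series, as the principal logarithm of `η` is not
continuous. -/
noncomputable def logEta (z : ℂ) : ℂ :=
  2 * Real.pi * I * z / 24 - lambertSeries (fun n ↦ 1 / ((n : ℂ) + 1)) (qParam 1 z)

theorem cexp_logEta {z : ℂ} (hz : 0 < z.im) : exp (logEta z) = ModularForm.eta z := by
  have hq := norm_qParam_lt_one one_pos hz
  rw [logEta, sub_eq_add_neg, exp_add, cexp_neg_lambertSeries_one_div hq, ModularForm.eta]
  simp only [ModularForm.eta_q, qParam, ofReal_ofNat]

theorem continuousOn_logEta : ContinuousOn logEta upperHalfPlaneSet := by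
  have hlambert := (continuousOn_lambertSeries norm_one_div_natCast_succ_le_one).comp
    continuous_qParam.continuousOn fun z hz ↦
      mem_ball_zero_iff.mpr (norm_qParam_lt_one one_pos hz)
  exact ContinuousOn.sub (by fun_prop) hlambert

theorem logEta_neg_one_div {z : ℂ} (hz : 0 < z.im) :
    logEta (-1 / z) = logEta z + log (-I * z) / 2 := by
  have him {w : ℂ} (hw : 0 < w.im) : 0 < (-1 / w).im := by
    simpa [neg_div, inv_neg] using UpperHalfPlane.im_inv_neg_coe_pos ⟨w, hw⟩
  have hinv : ContinuousOn (fun w : ℂ ↦ -1 / w) upperHalfPlaneSet :=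
    continuousOn_const.div continuousOn_id fun w hw ↦ UpperHalfPlane.ne_zero ⟨w, hw⟩
  have hlog : ContinuousOn (fun w : ℂ ↦ log (-I * w)) upperHalfPlaneSet :=
    ContinuousOn.clog (by fun_prop) fun w hw ↦ .inl (by simpa using hw)
  refine eqOn_of_cexp_comp_eqOn (s := upperHalfPlaneSet) (x₀ := I)
    (convex_halfSpace_im_gt 0).isPreconnected
    (continuousOn_logEta.comp hinv fun _ ↦ him) (continuousOn_logEta.add (hlog.div_const 2))
    (fun w hw ↦ ?_) (by simp) (by simp [neg_div]) hz
  simp only [Function.comp_apply, Pi.add_apply, exp_add]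
  rw [cexp_logEta (him hw), cexp_logEta hw, eta_neg_one_div hw, mul_comm]

theorem logEta_I_mul_div_two_pi (x : ℂ) :
    logEta (I * x / (2 * Real.pi)) =
      -x / 24 - ∑' n : ℕ, 1 / (((n : ℂ) + 1) * (exp (((n : ℂ) + 1) * x) - 1)) := by
  have harg : 2 * Real.pi * I * (I * x / (2 * Real.pi)) = -x := by
    field_simp
    rw [I_sq, neg_one_mul]
  simp only [logEta, qParam, harg, ofReal_one, div_one, lambertSeries_cexp_neg, div_div]

theorem stmt6_general (x : ℂ) (hx : 0 < x.re) :
    ∑' n : ℕ, 1 / (((n : ℂ) + 1) * (exp (((n : ℂ) + 1) * x) - 1))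
    = (1 / 2) * log (x / (2 * Real.pi)) + Real.pi ^ 2 / (6 * x) - x / 24
      + ∑' n : ℕ, 1 / (((n : ℂ) + 1) *
          (exp (4 * Real.pi ^ 2 * ((n : ℂ) + 1) / x) - 1)) := by
  have hx0 : x ≠ 0 := ne_zero_of_re_pos hx
  have him : 0 < (I * x / (2 * Real.pi)).im := by
    have h2pi : (2 * Real.pi : ℂ) = (2 * Real.pi : ℝ) := by push_cast; rfl
    rw [h2pi, div_ofReal_im, I_mul_im]
    positivity
  have hinv : -1 / (I * x / (2 * Real.pi)) = I * (4 * Real.pi ^ 2 / x) / (2 * Real.pi) := by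
    field_simp
    rw [I_sq]
    norm_num
  have hrot : -I * (I * x / (2 * Real.pi)) = x / (2 * Real.pi) := by
    linear_combination -(x / (2 * Real.pi)) * I_sq
  have h := logEta_neg_one_div him
  rw [hinv, hrot, logEta_I_mul_div_two_pi, logEta_I_mul_div_two_pi] at h
  simp only [mul_div_assoc', mul_comm _ (4 * (Real.pi : ℂ) ^ 2)] at h
  linear_combination h

theorem stmt6 (x : ℝ) (hx : 0 < x) :
    ∑' n : ℕ, 1 / (((n : ℝ) + 1) * (Real.exp (((n : ℝ) + 1) * x) - 1))
    = (1 / 2) * Real.log (x / (2 * Real.pi)) + Real.pi ^ 2 / (6 * x) - x / 24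
      + ∑' n : ℕ, 1 / (((n : ℝ) + 1) *
          (Real.exp (4 * Real.pi ^ 2 * ((n : ℝ) + 1) / x) - 1)) := by
  have hnonneg : 0 ≤ x / (2 * Real.pi) := by positivity
  exact ofReal_injective <| by
    simpa [ofReal_tsum, ofReal_log hnonneg] using! stmt6_general x (by simpa using hx)
end

section
/- Let x > 0, let N be a positive integer, let q ≥ 1 and let χ be a Dirichlet character modulo q. Then for every integer h and every real c₀ > max{1, (N−2h+1)/N}, Σ_{r=1}^{q} Σ_{n=1}^{∞} χ(r)·n^{N−2h}·e^{−(r/q) n^N x} / (1 − e^{−n^N x}) = (1/(2π)) ∫_{−∞}^{∞} Γ(c₀+it)·L(c₀+it, χ)·ζ(N(c₀+it) − (N−2h))·(q/x)^{c₀+it} dt, where the integral is the contour integral (1/(2πi)) ∫_{(c₀)} Γ(s) L(s,χ) ζ(Ns − (N−2h)) (q/x)^s ds along the vertical line Re(s) = c₀. -/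
/-!
For `r > 0` the geometric series gives `e^{-rw} / (1 - e^{-w}) = ∑_m e^{-(m + r)w}`. With `r`
running over `1/q, …, q/q` this turns the left-hand side into a sum of exponentials `e^{-λx}`, where
`λ` runs over the products `(m + r) n^N`. The Cahen–Mellin formula writes each exponential as the
inverse Mellin transform of `λ^{-s} Γ(s)`, and `Γ(s) = O(|s|^{-2})` on vertical lines, read off from
`Γ(s + 2) = s (s + 1) Γ(s)`, lets the sum pass under the integral. The resulting Dirichlet series
factors as a Hurwitz zeta function times `ζ(Ns - (N - 2h))`, and the Hurwitz zeta functions,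
weighted by `χ`, recombine to `q^s L(s, χ)`.
-/

open Complex MeasureTheory HurwitzZeta

section GammaDecay

theorem norm_Gamma_le_Gamma_re {s : ℂ} (hs : 0 < s.re) : ‖Gamma s‖ ≤ Real.Gamma s.re := by
  rw [Gamma_eq_integral hs, Real.Gamma_eq_integral hs, GammaIntegral]
  refine (norm_integral_le_integral_norm _).trans_eq
    (setIntegral_congr_fun measurableSet_Ioi fun t ht ↦ ?_)
  simp only [norm_mul, norm_real, Real.norm_eq_abs, Real.abs_exp,
    norm_cpow_eq_rpow_re_of_pos (Set.mem_Ioi.mp ht), sub_re, one_re]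

theorem norm_le_norm_add_one {s : ℂ} (hs : 0 ≤ s.re) : ‖s‖ ≤ ‖s + 1‖ := by
  rw [← sq_le_sq₀ (norm_nonneg _) (norm_nonneg _), Complex.sq_norm, Complex.sq_norm,
    normSq_apply, normSq_apply, add_re, add_im, one_re, one_im]
  nlinarith

theorem sq_norm_mul_norm_Gamma_le {s : ℂ} (hs : 0 < s.re) :
    ‖s‖ ^ 2 * ‖Gamma s‖ ≤ Real.Gamma (s.re + 2) := by
  have hs₀ : s ≠ 0 := fun h ↦ by simp [h] at hs
  have hs₁ : s + 1 ≠ 0 := fun h ↦ by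
    have := congrArg re h
    simp only [add_re, one_re, zero_re] at this
    linarith
  have hrec : Gamma (s + 2) = (s + 1) * (s * Gamma s) := by
    rw [← Gamma_add_one s hs₀, ← Gamma_add_one (s + 1) hs₁, add_assoc, one_add_one_eq_two]
  have hre : (s + 2).re = s.re + 2 := by simp
  calc ‖s‖ ^ 2 * ‖Gamma s‖ = ‖s‖ * (‖s‖ * ‖Gamma s‖) := by ring
    _ ≤ ‖s + 1‖ * (‖s‖ * ‖Gamma s‖) := by gcongr; exact norm_le_norm_add_one hs.le
    _ = ‖Gamma (s + 2)‖ := by rw [hrec, norm_mul, norm_mul]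
    _ ≤ Real.Gamma (s.re + 2) := hre ▸ norm_Gamma_le_Gamma_re (by linarith)

theorem continuous_Gamma_vertical {c : ℝ} (hc : 0 < c) :
    Continuous fun t : ℝ ↦ Gamma (c + t * I) := by
  refine continuous_iff_continuousAt.mpr fun t ↦
    (continuousAt_Gamma _ fun m h ↦ ?_).comp (f := fun t : ℝ ↦ (c : ℂ) + t * I) (by fun_prop)
  have hcm : c = -m := by simpa using congrArg re h
  linarith [m.cast_nonneg (α := ℝ)]

theorem verticalIntegrable_Gamma {c : ℝ} (hc : 0 < c) : VerticalIntegrable Gamma c := by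
  refine (integrable_inv_one_add_sq.const_mul (Real.Gamma (c + 2) / min 1 (c ^ 2))).mono'
    (continuous_Gamma_vertical hc).aestronglyMeasurable (.of_forall fun t ↦ ?_)
  have hsq : min 1 (c ^ 2) * (1 + t ^ 2) ≤ ‖(c : ℂ) + t * I‖ ^ 2 := by
    rw [Complex.sq_norm, normSq_add_mul_I]
    nlinarith [min_le_left 1 (c ^ 2), min_le_right 1 (c ^ 2), sq_nonneg t]
  have hdecay : ‖(c : ℂ) + t * I‖ ^ 2 * ‖Gamma (c + t * I)‖ ≤ Real.Gamma (c + 2) := by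
    simpa using sq_norm_mul_norm_Gamma_le (s := c + t * I) (by simpa)
  rw [← div_eq_mul_inv, div_div, le_div_iff₀' (by positivity)]
  exact (mul_le_mul_of_nonneg_right hsq (norm_nonneg _)).trans hdecay

theorem mellinInv_Gamma {c x : ℝ} (hc : 0 < c) (hx : 0 < x) :
    mellinInv c Gamma x = cexp (-x) := by
  let f (t : ℝ) : ℂ := (Real.exp (-t) : ℝ)
  have hmellin (t : ℝ) : mellin f (c + t * I) = Gamma (c + t * I) := by
    rw [← GammaIntegral_eq_mellin, Gamma_eq_integral (by simpa)]
  have hconv : MellinConvergent f c := by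
    simpa only [MellinConvergent, f, smul_eq_mul, mul_comm] using
      GammaIntegral_convergent (s := c) (by simpa)
  have hint : VerticalIntegrable (mellin f) c := by
    simpa only [VerticalIntegrable, hmellin] using verticalIntegrable_Gamma hc
  calc mellinInv c Gamma x = mellinInv c (mellin f) x := by simp only [mellinInv, hmellin]
    _ = f x := mellinInv_mellin_eq c f hx hconv hint (by fun_prop)
    _ = cexp (-x) := by simp [f]

end GammaDecay

section MellinInv

variable {ι : Type*} {c x y : ℝ} {f g : ℂ → ℂ}

theorem mellinInv_congr_of_re_eq (h : ∀ s : ℂ, s.re = c → f s = g s) :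
    mellinInv c f x = mellinInv c g x := by
  have hline (t : ℝ) : f (c + t * I) = g (c + t * I) := h _ (by simp)
  simp only [mellinInv, hline]

theorem mellinInv_const_mul (b : ℂ) :
    mellinInv c (fun s ↦ b * f s) x = b * mellinInv c f x := by
  simp only [mellinInv, smul_eq_mul, real_smul, mul_left_comm _ b, integral_const_mul]

theorem mellinInv_cpow_neg_mul (hy : 0 ≤ y) (hx : 0 ≤ x) :
    mellinInv c (fun s ↦ (y : ℂ) ^ (-s) * f s) x = mellinInv c f (y * x) := by
  simp only [mellinInv, smul_eq_mul, ofReal_mul, mul_cpow_ofReal_nonneg hy hx, mul_assoc,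
    mul_left_comm]

theorem ofReal_div_natCast_cpow_neg (hx : 0 ≤ x) (q : ℕ) (s : ℂ) :
    ((x / q : ℝ) : ℂ) ^ (-s) = ((q : ℂ) / x) ^ s := by
  rw [cpow_neg, ← inv_cpow_ofReal_nonneg (by positivity), ofReal_div, ofReal_natCast, inv_div]

theorem continuous_cpow_neg_vertical (hx : 0 < x) :
    Continuous fun t : ℝ ↦ (x : ℂ) ^ (-((c : ℂ) + t * I)) :=
  .const_cpow (by fun_prop) (.inl (ofReal_ne_zero.mpr hx.ne'))

theorem norm_cpow_neg_vertical (hx : 0 < x) (t : ℝ) :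
    ‖(x : ℂ) ^ (-((c : ℂ) + t * I))‖ = x ^ (-c) := by
  simp [norm_cpow_eq_rpow_re_of_pos hx]

theorem verticalIntegrable_cpow_neg_mul (hx : 0 < x) (hf : VerticalIntegrable f c) :
    VerticalIntegrable (fun s ↦ (x : ℂ) ^ (-s) * f s) c :=
  hf.bdd_mul (continuous_cpow_neg_vertical hx).aestronglyMeasurable
    (.of_forall fun t ↦ (norm_cpow_neg_vertical hx t).le)

theorem mellinInv_finsetSum (u : Finset ι) {F : ι → ℂ → ℂ} (hx : 0 < x)
    (hF : ∀ i ∈ u, VerticalIntegrable (F i) c) :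
    mellinInv c (fun s ↦ ∑ i ∈ u, F i s) x = ∑ i ∈ u, mellinInv c (F i) x := by
  simp only [mellinInv, smul_eq_mul, Finset.mul_sum, ← Finset.smul_sum]
  rw [integral_finsetSum u fun i hi ↦ verticalIntegrable_cpow_neg_mul hx (hF i hi)]

theorem hasSum_mellinInv [Countable ι] {F : ι → ℂ → ℂ} (hx : 0 < x)
    (hF : ∀ i, VerticalIntegrable (F i) c) (hsum : Summable fun i ↦ ∫ t : ℝ, ‖F i (c + t * I)‖) :
    HasSum (fun i ↦ mellinInv c (F i) x) (mellinInv c (fun s ↦ ∑' i, F i s) x) := by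
  simp only [mellinInv, smul_eq_mul, ← tsum_mul_left]
  refine (hasSum_integral_of_summable_integral_norm
    (fun i ↦ verticalIntegrable_cpow_neg_mul hx (hF i)) ?_).const_smul _
  simpa only [norm_mul, norm_cpow_neg_vertical hx, integral_const_mul] using
    hsum.mul_left (x ^ (-c))

end MellinInv

section DirichletSeries

variable {ι κ : Type*} {a : ι → ℂ} {y : ι → ℝ} {b : κ → ℂ} {z : κ → ℝ} {c x : ℝ} {s : ℂ}

/-- The general Dirichlet series `∑ aᵢ yᵢ^(-s)` with coefficients `a` and frequencies `log y`. The
index type carries no order, so convergence is always unconditional and the value is `0` where the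
series is not absolutely convergent. -/
noncomputable def dirichletSeries (a : ι → ℂ) (y : ι → ℝ) (s : ℂ) : ℂ :=
  ∑' i, a i * (y i : ℂ) ^ (-s)

theorem norm_mul_ofReal_cpow_neg {y : ℝ} (hy : 0 < y) (a s : ℂ) :
    ‖a * (y : ℂ) ^ (-s)‖ = ‖a‖ * y ^ (-s.re) := by
  rw [norm_mul, norm_cpow_eq_rpow_re_of_pos hy, neg_re]

theorem verticalIntegrable_Gamma_mul_dirichletSeries (hc : 0 < c) (hy : ∀ i, 0 < y i)
    (ha : Summable fun i ↦ ‖a i‖ * y i ^ (-c)) :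
    VerticalIntegrable (fun s ↦ Gamma s * dirichletSeries a y s) c := by
  have hnorm (i : ι) (t : ℝ) :
      ‖a i * (y i : ℂ) ^ (-((c : ℂ) + t * I))‖ = ‖a i‖ * y i ^ (-c) := by
    rw [norm_mul, norm_cpow_neg_vertical (hy i)]
  refine (verticalIntegrable_Gamma hc).mul_bdd (c := ∑' i, ‖a i‖ * y i ^ (-c))
    (Continuous.aestronglyMeasurable ?_) (.of_forall fun t ↦ ?_)
  · exact continuous_tsum (fun i ↦ (continuous_cpow_neg_vertical (hy i)).const_mul (a i)) ha
      fun i t ↦ (hnorm i t).le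
  · exact tsum_of_norm_bounded ha.hasSum fun i ↦ (hnorm i t).le

theorem hasSum_mul_exp_neg_mul [Countable ι] (hc : 0 < c) (hx : 0 < x) (hy : ∀ i, 0 < y i)
    (ha : Summable fun i ↦ ‖a i‖ * y i ^ (-c)) :
    HasSum (fun i ↦ a i * cexp (-(y i * x)))
      (mellinInv c (fun s ↦ Gamma s * dirichletSeries a y s) x) := by
  have hterm (i : ι) : a i * cexp (-(y i * x)) =
      mellinInv c (fun s ↦ a i * ((y i : ℂ) ^ (-s) * Gamma s)) x := by
    rw [mellinInv_const_mul, mellinInv_cpow_neg_mul (hy i).le hx.le,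
      mellinInv_Gamma hc (mul_pos (hy i) hx), ofReal_mul]
  have hsum (s : ℂ) : Gamma s * dirichletSeries a y s =
      ∑' i, a i * ((y i : ℂ) ^ (-s) * Gamma s) := by
    simp only [dirichletSeries, ← mul_assoc, tsum_mul_right, mul_comm (Gamma s)]
  simp only [hterm, hsum]
  refine hasSum_mellinInv hx (fun i ↦
    (verticalIntegrable_cpow_neg_mul (hy i) (verticalIntegrable_Gamma hc)).const_mul (a i)) ?_
  simpa only [norm_mul, norm_cpow_neg_vertical (hy _), ← mul_assoc, integral_const_mul] using
    ha.mul_right (∫ t : ℝ, ‖Gamma (c + t * I)‖)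

theorem summable_norm_mul_rpow_prod (hy : ∀ i, 0 ≤ y i) (hz : ∀ j, 0 ≤ z j)
    (ha : Summable fun i ↦ ‖a i‖ * y i ^ (-c)) (hb : Summable fun j ↦ ‖b j‖ * z j ^ (-c)) :
    Summable fun p : ι × κ ↦ ‖a p.1 * b p.2‖ * (y p.1 * z p.2) ^ (-c) := by
  refine (ha.mul_of_nonneg hb
    (fun i ↦ mul_nonneg (norm_nonneg _) (Real.rpow_nonneg (hy i) _))
    (fun j ↦ mul_nonneg (norm_nonneg _) (Real.rpow_nonneg (hz j) _))).congr fun p ↦ ?_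
  rw [norm_mul, Real.mul_rpow (hy _) (hz _), mul_mul_mul_comm]

theorem dirichletSeries_prod (hy : ∀ i, 0 < y i) (hz : ∀ j, 0 < z j)
    (ha : Summable fun i ↦ ‖a i‖ * y i ^ (-s.re)) (hb : Summable fun j ↦ ‖b j‖ * z j ^ (-s.re)) :
    dirichletSeries (fun p : ι × κ ↦ a p.1 * b p.2) (fun p ↦ y p.1 * z p.2) s =
      dirichletSeries a y s * dirichletSeries b z s := by
  simp only [← norm_mul_ofReal_cpow_neg (hy _)] at ha
  simp only [← norm_mul_ofReal_cpow_neg (hz _)] at hb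
  rw [dirichletSeries, dirichletSeries, dirichletSeries, tsum_mul_tsum_of_summable_norm ha hb]
  simp only [ofReal_mul, mul_cpow_ofReal_nonneg (hy _).le (hz _).le, mul_mul_mul_comm]

theorem hurwitzZeta_eq_dirichletSeries {r : ℝ} (hr : r ∈ Set.Ioc 0 1) (hs : 1 < s.re) :
    hurwitzZeta r s = dirichletSeries (fun _ ↦ 1) (fun n : ℕ ↦ n + r) s := by
  rw [← (hasSum_hurwitzZeta_of_one_lt_re (Set.Ioc_subset_Icc_self hr) hs).tsum_eq]
  simp [dirichletSeries, cpow_neg]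

theorem summable_natCast_add_rpow_neg {r : ℝ} (hr : 0 ≤ r) (hc : 1 < c) :
    Summable fun n : ℕ ↦ ((n : ℝ) + r) ^ (-c) := by
  refine ((Real.summable_one_div_nat_add_rpow r c).mpr hc).congr fun n ↦ ?_
  rw [abs_of_nonneg (by positivity), one_div, Real.rpow_neg (by positivity)]

theorem summable_norm_cpow_mul_rpow_rpow {k : ℂ} {α : ℝ} (h : k.re + 1 < α * c) :
    Summable fun n : ℕ ↦ ‖((n : ℂ) + 1) ^ k‖ * (((n : ℝ) + 1) ^ α) ^ (-c) := by
  refine (summable_natCast_add_rpow_neg (c := α * c - k.re) zero_le_one (by linarith)).congr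
    fun n ↦ ?_
  have hn : (0 : ℝ) < n + 1 := by positivity
  have hnorm : ‖((n : ℂ) + 1) ^ k‖ = ((n : ℝ) + 1) ^ k.re := by
    exact_mod_cast norm_cpow_eq_rpow_re_of_pos hn k
  rw [hnorm, ← Real.rpow_mul hn.le, ← Real.rpow_add hn]
  ring_nf

theorem dirichletSeries_cpow_rpow {k : ℂ} {α : ℝ} (h : k.re + 1 < α * s.re) :
    dirichletSeries (fun n : ℕ ↦ ((n : ℂ) + 1) ^ k) (fun n ↦ ((n : ℝ) + 1) ^ α) s =
      riemannZeta (α * s - k) := by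
  have hre : 1 < (α * s - k).re := by
    rw [sub_re, re_ofReal_mul]
    linarith
  rw [zeta_eq_tsum_one_div_nat_add_one_cpow hre]
  refine tsum_congr fun n ↦ ?_
  dsimp only
  have hn : (0 : ℝ) ≤ (n : ℝ) + 1 := by positivity
  rw [← cpow_mul_ofReal_nonneg hn, ofReal_add, ofReal_natCast, ofReal_one,
    ← cpow_add _ _ n.cast_add_one_ne_zero, one_div, ← cpow_neg]
  ring_nf

end DirichletSeries

section ShiftedGeometric

variable {ι : Type*} {a : ι → ℂ} {y : ι → ℝ} {c x r : ℝ}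

theorem hasSum_exp_neg_natCast_add_mul {w : ℝ} (hw : 0 < w) (r : ℝ) :
    HasSum (fun n : ℕ ↦ cexp (-((n + r) * w))) (cexp (-(r * w)) / (1 - cexp (-w))) := by
  have hlt : ‖cexp (-w)‖ < 1 := by
    rw [← ofReal_neg, norm_exp_ofReal, Real.exp_lt_one_iff]
    linarith
  refine ((hasSum_geometric_of_norm_lt_one hlt).mul_left (cexp (-(r * w)))).congr_fun fun n ↦ ?_
  rw [← Complex.exp_nat_mul, ← Complex.exp_add]
  ring_nf

theorem dirichletSeries_mul_natCast_add {s : ℂ} (hr : r ∈ Set.Ioc 0 1) (hs : 1 < s.re)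
    (hy : ∀ i, 0 < y i) (ha : Summable fun i ↦ ‖a i‖ * y i ^ (-s.re)) :
    dirichletSeries (fun p : ι × ℕ ↦ a p.1) (fun p ↦ y p.1 * (p.2 + r)) s =
      hurwitzZeta r s * dirichletSeries a y s := by
  have hb : Summable fun n : ℕ ↦ ‖(1 : ℂ)‖ * ((n : ℝ) + r) ^ (-s.re) := by
    simpa using summable_natCast_add_rpow_neg hr.1.le hs
  rw [hurwitzZeta_eq_dirichletSeries hr hs, mul_comm,
    ← dirichletSeries_prod hy (fun n ↦ add_pos_of_nonneg_of_pos n.cast_nonneg hr.1) ha hb]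
  simp only [mul_one]

theorem summable_norm_mul_natCast_add_rpow (hr : 0 ≤ r) (hc : 1 < c) (hy : ∀ i, 0 ≤ y i)
    (ha : Summable fun i ↦ ‖a i‖ * y i ^ (-c)) :
    Summable fun p : ι × ℕ ↦ ‖a p.1‖ * (y p.1 * (p.2 + r)) ^ (-c) := by
  have hb : Summable fun n : ℕ ↦ ‖(1 : ℂ)‖ * ((n : ℝ) + r) ^ (-c) := by
    simpa using summable_natCast_add_rpow_neg hr hc
  simpa only [mul_one] using
    summable_norm_mul_rpow_prod hy (fun n ↦ add_nonneg n.cast_nonneg hr) ha hb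

theorem verticalIntegrable_Gamma_mul_hurwitzZeta_mul (hr : r ∈ Set.Ioc 0 1) (hc : 1 < c)
    (hy : ∀ i, 0 < y i) (ha : Summable fun i ↦ ‖a i‖ * y i ^ (-c)) :
    VerticalIntegrable (fun s ↦ Gamma s * (hurwitzZeta r s * dirichletSeries a y s)) c := by
  have hpos (p : ι × ℕ) : 0 < y p.1 * (p.2 + r) :=
    mul_pos (hy _) (add_pos_of_nonneg_of_pos p.2.cast_nonneg hr.1)
  refine (verticalIntegrable_Gamma_mul_dirichletSeries (zero_lt_one.trans hc) hpos
    (summable_norm_mul_natCast_add_rpow hr.1.le hc (fun i ↦ (hy i).le) ha)).congr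
    (.of_forall fun t ↦ ?_)
  have hre : ((c : ℂ) + t * I).re = c := by simp
  dsimp only
  rw [dirichletSeries_mul_natCast_add hr (by rwa [hre]) hy (by rwa [hre])]

theorem hasSum_mul_exp_div_one_sub_exp [Countable ι] (hr : r ∈ Set.Ioc 0 1) (hc : 1 < c)
    (hx : 0 < x) (hy : ∀ i, 0 < y i) (ha : Summable fun i ↦ ‖a i‖ * y i ^ (-c)) :
    HasSum (fun i ↦ a i * (cexp (-(r * (y i * x))) / (1 - cexp (-(y i * x)))))
      (mellinInv c (fun s ↦ Gamma s * (hurwitzZeta r s * dirichletSeries a y s)) x) := by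
  have hpos (p : ι × ℕ) : 0 < y p.1 * (p.2 + r) :=
    mul_pos (hy _) (add_pos_of_nonneg_of_pos p.2.cast_nonneg hr.1)
  have hdouble : HasSum (fun p : ι × ℕ ↦ a p.1 * cexp (-((p.2 + r) * ((y p.1 * x : ℝ) : ℂ))))
      (mellinInv c (fun s ↦ Gamma s * (hurwitzZeta r s * dirichletSeries a y s)) x) := by
    convert hasSum_mul_exp_neg_mul (zero_lt_one.trans hc) hx hpos
      (summable_norm_mul_natCast_add_rpow hr.1.le hc (fun i ↦ (hy i).le) ha) using 1
    · funext p
      push_cast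
      ring_nf
    · refine mellinInv_congr_of_re_eq fun s hs ↦ ?_
      rw [dirichletSeries_mul_natCast_add hr (by rwa [hs]) hy (by rwa [hs])]
  simpa only [ofReal_mul] using hdouble.prod_fiberwise fun i ↦
    (hasSum_exp_neg_natCast_add_mul (mul_pos (hy i) hx) r).mul_left (a i)

end ShiftedGeometric

section PeriodicCoefficients

variable {q : ℕ} [NeZero q] (Φ : ZMod q → ℂ)

theorem sum_Icc_one_natCast_zmod {M : Type*} [AddCommMonoid M] (f : ZMod q → M) :
    ∑ r ∈ Finset.Icc 1 q, f r = ∑ j, f j := by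
  have hinj : Set.InjOn (fun r : ℕ ↦ (r : ZMod q)) (Finset.Icc 1 q) := by
    intro r hr t ht hrt
    rw [Finset.coe_Icc, Set.mem_Icc] at hr ht
    have hmod : r - 1 ≡ t - 1 [MOD q] := by
      refine Nat.ModEq.add_right_cancel' 1 ?_
      rw [Nat.sub_add_cancel hr.1, Nat.sub_add_cancel ht.1]
      exact (ZMod.natCast_eq_natCast_iff r t q).mp hrt
    have := hmod.eq_of_lt_of_lt (by omega) (by omega)
    omega
  have himage : (Finset.Icc 1 q).image (fun r : ℕ ↦ (r : ZMod q)) = Finset.univ := by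
    rw [← Finset.card_eq_iff_eq_univ, Finset.card_image_of_injOn hinj, Nat.card_Icc,
      ZMod.card, Nat.add_sub_cancel]
  rw [← himage, Finset.sum_image hinj]

theorem zmodLFunction_eq_sum_Icc_hurwitzZeta (s : ℂ) :
    ZMod.LFunction Φ s =
      (q : ℂ) ^ (-s) * ∑ r ∈ Finset.Icc 1 q, Φ r * hurwitzZeta ((r / q : ℝ) : UnitAddCircle) s := by
  rw [ZMod.LFunction, ← sum_Icc_one_natCast_zmod]
  simp only [ZMod.toAddCircle_natCast]

theorem sum_Icc_tsum_mul_exp_div_one_sub_exp {ι : Type*} [Countable ι] {a : ι → ℂ} {y : ι → ℝ}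
    {c x : ℝ} (hc : 1 < c) (hx : 0 < x) (hy : ∀ i, 0 < y i)
    (ha : Summable fun i ↦ ‖a i‖ * y i ^ (-c)) :
    ∑ r ∈ Finset.Icc 1 q, ∑' i, Φ r *
        (a i * (cexp (-((r / q : ℝ) * (y i * x))) / (1 - cexp (-(y i * x))))) =
      mellinInv c (fun s ↦ Gamma s * (ZMod.LFunction Φ s * dirichletSeries a y s)) (x / q) := by
  have hq : (0 : ℝ) < q := Nat.cast_pos.mpr (NeZero.pos q)
  have hmem {r : ℕ} (hr : r ∈ Finset.Icc 1 q) : (r / q : ℝ) ∈ Set.Ioc 0 1 := by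
    obtain ⟨hr₁, hrq⟩ := Finset.mem_Icc.mp hr
    exact ⟨div_pos (Nat.cast_pos.mpr hr₁) hq, (div_le_one hq).mpr (Nat.cast_le.mpr hrq)⟩
  let F (r : ℕ) (s : ℂ) : ℂ :=
    Gamma s * (hurwitzZeta ((r / q : ℝ) : UnitAddCircle) s * dirichletSeries a y s)
  have hF (r : ℕ) (hr : r ∈ Finset.Icc 1 q) : VerticalIntegrable (fun s ↦ Φ r * F r s) c :=
    (verticalIntegrable_Gamma_mul_hurwitzZeta_mul (hmem hr) hc hy ha).const_mul (Φ r)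
  have hLF (s : ℂ) : Gamma s * (ZMod.LFunction Φ s * dirichletSeries a y s) =
      ((q : ℝ) : ℂ) ^ (-s) * ∑ r ∈ Finset.Icc 1 q, Φ r * F r s := by
    rw [zmodLFunction_eq_sum_Icc_hurwitzZeta, ofReal_natCast, mul_assoc, mul_left_comm,
      Finset.sum_mul, Finset.mul_sum]
    simp only [F, mul_assoc, mul_left_comm]
  calc _ = ∑ r ∈ Finset.Icc 1 q, Φ r * mellinInv c (F r) x :=
        Finset.sum_congr rfl fun r hr ↦ by
          rw [tsum_mul_left, (hasSum_mul_exp_div_one_sub_exp (hmem hr) hc hx hy ha).tsum_eq]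
    _ = mellinInv c (fun s ↦ ∑ r ∈ Finset.Icc 1 q, Φ r * F r s) x := by
        rw [mellinInv_finsetSum _ hx hF]
        simp only [mellinInv_const_mul]
    _ = _ := by
        simp only [hLF]
        rw [mellinInv_cpow_neg_mul hq.le (div_nonneg hx.le hq.le), mul_div_cancel₀ _ hq.ne']

theorem stmt9_general {x c α : ℝ} {k : ℂ} (hx : 0 < x) (hc : 1 < c) (hαc : k.re + 1 < α * c) :
    ∑ r ∈ Finset.Icc 1 q, ∑' n : ℕ,
        Φ r * ((n : ℂ) + 1) ^ k * cexp (-((r : ℂ) / q) * ((n : ℂ) + 1) ^ (α : ℂ) * x) /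
          (1 - cexp (-((n : ℂ) + 1) ^ (α : ℂ) * x)) =
      1 / (2 * (Real.pi : ℂ)) *
        ∫ t : ℝ, Gamma (c + t * I) * ZMod.LFunction Φ (c + t * I) *
          riemannZeta (α * (c + t * I) - k) * ((q : ℂ) / x) ^ ((c : ℂ) + t * I) := by
  have key := sum_Icc_tsum_mul_exp_div_one_sub_exp Φ hc hx
    (fun n : ℕ ↦ Real.rpow_pos_of_pos n.cast_add_one_pos α) (summable_norm_cpow_mul_rpow_rpow hαc)
  have hzeta (t : ℝ) := dirichletSeries_cpow_rpow (s := c + t * I) (k := k) (α := α) (by simpa)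
  simp only [mellinInv, hzeta, ofReal_div_natCast_cpow_neg hx.le, smul_eq_mul, real_smul] at key
  convert key using 1
  · refine Finset.sum_congr rfl fun r _ ↦ tsum_congr fun n ↦ ?_
    rw [ofReal_cpow n.cast_add_one_pos.le]
    push_cast
    ring_nf
  · push_cast
    refine congrArg _ (integral_congr_ae (.of_forall fun t ↦ ?_))
    ring

end PeriodicCoefficients

theorem stmt9 (x : ℝ) (hx : 0 < x) (N : ℕ) (hN : 0 < N) (q : ℕ) [NeZero q] (hq : 1 ≤ q)
    (χ : DirichletCharacter ℂ q) (h : ℤ) (c₀ : ℝ)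
    (hc₀ : max 1 (((N : ℝ) - 2 * h + 1) / N) < c₀) :
    ∑ r ∈ Finset.Icc 1 q, ∑' n : ℕ,
        χ (r : ZMod q) * ((n : ℂ) + 1) ^ ((N : ℤ) - 2 * h) *
          Complex.exp (-((r : ℂ) / q) * ((n : ℂ) + 1) ^ (N : ℕ) * x) /
          (1 - Complex.exp (-((n : ℂ) + 1) ^ (N : ℕ) * x))
    = (1 / (2 * (Real.pi : ℂ))) *
        ∫ t : ℝ, Complex.Gamma (c₀ + t * Complex.I) *
          DirichletCharacter.LFunction χ (c₀ + t * Complex.I) *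
          riemannZeta ((N : ℂ) * (c₀ + t * Complex.I) - ((N : ℂ) - 2 * h)) *
          ((q : ℂ) / x) ^ ((c₀ : ℂ) + t * Complex.I) := by
  obtain ⟨hc, hNc⟩ := max_lt_iff.mp hc₀
  simpa [DirichletCharacter.LFunction, ← cpow_intCast, ← cpow_natCast] using
    stmt9_general (k := N - 2 * h) (α := N) χ hx hc
      (by simpa using (div_lt_iff₀' (Nat.cast_pos.mpr hN)).mp hNc)
end

section
/- Let N be a positive integer and x > 0. The function s ↦ s²·Γ(s)·ζ(s)·ζ(Ns+1)·x^{−s} extends holomorphically to a neighborhood of s = 0, and the value of its derivative at s = 0 (equivalently, the residue at the double pole s = 0 of Γ(s)·ζ(s)·ζ(Ns+1)·x^{−s}) equals (1/(2N))·( log(x) − log(2π) − γ·(N−1) ), where γ is the Euler–Mascheroni constant. -/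
/-!
Near `s = 0` the two poles are removed by `s Γ(s) = Γ(s + 1)` and `a s ζ(a s + 1) = ζ₁(a s + 1)`,
where `ζ₁` is the entire extension of `(z - 1) ζ(z)`. What remains is a product of analytic factors
that do not vanish at `0`, so its derivative there is its value `ζ(0) / a = -1 / (2 a)` times the
sum of the logarithmic derivatives of the factors: `-γ` from `Γ(s + 1)`, `log (2π)` from `ζ(s)`,
`a γ` from `ζ₁(a s + 1)` and `-log x` from `x ^ (-s)`.
-/

open Complex Filter Topology

lemma one_ne_neg_natCast {R : Type*} [AddGroupWithOne R] [CharZero R] (m : ℕ) : (1 : R) ≠ -m :=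
  fun h ↦ Nat.cast_add_one_ne_zero m (by rw [h, add_neg_cancel])

lemma logDeriv_comp_mul_add {𝕜 𝕜' : Type*} [NontriviallyNormedField 𝕜] [NontriviallyNormedField 𝕜']
    [NormedAlgebra 𝕜 𝕜'] (f : 𝕜 → 𝕜') (a b s : 𝕜) :
    logDeriv (fun z ↦ f (a * z + b)) s = a • logDeriv f (a * s + b) := by
  rw [logDeriv_apply, logDeriv_apply, deriv_comp_mul_left a (fun z ↦ f (z + b)),
    deriv_comp_add_const, smul_div_assoc]

lemma analyticAt_Gamma {s : ℂ} (hs : ∀ m : ℕ, s ≠ -m) : AnalyticAt ℂ Gamma s := by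
  simpa using (differentiable_one_div_Gamma.analyticAt s).fun_inv (inv_ne_zero (Gamma_ne_zero hs))

lemma logDeriv_riemannZeta_zero : logDeriv riemannZeta 0 = log (2 * Real.pi) := by
  rw [logDeriv_apply, deriv_riemannZeta_zero, riemannZeta_zero]
  ring

lemma logDeriv_riemannZeta₁_one : logDeriv riemannZeta₁ 1 = Real.eulerMascheroniConstant := by
  rw [logDeriv_apply, deriv_riemannZeta₁_one, riemannZeta₁_one, div_one]

lemma hasDerivAt_const_cpow_neg {x : ℂ} (hx : x ≠ 0) (s : ℂ) :
    HasDerivAt (fun z ↦ x ^ (-z)) (-log x * x ^ (-s)) s :=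
  ((hasDerivAt_neg s).const_cpow (Or.inl hx)).congr_deriv (by ring)

lemma logDeriv_const_cpow_neg {x : ℂ} (hx : x ≠ 0) (s : ℂ) :
    logDeriv (fun z ↦ x ^ (-z)) s = -log x := by
  rw [logDeriv_apply, (hasDerivAt_const_cpow_neg hx s).deriv,
    mul_div_cancel_right₀ _ (by simp [cpow_eq_zero_iff, hx])]

/-- The holomorphic extension of `s ^ 2 * Γ(s) * ζ(s) * ζ(a s + 1) * x ^ (-s)` to a neighbourhood of
`s = 0`, for nonzero `a` and `x`, written with `s Γ(s) = Γ(s + 1)` and the entire function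
`riemannZeta₁` so that its value at `0` is the correct one rather than a junk value. -/
noncomputable def regularizedGammaZetaZeta (a x s : ℂ) : ℂ :=
  a⁻¹ * (Gamma (s + 1) * riemannZeta s * riemannZeta₁ (a * s + 1) * x ^ (-s))

section

variable {a x s : ℂ}

lemma regularizedGammaZetaZeta_of_ne_zero (ha : a ≠ 0) (x : ℂ) (hs : s ≠ 0) :
    regularizedGammaZetaZeta a x s =
      s ^ 2 * Gamma s * riemannZeta s * riemannZeta (a * s + 1) * x ^ (-s) := by
  have h_ne_one : a * s + 1 ≠ 1 := by simp [ha, hs]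
  rw [regularizedGammaZetaZeta, Gamma_add_one s hs, riemannZeta_eq_inv_sub_mul h_ne_one,
    add_sub_cancel_right]
  field_simp

lemma regularizedGammaZetaZeta_zero (a x : ℂ) :
    regularizedGammaZetaZeta a x 0 = -(2 * a)⁻¹ := by
  simp only [regularizedGammaZetaZeta, zero_add, mul_zero, neg_zero, Gamma_one, riemannZeta_zero,
    riemannZeta₁_one, cpow_zero]
  ring

lemma analyticAt_regularizedGammaZetaZeta (a : ℂ) (hx : x ≠ 0) (hΓ : ∀ m : ℕ, s + 1 ≠ -m)
    (hs : s ≠ 1) : AnalyticAt ℂ (regularizedGammaZetaZeta a x) s := by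
  have hΓ_an : AnalyticAt ℂ (fun z ↦ Gamma (z + 1)) s :=
    (analyticAt_Gamma hΓ).fun_comp (f := fun z ↦ z + 1) (by fun_prop)
  have hζ₁_an : AnalyticAt ℂ (fun z ↦ riemannZeta₁ (a * z + 1)) s :=
    Differentiable.analyticAt (by fun_prop) s
  have hx_an : AnalyticAt ℂ (fun z ↦ x ^ (-z)) s :=
    Differentiable.analyticAt (fun z ↦ (hasDerivAt_const_cpow_neg hx z).differentiableAt) s
  exact analyticAt_const.mul (((hΓ_an.mul (analyticOn_riemannZeta s hs)).mul hζ₁_an).mul hx_an)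

lemma logDeriv_regularizedGammaZetaZeta (ha : a ≠ 0) (hx : x ≠ 0) (hΓ : ∀ m : ℕ, s + 1 ≠ -m)
    (hs : s ≠ 1) (hζ : riemannZeta s ≠ 0) (hζ₁ : riemannZeta₁ (a * s + 1) ≠ 0) :
    logDeriv (regularizedGammaZetaZeta a x) s =
      digamma (s + 1) + logDeriv riemannZeta s + a * logDeriv riemannZeta₁ (a * s + 1) - log x := by
  have hΓ_diff : DifferentiableAt ℂ (fun z ↦ Gamma (z + 1)) s :=
    differentiableAt_comp_add_const.2 (differentiableAt_Gamma _ hΓ)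
  have hζ_diff : DifferentiableAt ℂ riemannZeta s := differentiableAt_riemannZeta hs
  have hζ₁_diff : DifferentiableAt ℂ (fun z ↦ riemannZeta₁ (a * z + 1)) s := by fun_prop
  have hx_diff : DifferentiableAt ℂ (fun z ↦ x ^ (-z)) s :=
    (hasDerivAt_const_cpow_neg hx s).differentiableAt
  have hΓ_ne : Gamma (s + 1) ≠ 0 := Gamma_ne_zero hΓ
  have hΓζ_ne : Gamma (s + 1) * riemannZeta s ≠ 0 := mul_ne_zero hΓ_ne hζ
  have hΓζζ₁_ne : Gamma (s + 1) * riemannZeta s * riemannZeta₁ (a * s + 1) ≠ 0 :=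
    mul_ne_zero hΓζ_ne hζ₁
  have hx_ne : x ^ (-s) ≠ 0 := by simp [cpow_eq_zero_iff, hx]
  have hΓ_log : logDeriv (fun z ↦ Gamma (z + 1)) s = digamma (s + 1) := by
    rw [digamma_def, logDeriv_apply, logDeriv_apply, deriv_comp_add_const]
  have h_log_Γζ : logDeriv (fun z ↦ Gamma (z + 1) * riemannZeta z) s =
      digamma (s + 1) + logDeriv riemannZeta s := by
    rw [logDeriv_mul s hΓ_ne hζ hΓ_diff hζ_diff, hΓ_log]
  have h_log_Γζζ₁ : logDeriv (fun z ↦ Gamma (z + 1) * riemannZeta z * riemannZeta₁ (a * z + 1)) s =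
      digamma (s + 1) + logDeriv riemannZeta s + a * logDeriv riemannZeta₁ (a * s + 1) := by
    rw [logDeriv_mul s hΓζ_ne hζ₁ (hΓ_diff.fun_mul hζ_diff) hζ₁_diff, h_log_Γζ,
      logDeriv_comp_mul_add, smul_eq_mul]
  unfold regularizedGammaZetaZeta
  rw [logDeriv_const_mul s _ (inv_ne_zero ha),
    logDeriv_mul s hΓζζ₁_ne hx_ne ((hΓ_diff.fun_mul hζ_diff).fun_mul hζ₁_diff) hx_diff,
    h_log_Γζζ₁, logDeriv_const_cpow_neg hx, sub_eq_add_neg]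

lemma logDeriv_regularizedGammaZetaZeta_zero (ha : a ≠ 0) (hx : x ≠ 0) :
    logDeriv (regularizedGammaZetaZeta a x) 0 =
      log (2 * Real.pi) + Real.eulerMascheroniConstant * (a - 1) - log x := by
  have hζ : riemannZeta 0 ≠ 0 := by simp [riemannZeta_zero]
  have hζ₁ : riemannZeta₁ (a * 0 + 1) ≠ 0 := by simp
  rw [logDeriv_regularizedGammaZetaZeta ha hx
      (by simpa only [zero_add] using one_ne_neg_natCast) zero_ne_one hζ hζ₁,
    mul_zero, zero_add, digamma_one, logDeriv_riemannZeta_zero, logDeriv_riemannZeta₁_one]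
  ring

lemma deriv_regularizedGammaZetaZeta_zero (ha : a ≠ 0) (hx : x ≠ 0) :
    deriv (regularizedGammaZetaZeta a x) 0 =
      1 / (2 * a) * (log x - log (2 * Real.pi) - Real.eulerMascheroniConstant * (a - 1)) := by
  have h_ne : regularizedGammaZetaZeta a x 0 ≠ 0 := by simp [regularizedGammaZetaZeta_zero, ha]
  calc deriv (regularizedGammaZetaZeta a x) 0
      = logDeriv (regularizedGammaZetaZeta a x) 0 * regularizedGammaZetaZeta a x 0 := by
        rw [logDeriv_apply, div_mul_cancel₀ _ h_ne]
    _ = _ := by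
        rw [logDeriv_regularizedGammaZetaZeta_zero ha hx, regularizedGammaZetaZeta_zero]
        ring

end

theorem stmt12_general {a x : ℂ} (ha : a ≠ 0) (hx : x ≠ 0) :
    ∃ g : ℂ → ℂ, AnalyticAt ℂ g 0 ∧
      (∀ᶠ s in 𝓝[≠] 0,
        g s = s ^ 2 * Gamma s * riemannZeta s * riemannZeta (a * s + 1) * x ^ (-s)) ∧
      deriv g 0 =
        1 / (2 * a) * (log x - log (2 * Real.pi) - Real.eulerMascheroniConstant * (a - 1)) :=
  ⟨regularizedGammaZetaZeta a x,
    analyticAt_regularizedGammaZetaZeta a hx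
      (by simpa only [zero_add] using one_ne_neg_natCast) zero_ne_one,
    eventually_nhdsWithin_of_forall fun _ hs ↦ regularizedGammaZetaZeta_of_ne_zero ha x hs,
    deriv_regularizedGammaZetaZeta_zero ha hx⟩

theorem stmt12 (N : ℕ) (hN : 0 < N) (x : ℝ) (hx : 0 < x) :
    ∃ g : ℂ → ℂ, AnalyticAt ℂ g 0 ∧
      (∀ᶠ s : ℂ in nhdsWithin 0 {(0 : ℂ)}ᶜ,
        g s = s ^ 2 * Complex.Gamma s * riemannZeta s * riemannZeta ((N : ℂ) * s + 1) *
          (x : ℂ) ^ (-s)) ∧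
      deriv g 0 = Complex.ofReal ((1 / (2 * (N : ℝ))) *
        (Real.log x - Real.log (2 * Real.pi) - Real.eulerMascheroniConstant * ((N : ℝ) - 1))) := by
  simpa [ofReal_log hx.le, ofReal_log Real.two_pi_pos.le] using
    stmt12_general (Nat.cast_ne_zero.2 hN.ne') (ofReal_ne_zero.2 hx.ne')
end

section
/- Let α, β, γ be real numbers such that exp(γ e^{−iα}) ≠ 1. Then 2·Re( e^{iαβ} / ( exp(γ e^{−iα}) − 1 ) ) = ( cos(γ·sin(α) + αβ) − e^{−γ·cos(α)}·cos(αβ) ) / ( cosh(γ·cos(α)) − cos(γ·sin(α)) ), and in particular the denominator cosh(γ·cos(α)) − cos(γ·sin(α)) is nonzero. -/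
/-!
Put `z = γ e^{-iα}` and `w = iαβ`, and multiply numerator and denominator of `e^w / (e^z - 1)` by
the conjugate of `e^z - 1`. The new denominator `|e^z - 1|²` equals
`2 e^{Re z} (cosh (Re z) - cos (Im z))`, so it vanishes exactly when `cosh (Re z) = cos (Im z)`. The
new numerator is `e^{w + conj z} - e^w`, and the factor `e^{Re z}` cancels.
-/

open scoped ComplexConjugate

theorem re_div_eq_re_mul_conj_div_normSq (a b : ℂ) :
    (a / b).re = (a * conj b).re / Complex.normSq b := by
  rw [div_eq_mul_inv, Complex.inv_def, ← mul_assoc, Complex.re_mul_ofReal, div_eq_mul_inv]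

theorem normSq_exp_sub_one (z : ℂ) :
    Complex.normSq (Complex.exp z - 1) =
      2 * Real.exp z.re * (Real.cosh z.re - Real.cos z.im) := by
  rw [Complex.normSq_sub, map_one, map_one, mul_one, Complex.normSq_eq_norm_sq, Complex.norm_exp,
    Complex.exp_re, Real.cosh_eq, Real.exp_neg]
  field_simp

theorem cosh_re_eq_cos_im_iff_exp_eq_one {z : ℂ} :
    Real.cosh z.re = Real.cos z.im ↔ Complex.exp z = 1 := by
  have hfactor : 2 * Real.exp z.re ≠ 0 := by positivity
  rw [← sub_eq_zero (a := Complex.exp z), ← Complex.normSq_eq_zero, normSq_exp_sub_one,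
    mul_eq_zero_iff_left hfactor, sub_eq_zero]

theorem re_exp_mul_conj_exp_sub_one (w z : ℂ) :
    (Complex.exp w * conj (Complex.exp z - 1)).re =
      Real.exp z.re * (Real.exp w.re *
        (Real.cos (w.im - z.im) - Real.exp (-z.re) * Real.cos w.im)) := by
  have hmul : Complex.exp w * conj (Complex.exp z - 1) =
      Complex.exp (w + conj z) - Complex.exp w := by
    rw [map_sub, map_one, ← Complex.exp_conj, mul_sub, mul_one, Complex.exp_add]
  rw [hmul, Complex.sub_re, Complex.exp_re, Complex.exp_re, Complex.add_re, Complex.add_im,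
    Complex.conj_re, Complex.conj_im, ← sub_eq_add_neg, Real.exp_add, Real.exp_neg]
  field_simp

theorem two_mul_re_exp_div_exp_sub_one (w z : ℂ) :
    2 * (Complex.exp w / (Complex.exp z - 1)).re =
      Real.exp w.re * (Real.cos (w.im - z.im) - Real.exp (-z.re) * Real.cos w.im) /
        (Real.cosh z.re - Real.cos z.im) := by
  have hfactor : 2 * Real.exp z.re ≠ 0 := by positivity
  rw [re_div_eq_re_mul_conj_div_normSq, re_exp_mul_conj_exp_sub_one, normSq_exp_sub_one,
    ← mul_div_assoc, ← mul_assoc, mul_div_mul_left _ _ hfactor]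

theorem stmt19 (α β γ : ℝ)
    (hne : Complex.exp (γ * Complex.exp (-(Complex.I * α))) ≠ 1) :
    Real.cosh (γ * Real.cos α) - Real.cos (γ * Real.sin α) ≠ 0 ∧
    2 * (Complex.exp (Complex.I * α * β) /
          (Complex.exp (γ * Complex.exp (-(Complex.I * α))) - 1)).re
      = (Real.cos (γ * Real.sin α + α * β)
          - Real.exp (-(γ * Real.cos α)) * Real.cos (α * β)) /
        (Real.cosh (γ * Real.cos α) - Real.cos (γ * Real.sin α)) := by
  set z : ℂ := γ * Complex.exp (-(Complex.I * α)) with hz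
  have hz_re : z.re = γ * Real.cos α := by simp [hz, Complex.exp_re]
  have hz_im : z.im = -(γ * Real.sin α) := by simp [hz, Complex.exp_im]
  have hw_re : (Complex.I * α * β).re = 0 := by simp
  have hw_im : (Complex.I * α * β).im = α * β := by simp
  have hcosh : Real.cosh z.re - Real.cos z.im ≠ 0 :=
    sub_ne_zero.mpr (cosh_re_eq_cos_im_iff_exp_eq_one.not.mpr hne)
  have hre := two_mul_re_exp_div_exp_sub_one (Complex.I * α * β) z
  rw [hz_re, hz_im, Real.cos_neg] at hcosh hre
  rw [hw_re, hw_im, Real.exp_zero, one_mul, sub_neg_eq_add, add_comm (α * β)] at hre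
  exact ⟨hcosh, hre⟩
end
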